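/- arXiv:2404.13703 — 2 statements merged into one kernel-verified Lean document; each statement's English description precedes it below -/
import Mathlib

section
/- Suppose the initial datum Q_init satisfies Assumption (A2). Then there exists a unique classical solution (Q,N) of the Q-system on a maximal existence interval [0,τ*), where 0 < τ* ≤ ∞ (maximal in the sense that any classical solution on [0,T) with the same initial datum satisfies T ≤ τ* and coincides with (Q,N) on [0,T)). Moreover, if τ* < ∞ then N(τ) → +∞ as τ → τ*⁻. -/
open Real Set MeasureTheory Filter Topology
open scoped ENNReal

noncomputable section

/-- The time interval `[0, T)` in `ℝ`, where `T : ℝ≥0∞` may be `∞`. -/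
def Ico0 (T : ℝ≥0∞) : Set ℝ := {τ : ℝ | 0 ≤ τ ∧ ENNReal.ofReal τ < T}

/-- Partial derivative in the time variable (one-sided at `τ = 0`). -/
def pdTau (Q : ℝ → ℝ → ℝ) (τ η : ℝ) : ℝ := derivWithin (fun s => Q s η) (Ici 0) τ

/-- Partial derivative in the spatial variable (one-sided at `η = 0` and `η = 1`). -/
def pdEta (Q : ℝ → ℝ → ℝ) (τ η : ℝ) : ℝ := derivWithin (fun x => Q τ x) (Icc 0 1) η

/-- Assumption 1.1: `K ∈ C²(ℝ)` with `K'`, `K''` bounded on `ℝ` and `K > 0` on `[0, Φ_F]`. -/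
structure KAssump (K : ℝ → ℝ) (ΦF : ℝ) : Prop where
  smooth : ContDiff ℝ 2 K
  bdd1 : ∃ C : ℝ, ∀ x : ℝ, |deriv K x| ≤ C
  bdd2 : ∃ C : ℝ, ∀ x : ℝ, |deriv (deriv K) x| ≤ C
  pos : ∀ φ ∈ Icc (0 : ℝ) ΦF, 0 < K φ

/-- `k_min := K'(0) + ∫₀^{Φ_F} min(K''(φ), 0) dφ`. -/
def kmin (K : ℝ → ℝ) (ΦF : ℝ) : ℝ :=
  deriv K 0 + ∫ φ in (0 : ℝ)..ΦF, min (deriv (deriv K) φ) 0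

/-- `k_max := K'(0) + ∫₀^{Φ_F} max(K''(φ), 0) dφ`. -/
def kmax (K : ℝ → ℝ) (ΦF : ℝ) : ℝ :=
  deriv K 0 + ∫ φ in (0 : ℝ)..ΦF, max (deriv (deriv K) φ) 0

/-- Assumption (A2) on the initial datum. -/
structure A2 (K : ℝ → ℝ) (ΦF : ℝ) (Qinit : ℝ → ℝ) : Prop where
  reg : ContDiffOn ℝ 1 Qinit (Icc 0 1)
  mono : MonotoneOn Qinit (Icc 0 1)
  init0 : Qinit 0 = 0
  init1 : Qinit 1 = ΦF
  deriv1 : K ΦF < derivWithin Qinit (Icc 0 1) 1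
  compat : derivWithin Qinit (Icc 0 1) 1 - derivWithin Qinit (Icc 0 1) 0 = K ΦF - K 0

/-- A classical solution `(Q, N)` of the Q-system on `[0, T)` with initial datum `Qinit`. -/
structure IsQSol (K : ℝ → ℝ) (ΦF : ℝ) (T : ℝ≥0∞) (Qinit : ℝ → ℝ)
    (Q : ℝ → ℝ → ℝ) (N : ℝ → ℝ) : Prop where
  initReg : ContDiffOn ℝ 1 Qinit (Icc 0 1)
  initMono : MonotoneOn Qinit (Icc 0 1)
  init0 : Qinit 0 = 0
  init1 : Qinit 1 = ΦF
  initDeriv : K ΦF < derivWithin Qinit (Icc 0 1) 1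
  reg : ContDiffOn ℝ 1 (Function.uncurry Q) (Ico0 T ×ˢ Icc (0 : ℝ) 1)
  mono : ∀ τ ∈ Ico0 T, MonotoneOn (Q τ) (Icc 0 1)
  Ncont : ContinuousOn N (Ico0 T)
  Npos : ∀ τ ∈ Ico0 T, 0 < N τ
  pde : ∀ τ ∈ Ico0 T, ∀ η ∈ Ioo (0 : ℝ) 1,
    pdTau Q τ η + pdEta Q τ η = 1 / N τ + K (Q τ η)
  bc : ∀ τ ∈ Ico0 T, Q τ 0 = 0
  Ndef : ∀ τ ∈ Ico0 T, 1 / N τ = pdEta Q τ 1 - K ΦF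
  init : ∀ η ∈ Icc (0 : ℝ) 1, Q 0 η = Qinit η
  constraint : ∀ τ ∈ Ico0 T, K ΦF < pdEta Q τ 1

/-- A classical solution `(Q, Ñ)` of the relaxed system on `[0, T)` with initial datum `Qinit`,
where `Ñ` is unconstrained in sign. -/
structure IsRelaxedSol (K : ℝ → ℝ) (ΦF : ℝ) (T : ℝ≥0∞) (Qinit : ℝ → ℝ)
    (Q : ℝ → ℝ → ℝ) (Ntil : ℝ → ℝ) : Prop where
  initReg : ContDiffOn ℝ 1 Qinit (Icc 0 1)
  init0 : Qinit 0 = 0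
  init1 : Qinit 1 = ΦF
  reg : ContDiffOn ℝ 1 (Function.uncurry Q) (Ico0 T ×ˢ Icc (0 : ℝ) 1)
  Ncont : ContinuousOn Ntil (Ico0 T)
  pde : ∀ τ ∈ Ico0 T, ∀ η ∈ Ioo (0 : ℝ) 1,
    pdTau Q τ η + pdEta Q τ η = Ntil τ + K (Q τ η)
  bc : ∀ τ ∈ Ico0 T, Q τ 0 = 0
  Ndef : ∀ τ ∈ Ico0 T, Ntil τ = pdEta Q τ 1 - K ΦF
  init : ∀ η ∈ Icc (0 : ℝ) 1, Q 0 η = Qinit η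

/-- A steady state `(Q*, N*)` of the Q-system. -/
def IsSteadyState (K : ℝ → ℝ) (ΦF : ℝ) (Qs : ℝ → ℝ) (Ns : ℝ) : Prop :=
  ContDiffOn ℝ 1 Qs (Icc 0 1) ∧ 0 < Ns ∧
    (∀ η ∈ Icc (0 : ℝ) 1, derivWithin Qs (Icc 0 1) η = K (Qs η) + 1 / Ns) ∧
    Qs 0 = 0 ∧ Qs 1 = ΦF

/-- `P₀ f := f - ∫₀¹ f`. -/
def P0 (f : ℝ → ℝ) (η : ℝ) : ℝ := f η - ∫ x in (0 : ℝ)..1, f x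

/-- `H_init := Q_init' - K ∘ Q_init` (derivative within `[0,1]`). -/
def Hinit (K : ℝ → ℝ) (Qinit : ℝ → ℝ) (η : ℝ) : ℝ :=
  derivWithin Qinit (Icc 0 1) η - K (Qinit η)

/-!
Write `n = 1 / N` and let `S` be its primitive. Along a characteristic `η = τ + a` the difference
`y = Q - S` solves `y' = K (S + y)`, so `Q` is determined by `S` and by its values at the entry
points. At `η = 1` the definition of `N` turns the equation into `∂_τ Q = K(Q) - K(Φ_F)`, hence
`Q(τ, 1) = Φ_F`, which says that `S` is a fixed point of the map sending `S` to `Φ_F` minus the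
value of `y` at the exit. This map is causal and contracts in the weight `exp (λ τ)` for large `λ`,
which gives uniqueness and, when no sign is imposed on `n`, a global solution. The fixed point is
`C¹` by the method of steps, the compatibility condition matching the derivatives at the corner
`(0, 0)`. The maximal time is the first zero of `n`, where `N = 1 / n` blows up.
-/

section CausalContraction

/-- A map on functions `ℝ → E` which is causal (the value at `t` depends only on `[-|t|, |t|]`)
and contracts with rate `r` on continuous functions, distances being measured relative to the
weight `w`. No growth is imposed on the functions, so this is not a contraction of a metric
space; causality makes up for that. -/
def IsCausalContraction {E : Type*} [PseudoMetricSpace E] (w : ℝ → ℝ) (r : ℝ)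
    (Γ : (ℝ → E) → ℝ → E) : Prop :=
  ∀ u v : ℝ → E, Continuous u → Continuous v → ∀ M t : ℝ,
    (∀ s, |s| ≤ |t| → dist (u s) (v s) ≤ M * w s) → dist (Γ u t) (Γ v t) ≤ r * M * w t

variable {E : Type*} [MetricSpace E] {w : ℝ → ℝ} {r : ℝ} {Γ : (ℝ → E) → ℝ → E}

lemma continuous_iterate_apply (hΓ : ∀ u, Continuous u → Continuous (Γ u)) {u₀ : ℝ → E}
    (hu₀ : Continuous u₀) (k : ℕ) : Continuous (Γ^[k] u₀) := by
  induction k with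
  | zero => exact hu₀
  | succ k ih => simpa only [Function.iterate_succ_apply'] using hΓ _ ih

lemma IsCausalContraction.dist_iterate_le (hc : IsCausalContraction w r Γ)
    (hΓ : ∀ u, Continuous u → Continuous (Γ u)) {u₀ : ℝ → E} (hu₀ : Continuous u₀) {M R : ℝ}
    (hM : ∀ t, |t| ≤ R → dist (u₀ t) (Γ u₀ t) ≤ M * w t) (k : ℕ) :
    ∀ t, |t| ≤ R → dist (Γ^[k] u₀ t) (Γ^[k + 1] u₀ t) ≤ M * w t * r ^ k := by
  have hcont := continuous_iterate_apply hΓ hu₀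
  induction k with
  | zero => simpa using hM
  | succ k ih =>
    intro t ht
    have hstep := hc _ _ (hcont k) (hcont (k + 1)) (M * r ^ k) t
      fun s hs => (ih s (hs.trans ht)).trans_eq (by ring)
    simp only [← Function.iterate_succ_apply' Γ] at hstep
    exact hstep.trans_eq (by ring)

lemma exists_forall_dist_le_mul {u v : ℝ → E} (hu : Continuous u) (hv : Continuous v)
    (hw : Continuous w) (hw0 : ∀ t, 0 < w t) (R : ℝ) :
    ∃ M, ∀ t, |t| ≤ R → dist (u t) (v t) ≤ M * w t := by
  have hcont : Continuous fun t => dist (u t) (v t) / w t :=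
    (hu.dist hv).div hw fun t => (hw0 t).ne'
  obtain ⟨M, hM⟩ := (isCompact_Icc (a := -R) (b := R)).bddAbove_image hcont.continuousOn
  exact ⟨M, fun t ht => (div_le_iff₀ (hw0 t)).1 (hM (mem_image_of_mem _ (abs_le.1 ht)))⟩

lemma continuous_of_forall_dist_le_geometric {F : ℕ → ℝ → E} {u : ℝ → E}
    (hF : ∀ k, Continuous (F k)) (hw : Continuous w) (hr0 : 0 ≤ r) (hr1 : r < 1)
    (h : ∀ R, ∃ C, ∀ k t, |t| ≤ R → dist (F k t) (u t) ≤ C * w t * r ^ k) : Continuous u := by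
  refine TendstoLocallyUniformly.continuous (F := F) (p := atTop) ?_ (.of_forall hF)
  refine Metric.tendstoLocallyUniformly_iff.2 fun ε hε x => ?_
  obtain ⟨C, hC⟩ := h (|x| + 1)
  obtain ⟨W, hW⟩ := (isCompact_Icc (a := -(|x| + 1)) (b := |x| + 1)).bddAbove_image
    (f := fun t => C * w t) (hw.const_mul C).continuousOn
  have hlim : Tendsto (fun k => W * r ^ k) atTop (𝓝 0) := by
    simpa using (tendsto_pow_atTop_nhds_zero_of_lt_one hr0 hr1).const_mul W
  refine ⟨{t | |t| < |x| + 1}, (isOpen_lt continuous_abs continuous_const).mem_nhds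
    (lt_add_one |x|), (hlim.eventually (gt_mem_nhds hε)).mono fun k hk t ht => ?_⟩
  calc dist (u t) (F k t) = dist (F k t) (u t) := dist_comm _ _
    _ ≤ C * w t * r ^ k := hC k t (le_of_lt ht)
    _ ≤ W * r ^ k := by
      gcongr
      exact hW (mem_image_of_mem (fun t => C * w t) (abs_le.1 (le_of_lt ht)))
    _ < ε := hk

lemma IsCausalContraction.exists_limit_iterate [CompleteSpace E]
    (hc : IsCausalContraction w r Γ) (hΓ : ∀ u, Continuous u → Continuous (Γ u))
    (hw : Continuous w) (hw0 : ∀ t, 0 < w t) (hr1 : r < 1) {u₀ : ℝ → E} (hu₀ : Continuous u₀) :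
    ∃ u : ℝ → E, (∀ t, Tendsto (fun k => Γ^[k] u₀ t) atTop (𝓝 (u t))) ∧
      ∀ R, ∃ C, ∀ k t, |t| ≤ R → dist (Γ^[k] u₀ t) (u t) ≤ C * w t * r ^ k := by
  choose M hM using exists_forall_dist_le_mul hu₀ (hΓ _ hu₀) hw hw0
  have hstep := fun R => hc.dist_iterate_le hΓ hu₀ (hM R)
  have hlim : ∀ t, ∃ x, Tendsto (fun k => Γ^[k] u₀ t) atTop (𝓝 x) := fun t =>
    cauchySeq_tendsto_of_complete
      (cauchySeq_of_le_geometric r _ hr1 fun k => hstep |t| k t le_rfl)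
  choose u hu using hlim
  refine ⟨u, hu, fun R => ⟨M R / (1 - r), fun k t ht => ?_⟩⟩
  exact (dist_le_of_le_geometric_of_tendsto r _ hr1 (fun k => hstep R k t ht) (hu t) k).trans_eq
    (by ring)

theorem IsCausalContraction.exists_fixedPoint [CompleteSpace E] [Nonempty E]
    (hc : IsCausalContraction w r Γ) (hΓ : ∀ u, Continuous u → Continuous (Γ u))
    (hw : Continuous w) (hw0 : ∀ t, 0 < w t) (hr0 : 0 ≤ r) (hr1 : r < 1) :
    ∃ u : ℝ → E, Continuous u ∧ Γ u = u := by
  obtain ⟨x₀⟩ := ‹Nonempty E›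
  have hu₀ : Continuous fun _ : ℝ => x₀ := continuous_const
  obtain ⟨u, hlim, hrate⟩ := hc.exists_limit_iterate hΓ hw hw0 hr1 hu₀
  have hcont := continuous_iterate_apply hΓ hu₀
  have hu : Continuous u := continuous_of_forall_dist_le_geometric hcont hw hr0 hr1 hrate
  refine ⟨u, hu, funext fun t => ?_⟩
  obtain ⟨C, hC⟩ := hrate |t|
  have hle : ∀ k, dist (Γ^[k + 1] (fun _ => x₀) t) (Γ u t) ≤ r * C * w t * r ^ k := fun k => by
    rw [Function.iterate_succ_apply']
    exact (hc _ _ (hcont k) hu (C * r ^ k) t fun s hs => (hC k s hs).trans_eq (by ring)).trans_eq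
      (by ring)
  have hzero : Tendsto (fun k => r * C * w t * r ^ k) atTop (𝓝 0) := by
    simpa using (tendsto_pow_atTop_nhds_zero_of_lt_one hr0 hr1).const_mul (r * C * w t)
  exact tendsto_nhds_unique (tendsto_iff_dist_tendsto_zero.2
    (squeeze_zero (fun _ => dist_nonneg) hle hzero)) ((tendsto_add_atTop_iff_nat 1).2 (hlim t))

/-- Evaluate the contraction estimate where `dist (u t) (v t) / w t` is largest. -/
theorem eqOn_Icc_of_causal_contraction {u v : ℝ → E} {T : ℝ} (hu : ContinuousOn u (Icc 0 T))
    (hv : ContinuousOn v (Icc 0 T)) (hw : Continuous w) (hw0 : ∀ t, 0 < w t) (hr1 : r < 1)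
    (hcontr : ∀ M, ∀ t ∈ Icc 0 T, (∀ s ∈ Icc 0 t, dist (u s) (v s) ≤ M * w s) →
      dist (u t) (v t) ≤ r * M * w t) : EqOn u v (Icc 0 T) := by
  intro t ht
  have hcont : ContinuousOn (fun t => dist (u t) (v t) / w t) (Icc 0 T) :=
    (continuous_dist.comp_continuousOn (hu.prodMk hv)).div hw.continuousOn
      fun t _ => (hw0 t).ne'
  obtain ⟨t₀, ht₀, hmax⟩ := isCompact_Icc.exists_isMaxOn ⟨t, ht⟩ hcont
  set M := dist (u t₀) (v t₀) / w t₀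
  have hle : ∀ s ∈ Icc 0 T, dist (u s) (v s) ≤ M * w s := fun s hs =>
    (div_le_iff₀ (hw0 s)).1 (hmax hs)
  have hself : M ≤ r * M := (div_le_iff₀ (hw0 t₀)).2
    (hcontr M t₀ ht₀ fun s hs => hle s ⟨hs.1, hs.2.trans ht₀.2⟩)
  have hM0 : M ≤ 0 := by nlinarith
  exact dist_le_zero.1 ((hle t ht).trans (mul_nonpos_of_nonpos_of_nonneg hM0 (hw0 t).le))

end CausalContraction

section GlobalODE

variable {E : Type*} [NormedAddCommGroup E] [NormedSpace ℝ E] {v : ℝ → E → E} {L : NNReal}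

lemma integral_cosh_mul {c : ℝ} (hc : c ≠ 0) (t : ℝ) :
    ∫ s in (0 : ℝ)..t, cosh (c * s) = sinh (c * t) / c := by
  have hderiv : ∀ s, HasDerivAt (fun s => sinh (c * s) / c) (cosh (c * s)) s := fun s => by
    have := (((hasDerivAt_id s).const_mul c).sinh).div_const c
    simpa [mul_div_cancel_right₀ _ hc] using this
  rw [intervalIntegral.integral_eq_sub_of_hasDerivAt (fun s _ => hderiv s)
    (Continuous.intervalIntegrable (by fun_prop) _ _)]
  simp

lemma abs_integral_cosh_mul_le {c : ℝ} (hc : 0 < c) (t : ℝ) :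
    |∫ s in (0 : ℝ)..t, cosh (c * s)| ≤ cosh (c * t) / c := by
  rw [integral_cosh_mul hc.ne', abs_div, abs_of_pos hc]
  gcongr
  rw [abs_sinh, ← cosh_abs]
  exact (sinh_lt_cosh _).le

lemma picard_isCausalContraction (hv : Continuous ↿v) (hL : ∀ t, LipschitzWith L (v t)) (y₀ : E) :
    IsCausalContraction (fun t => cosh ((2 * L + 1) * t)) (1 / 2)
      fun y t => y₀ + ∫ s in (0 : ℝ)..t, v s (y s) := by
  intro y z hy hz M t hM
  have hc : (0 : ℝ) < 2 * L + 1 := by positivity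
  have hM0 : 0 ≤ M := by
    simpa using dist_nonneg.trans (hM 0 (by simp))
  have hinteg : ∀ {u : ℝ → E}, Continuous u →
      IntervalIntegrable (fun s => v s (u s)) volume 0 t := fun hu =>
    (hv.comp (continuous_id.prodMk hu)).intervalIntegrable _ _
  have hpt : ∀ s ∈ uIoc 0 t, ‖v s (y s) - v s (z s)‖ ≤ L * M * cosh ((2 * L + 1) * s) := by
    intro s hs
    have hst : |s| ≤ |t| := by
      simpa using abs_sub_left_of_mem_uIcc (uIoc_subset_uIcc hs)
    calc ‖v s (y s) - v s (z s)‖ ≤ L * ‖y s - z s‖ := (hL s).norm_sub_le _ _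
      _ ≤ L * M * cosh ((2 * L + 1) * s) := by
        rw [mul_assoc, ← dist_eq_norm]
        gcongr
        exact hM s hst
  rw [dist_add_left, dist_eq_norm, ← intervalIntegral.integral_sub (hinteg hy) (hinteg hz)]
  calc ‖∫ s in (0 : ℝ)..t, (v s (y s) - v s (z s))‖
      ≤ |∫ s in (0 : ℝ)..t, L * M * cosh ((2 * L + 1) * s)| :=
        intervalIntegral.norm_integral_le_abs_of_norm_le
          ((ae_restrict_mem measurableSet_uIoc).mono hpt)
          (Continuous.intervalIntegrable (by fun_prop) _ _)
    _ = L * M * |∫ s in (0 : ℝ)..t, cosh ((2 * L + 1) * s)| := by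
        rw [intervalIntegral.integral_const_mul, abs_mul, abs_of_nonneg (by positivity)]
    _ ≤ L * M * (cosh ((2 * L + 1) * t) / (2 * L + 1)) := by
        gcongr
        exact abs_integral_cosh_mul_le hc t
    _ = L / (2 * L + 1) * (M * cosh ((2 * L + 1) * t)) := by ring
    _ ≤ 1 / 2 * (M * cosh ((2 * L + 1) * t)) := by
        refine mul_le_mul_of_nonneg_right ?_ (by positivity)
        rw [div_le_div_iff₀ hc two_pos]
        linarith
    _ = 1 / 2 * M * cosh ((2 * L + 1) * t) := by ring

theorem exists_isIntegralCurve_of_lipschitz [CompleteSpace E] (hv : Continuous ↿v)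
    (hL : ∀ t, LipschitzWith L (v t)) (t₀ : ℝ) (y₀ : E) :
    ∃ y : ℝ → E, y t₀ = y₀ ∧ IsIntegralCurve y v := by
  set v₀ : ℝ → E → E := fun t => v (t + t₀)
  have hv₀ : Continuous ↿v₀ := hv.comp (by fun_prop : Continuous fun p : ℝ × E => (p.1 + t₀, p.2))
  have hprim : ∀ y : ℝ → E, Continuous y → ∀ t,
      HasDerivAt (fun t => y₀ + ∫ s in (0 : ℝ)..t, v₀ s (y s)) (v₀ t (y t)) t := fun y hy t =>
    ((hv₀.comp (continuous_id.prodMk hy)).integral_hasStrictDerivAt 0 t).hasDerivAt.const_add y₀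
  have hcontr := picard_isCausalContraction hv₀ (fun t => hL (t + t₀)) y₀
  obtain ⟨y, hy, hfix⟩ := hcontr.exists_fixedPoint
    (fun y hy => continuous_iff_continuousAt.2 fun t => (hprim y hy t).continuousAt)
    (by fun_prop) (fun t => cosh_pos _) (by norm_num) (by norm_num)
  have hcurve : IsIntegralCurve y v₀ := fun t => by
    have := hprim y hy t
    rwa [hfix] at this
  refine ⟨fun t => y (t - t₀), ?_, ?_⟩
  · simpa using (congrFun hfix 0).symm
  · simpa [v₀, Function.comp_def] using hcurve.comp_sub t₀

end GlobalODE

section Flow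

/-- The value at time `t` of the solution of `u' = v(·, u)` with `u s = y`; a junk value unless
that problem has a global solution. -/
def odeFlow {E : Type*} [NormedAddCommGroup E] [NormedSpace ℝ E] (v : ℝ → E → E) (s t : ℝ)
    (y : E) : E :=
  Classical.epsilon (fun u : ℝ → E => u s = y ∧ IsIntegralCurve u v) t

/-- A time-dependent scalar vector field, continuous and globally Lipschitz in space, whose spatial
derivative is jointly continuous: the setting in which the flow is jointly `C¹`. -/
structure IsRegularField (v : ℝ → ℝ → ℝ) (L : NNReal) : Prop where
  continuous : Continuous ↿v
  lipschitz : ∀ t, LipschitzWith L (v t)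
  differentiable : ∀ t, Differentiable ℝ (v t)
  continuous_deriv : Continuous fun p : ℝ × ℝ => deriv (v p.1) p.2

/-- The Hadamard quotient `∫₀¹ f'(b + θ (a - b)) dθ`, which equals `(f a - f b) / (a - b)` for
`a ≠ b` and `f' a` for `a = b`. -/
def meanSlope (f : ℝ → ℝ) (a b : ℝ) : ℝ := ∫ θ in (0 : ℝ)..1, deriv f (b + θ * (a - b))

lemma meanSlope_self (f : ℝ → ℝ) (a : ℝ) : meanSlope f a a = deriv f a := by
  simp [meanSlope]

lemma meanSlope_mul_sub {f : ℝ → ℝ} (hf : ContDiff ℝ 1 f) (a b : ℝ) :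
    meanSlope f a b * (a - b) = f a - f b := by
  have hcont : Continuous (deriv f) := hf.continuous_deriv le_rfl
  have h := intervalIntegral.integral_unitInterval_deriv_eq_sub (𝕜 := ℝ) (f := f)
    (f' := deriv f) (z₀ := b) (z₁ := a - b) (hcont.comp (by fun_prop)).continuousOn
    fun θ _ => (hf.differentiable one_ne_zero _).hasDerivAt
  simpa [meanSlope, mul_comm] using h

lemma abs_meanSlope_le {f : ℝ → ℝ} {L : NNReal} (hf : LipschitzWith L f) (a b : ℝ) :
    |meanSlope f a b| ≤ L := by
  simpa [meanSlope] using intervalIntegral.norm_integral_le_of_norm_le_const (a := 0) (b := 1)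
    fun θ _ => norm_deriv_le_of_lipschitz (x₀ := b + θ * (a - b)) hf

lemma eq_exp_integral_mul_of_hasDerivAt {f g : ℝ → ℝ} (hg : Continuous g)
    (hf : ∀ r, HasDerivAt f (g r * f r) r) (s t : ℝ) :
    f t = exp (∫ r in s..t, g r) * f s := by
  have hG : ∀ r, HasDerivAt (fun t => ∫ r in s..t, g r) (g r) r := fun r =>
    (hg.integral_hasStrictDerivAt s r).hasDerivAt
  have hconst : ∀ r, HasDerivAt (fun t => exp (-∫ r in s..t, g r) * f t) 0 r := fun r =>
    ((hG r).neg.exp.mul (hf r)).congr_deriv (by ring)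
  have heq := is_const_of_deriv_eq_zero (fun r => (hconst r).differentiableAt)
    (fun r => (hconst r).deriv) t s
  rw [intervalIntegral.integral_same, neg_zero, exp_zero, one_mul] at heq
  rw [← heq, ← mul_assoc, ← exp_add, add_neg_cancel, exp_zero, one_mul]

lemma hasDerivAt_of_sub_eq_mul {f g : ℝ → ℝ} {y : ℝ} (hg : ContinuousAt g y)
    (h : ∀ z, f z - f y = g z * (z - y)) : HasDerivAt f (g y) y := by
  refine hasDerivAt_iff_tendsto_slope.2 ((hg.mono_left nhdsWithin_le_nhds).congr' ?_)
  filter_upwards [self_mem_nhdsWithin] with z hz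
  rw [slope_def_field, h z, mul_div_cancel_right₀ _ (sub_ne_zero.2 hz)]

namespace IsRegularField

variable {v : ℝ → ℝ → ℝ} {L : NNReal} (hv : IsRegularField v L)
include hv

lemma contDiff_apply (t : ℝ) : ContDiff ℝ 1 (v t) :=
  contDiff_one_iff_deriv.2 ⟨hv.differentiable t,
    hv.continuous_deriv.comp (continuous_const.prodMk continuous_id)⟩

lemma continuous_meanSlope {X : Type*} [TopologicalSpace X] {τ a b : X → ℝ} (hτ : Continuous τ)
    (ha : Continuous a) (hb : Continuous b) :
    Continuous fun x => meanSlope (v (τ x)) (a x) (b x) :=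
  intervalIntegral.continuous_parametric_intervalIntegral_of_continuous'
    (f := fun x θ => deriv (v (τ x)) (b x + θ * (a x - b x)))
    (hv.continuous_deriv.comp (by fun_prop :
      Continuous fun p : X × ℝ => (τ p.1, b p.1 + p.2 * (a p.1 - b p.1)))) 0 1

lemma odeFlow_spec (s y : ℝ) :
    odeFlow v s s y = y ∧ IsIntegralCurve (fun t => odeFlow v s t y) v :=
  Classical.epsilon_spec (exists_isIntegralCurve_of_lipschitz hv.continuous hv.lipschitz s y)

lemma odeFlow_self (s y : ℝ) : odeFlow v s s y = y := (hv.odeFlow_spec s y).1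

lemma isIntegralCurve_odeFlow (s y : ℝ) : IsIntegralCurve (fun t => odeFlow v s t y) v :=
  (hv.odeFlow_spec s y).2

lemma odeFlow_eq_of_isIntegralCurve {u : ℝ → ℝ} (hu : IsIntegralCurve u v) (s t : ℝ) :
    odeFlow v s t (u s) = u t :=
  congrFun (ODE_solution_unique_univ (t₀ := s) (s := fun _ => univ)
    (fun t => (hv.lipschitz t).lipschitzOnWith)
    (fun t => ⟨hv.isIntegralCurve_odeFlow s (u s) t, mem_univ _⟩)
    (fun t => ⟨hu t, mem_univ _⟩) (hv.odeFlow_self s (u s))) t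

lemma odeFlow_odeFlow (s t r y : ℝ) : odeFlow v t r (odeFlow v s t y) = odeFlow v s r y :=
  hv.odeFlow_eq_of_isIntegralCurve (hv.isIntegralCurve_odeFlow s y) t r

lemma odeFlow_odeFlow_self (s t y : ℝ) : odeFlow v t s (odeFlow v s t y) = y := by
  rw [hv.odeFlow_odeFlow, hv.odeFlow_self]

lemma odeFlow_sub_odeFlow (s t y z : ℝ) :
    odeFlow v s t y - odeFlow v s t z =
      exp (∫ r in s..t, meanSlope (v r) (odeFlow v s r y) (odeFlow v s r z)) * (y - z) := by
  have hy := hv.isIntegralCurve_odeFlow s y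
  have hz := hv.isIntegralCurve_odeFlow s z
  have h := eq_exp_integral_mul_of_hasDerivAt
    (hv.continuous_meanSlope continuous_id hy.continuous hz.continuous)
    (fun r => ((hy r).sub (hz r)).congr_deriv (meanSlope_mul_sub (hv.contDiff_apply r) _ _).symm)
    s t
  simpa only [hv.odeFlow_self, Pi.sub_apply, id] using h

lemma abs_odeFlow_sub_odeFlow_le (s t y z : ℝ) :
    |odeFlow v s t y - odeFlow v s t z| ≤ exp (L * |t - s|) * |y - z| := by
  rw [hv.odeFlow_sub_odeFlow, abs_mul, abs_exp]
  gcongr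
  exact (le_norm_self _).trans (intervalIntegral.norm_integral_le_of_norm_le_const
    fun r _ => abs_meanSlope_le (hv.lipschitz r) _ _)

lemma continuous_odeFlow (s : ℝ) : Continuous fun p : ℝ × ℝ => odeFlow v s p.1 p.2 := by
  refine continuous_iff_continuousAt.2 fun ⟨t, y⟩ => tendsto_iff_dist_tendsto_zero.2 ?_
  have hbound : ∀ p : ℝ × ℝ, dist (odeFlow v s p.1 p.2) (odeFlow v s t y) ≤
      exp (L * |p.1 - s|) * |p.2 - y| + |odeFlow v s p.1 y - odeFlow v s t y| := fun p =>
    (dist_triangle _ (odeFlow v s p.1 y) _).trans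
      (add_le_add_left (hv.abs_odeFlow_sub_odeFlow_le s p.1 p.2 y) _)
  have hcurve : Continuous fun p : ℝ × ℝ => odeFlow v s p.1 y :=
    (hv.isIntegralCurve_odeFlow s y).continuous.comp continuous_fst
  have hlim : Continuous fun p : ℝ × ℝ =>
      exp (L * |p.1 - s|) * |p.2 - y| + |odeFlow v s p.1 y - odeFlow v s t y| := by fun_prop
  exact squeeze_zero (fun _ => dist_nonneg) hbound (by simpa using hlim.tendsto (t, y))

lemma continuous_odeFlow_symm (s : ℝ) : Continuous fun p : ℝ × ℝ => odeFlow v p.1 s p.2 := by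
  refine continuous_iff_continuousAt.2 fun ⟨t, y⟩ => tendsto_iff_dist_tendsto_zero.2 ?_
  have hbound : ∀ p : ℝ × ℝ, dist (odeFlow v p.1 s p.2) (odeFlow v t s y) ≤
      exp (L * |s - p.1|) * |p.2 - odeFlow v t p.1 y| := fun p => by
    rw [← hv.odeFlow_odeFlow t p.1 s y]
    exact hv.abs_odeFlow_sub_odeFlow_le p.1 s _ _
  have hcurve : Continuous fun p : ℝ × ℝ => odeFlow v t p.1 y :=
    (hv.isIntegralCurve_odeFlow t y).continuous.comp continuous_fst
  have hlim : Continuous fun p : ℝ × ℝ =>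
      exp (L * |s - p.1|) * |p.2 - odeFlow v t p.1 y| := by fun_prop
  exact squeeze_zero (fun _ => dist_nonneg) hbound
    (by simpa [hv.odeFlow_self] using hlim.tendsto (t, y))

end IsRegularField

/-- The spatial derivative of the flow `odeFlow v s t`, obtained by solving the linearised
equation. -/
def odeFlowDeriv (v : ℝ → ℝ → ℝ) (s t y : ℝ) : ℝ :=
  exp (∫ r in s..t, deriv (v r) (odeFlow v s r y))

lemma odeFlowDeriv_pos (v : ℝ → ℝ → ℝ) (s t y : ℝ) : 0 < odeFlowDeriv v s t y := exp_pos _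

lemma odeFlowDeriv_self (v : ℝ → ℝ → ℝ) (s y : ℝ) : odeFlowDeriv v s s y = 1 := by
  simp [odeFlowDeriv]

namespace IsRegularField

variable {v : ℝ → ℝ → ℝ} {L : NNReal} (hv : IsRegularField v L)
include hv

lemma continuous_odeFlowDeriv (s : ℝ) : Continuous fun p : ℝ × ℝ => odeFlowDeriv v s p.1 p.2 := by
  have hderiv : Continuous fun p : ℝ × ℝ => deriv (v p.2) (odeFlow v s p.2 p.1) :=
    hv.continuous_deriv.comp
      (continuous_snd.prodMk ((hv.continuous_odeFlow s).comp continuous_swap))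
  have hintegral : Continuous fun p : ℝ × ℝ => ∫ r in s..p.2, deriv (v r) (odeFlow v s r p.1) :=
    intervalIntegral.continuous_parametric_primitive_of_continuous
      (f := fun y r => deriv (v r) (odeFlow v s r y)) hderiv
  exact continuous_exp.comp (hintegral.comp continuous_swap)

lemma hasDerivAt_odeFlow_apply (s t y : ℝ) :
    HasDerivAt (odeFlow v s t) (odeFlowDeriv v s t y) y := by
  set g : ℝ → ℝ := fun z =>
    exp (∫ r in s..t, meanSlope (v r) (odeFlow v s r z) (odeFlow v s r y))
  have hg : Continuous g := by
    have hslope : Continuous fun p : ℝ × ℝ =>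
        meanSlope (v p.2) (odeFlow v s p.2 p.1) (odeFlow v s p.2 y) :=
      hv.continuous_meanSlope continuous_snd ((hv.continuous_odeFlow s).comp continuous_swap)
        ((hv.isIntegralCurve_odeFlow s y).continuous.comp continuous_snd)
    exact continuous_exp.comp
      (intervalIntegral.continuous_parametric_intervalIntegral_of_continuous' hslope s t)
  have h := hasDerivAt_of_sub_eq_mul hg.continuousAt fun z => hv.odeFlow_sub_odeFlow s t z y
  simpa only [g, meanSlope_self, odeFlowDeriv] using h

lemma strictMono_odeFlow (s t : ℝ) : StrictMono (odeFlow v s t) :=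
  strictMono_of_hasDerivAt_pos (hv.hasDerivAt_odeFlow_apply s t)
    fun y => odeFlowDeriv_pos v s t y

lemma continuous_field_odeFlow (s : ℝ) :
    Continuous fun p : ℝ × ℝ => v p.1 (odeFlow v s p.1 p.2) :=
  hv.continuous.comp (continuous_fst.prodMk (hv.continuous_odeFlow s))

lemma hasFDerivAt_odeFlow (s : ℝ) (p : ℝ × ℝ) :
    HasFDerivAt (fun p : ℝ × ℝ => odeFlow v s p.1 p.2)
      (v p.1 (odeFlow v s p.1 p.2) • ContinuousLinearMap.fst ℝ ℝ ℝ +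
        odeFlowDeriv v s p.1 p.2 • ContinuousLinearMap.snd ℝ ℝ ℝ) p := by
  have hspan : Continuous fun c : ℝ => ContinuousLinearMap.toSpanSingleton ℝ c :=
    (ContinuousLinearMap.toSpanSingletonCLE (𝕜 := ℝ) (E := ℝ)).continuous
  have h := hasStrictFDerivAt_uncurry_coprod (u := p) (f := fun t y => odeFlow v s t y)
    (f₁ := fun t y => ContinuousLinearMap.toSpanSingleton ℝ (v t (odeFlow v s t y)))
    (f₂ := fun t y => ContinuousLinearMap.toSpanSingleton ℝ (odeFlowDeriv v s t y))
    (.of_forall fun q => (hv.isIntegralCurve_odeFlow s q.2 q.1).hasFDerivAt)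
    (.of_forall fun q => (hv.hasDerivAt_odeFlow_apply s q.1 q.2).hasFDerivAt)
    (hspan.comp (hv.continuous_field_odeFlow s)).continuousAt
    (hspan.comp (hv.continuous_odeFlowDeriv s)).continuousAt
  exact h.hasFDerivAt.congr_fderiv (by ext <;> simp [Function.HasUncurry.uncurry])

lemma contDiff_odeFlow (s : ℝ) : ContDiff ℝ 1 fun p : ℝ × ℝ => odeFlow v s p.1 p.2 :=
  contDiff_one_iff_hasFDerivAt.2 ⟨_, ((hv.continuous_field_odeFlow s).smul continuous_const).add
    ((hv.continuous_odeFlowDeriv s).smul continuous_const), hv.hasFDerivAt_odeFlow s⟩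

/-- The inverse function theorem for `(t, y) ↦ (t, odeFlow v s t y)`. -/
lemma contDiff_odeFlow_symm (s : ℝ) : ContDiff ℝ 1 fun p : ℝ × ℝ => odeFlow v p.1 s p.2 := by
  let f : (ℝ × ℝ) ≃ₜ (ℝ × ℝ) :=
    { toFun := fun p => (p.1, odeFlow v s p.1 p.2)
      invFun := fun p => (p.1, odeFlow v p.1 s p.2)
      left_inv := fun p => by simp [hv.odeFlow_odeFlow_self]
      right_inv := fun p => by simp [hv.odeFlow_odeFlow_self]
      continuous_toFun := continuous_fst.prodMk (hv.continuous_odeFlow s)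
      continuous_invFun := continuous_fst.prodMk (hv.continuous_odeFlow_symm s) }
  let f' : ℝ × ℝ → (ℝ × ℝ) ≃L[ℝ] (ℝ × ℝ) := fun p =>
    (ContinuousLinearEquiv.refl ℝ ℝ).skewProd
      (ContinuousLinearEquiv.unitsEquivAut ℝ
        (Units.mk0 (odeFlowDeriv v s p.1 p.2) (odeFlowDeriv_pos v s p.1 p.2).ne'))
      (ContinuousLinearMap.toSpanSingleton ℝ (v p.1 (odeFlow v s p.1 p.2)))
  have hf' : ∀ p, HasFDerivAt f (f' p : ℝ × ℝ →L[ℝ] ℝ × ℝ) p := fun p =>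
    (hasFDerivAt_fst.prodMk (hv.hasFDerivAt_odeFlow s p)).congr_fderiv (by ext <;> simp [f'])
  exact contDiff_snd.comp (f.contDiff_symm hf' (contDiff_fst.prodMk (hv.contDiff_odeFlow s)))

lemma hasDerivWithinAt_odeFlow_comp (s : ℝ) {a b : ℝ → ℝ} {a' b' : ℝ} {u : Set ℝ} {t : ℝ}
    (ha : HasDerivWithinAt a a' u t) (hb : HasDerivWithinAt b b' u t) :
    HasDerivWithinAt (fun t => odeFlow v s (a t) (b t))
      (v (a t) (odeFlow v s (a t) (b t)) * a' + odeFlowDeriv v s (a t) (b t) * b') u t := by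
  have h := (hv.hasFDerivAt_odeFlow s (a t, b t)).comp_hasDerivWithinAt t
    (ha.prodMk hb)
  exact h.congr_deriv (by simp [mul_comm])

end IsRegularField

end Flow

section Stability

variable {E : Type*} [NormedAddCommGroup E] [NormedSpace ℝ E]

lemma norm_le_exp_of_norm_deriv_right_le {f f' : ℝ → E} {L lam ε δ a b : ℝ} (hlam : L < lam)
    (hε : 0 ≤ ε) (hab : a ≤ b) (hf : ContinuousOn f (Icc a b))
    (hf' : ∀ t ∈ Ico a b, HasDerivWithinAt f (f' t) (Ici t) t)
    (hbound : ∀ t ∈ Ico a b, ‖f' t‖ ≤ L * ‖f t‖ + ε * exp (lam * t)) (ha : ‖f a‖ ≤ δ) :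
    ‖f b‖ ≤ exp (L * (b - a)) * δ + ε / (lam - L) * exp (lam * b) := by
  have hgap : 0 < lam - L := sub_pos.2 hlam
  set B : ℝ → ℝ → ℝ := fun c t => exp (L * (t - a)) * δ + (ε / (lam - L) + c) * exp (lam * t)
  have hB : ∀ c t, HasDerivAt (B c) (L * B c t + (ε + c * (lam - L)) * exp (lam * t)) t := by
    intro c t
    have h₁ := ((((hasDerivAt_id t).sub_const a).const_mul L).exp).mul_const δ
    have h₂ := (((hasDerivAt_id t).const_mul lam).exp).const_mul (ε / (lam - L) + c)
    refine (h₁.add h₂).congr_deriv ?_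
    simp only [B, id]
    field_simp
    ring
  -- The strict comparison theorem applies to `B c` for every `c > 0`; then let `c → 0`.
  have hstrict : ∀ c > 0, ‖f b‖ ≤ B c b := fun c hc =>
    image_norm_le_of_norm_deriv_right_lt_deriv_boundary' hf hf'
      (ha.trans (by simpa [B] using by positivity))
      (fun t _ => (hB c t).continuousAt.continuousWithinAt)
      (fun t _ => (hB c t).hasDerivWithinAt)
      (fun t ht hfB => by
        have : 0 < c * (lam - L) * exp (lam * t) := by positivity
        rw [← hfB]
        linarith [hbound t ht])
      (right_mem_Icc.2 hab)
  have hlim : Tendsto (fun c => B c b) (𝓝[>] 0) (𝓝 (B 0 b)) :=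
    (Continuous.tendsto (by fun_prop) 0).mono_left nhdsWithin_le_nhds
  simpa [B] using ge_of_tendsto hlim (eventually_mem_nhdsWithin.mono hstrict)

/-- The vector field `y ↦ K (S t + y)`. Along a characteristic `η = τ + c` of the `Q`-system,
`Q - S` is an integral curve of it when `S` is a primitive of `1 / N`. -/
def shiftedField (K S : ℝ → ℝ) (t y : ℝ) : ℝ := K (S t + y)

variable {K S₁ S₂ y₁ y₂ : ℝ → ℝ} {L : NNReal}

lemma abs_sub_le_of_isIntegralCurveOn_shiftedField (hK : LipschitzWith L K) {lam M δ a b : ℝ}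
    (hlam : L < lam) (hM : 0 ≤ M) (hab : a ≤ b)
    (hy₁ : IsIntegralCurveOn y₁ (shiftedField K S₁) (Icc a b))
    (hy₂ : IsIntegralCurveOn y₂ (shiftedField K S₂) (Icc a b))
    (hS : ∀ t ∈ Icc a b, |S₁ t - S₂ t| ≤ M * exp (lam * t)) (ha : |y₁ a - y₂ a| ≤ δ) :
    |y₁ b - y₂ b| ≤ exp (L * (b - a)) * δ + L * M / (lam - L) * exp (lam * b) := by
  refine norm_le_exp_of_norm_deriv_right_le (f := y₁ - y₂) hlam (by positivity) hab
    (hy₁.continuousOn.sub hy₂.continuousOn)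
    (fun t ht => ((hy₁ t (Ico_subset_Icc_self ht)).sub
      (hy₂ t (Ico_subset_Icc_self ht))).mono_of_mem_nhdsWithin (Icc_mem_nhdsGE_of_mem ht))
    (fun t ht => ?_) ha
  calc |K (S₁ t + y₁ t) - K (S₂ t + y₂ t)| ≤ L * |S₁ t + y₁ t - (S₂ t + y₂ t)| := by
        simpa [Real.dist_eq] using hK.dist_le_mul (S₁ t + y₁ t) (S₂ t + y₂ t)
    _ ≤ L * (|S₁ t - S₂ t| + |y₁ t - y₂ t|) := by
        gcongr
        rw [add_sub_add_comm]
        exact abs_add_le _ _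
    _ ≤ L * (M * exp (lam * t) + |y₁ t - y₂ t|) := by
        gcongr
        exact hS t (Ico_subset_Icc_self ht)
    _ = L * |y₁ t - y₂ t| + L * M * exp (lam * t) := by ring

/-- The exponential weight of the contraction estimate. Characteristics cross the strip `[0, 1]`
in unit time, over which any rate well above the Lipschitz constant beats the growth of the
flow. -/
def contractionRate (L : NNReal) : ℝ := 9 * L + 8

lemma lt_contractionRate (L : NNReal) : (L : ℝ) < contractionRate L := by
  rw [contractionRate]
  linarith [L.coe_nonneg]

lemma exp_entry_add_source_le (L : NNReal) :
    2 * exp (L - contractionRate L) + L / (contractionRate L - L) ≤ 1 / 2 := by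
  have hexp : exp (L - contractionRate L) ≤ 1 / 9 :=
    calc exp (L - contractionRate L) ≤ exp (-8) := by
          gcongr
          rw [contractionRate]
          linarith [L.coe_nonneg]
      _ ≤ 1 / 9 := by
          rw [exp_neg, ← one_div]
          exact one_div_le_one_div_of_le (by norm_num) (by linarith [add_one_le_exp (8 : ℝ)])
  have hsource : L / (contractionRate L - L) ≤ 1 / 8 := by
    rw [div_le_div_iff₀ (sub_pos.2 (lt_contractionRate L)) (by norm_num), contractionRate]
    linarith
  linarith

lemma abs_entry_sub_le {τ M lam c : ℝ} (hτ : 0 ≤ τ) (hlam : 0 ≤ lam)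
    (hS : ∀ t ∈ Icc 0 τ, |S₁ t - S₂ t| ≤ M * exp (lam * t)) :
    |(c - (S₁ (max (τ - 1) 0) - S₁ 0)) - (c - (S₂ (max (τ - 1) 0) - S₂ 0))| ≤
      2 * M * exp (lam * (τ - 1)) := by
  have hM : 0 ≤ M := by simpa using (abs_nonneg _).trans (hS 0 ⟨le_rfl, hτ⟩)
  rcases le_total τ 1 with h | h
  · rw [max_eq_right (by linarith)]
    simpa using by positivity
  · rw [max_eq_left (by linarith)]
    have hentry := hS (τ - 1) ⟨by linarith, by linarith⟩
    have hzero : |S₁ 0 - S₂ 0| ≤ M * exp (lam * (τ - 1)) := (hS 0 ⟨le_rfl, hτ⟩).trans (by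
      gcongr
      linarith)
    rw [abs_le] at hentry hzero ⊢
    constructor <;> linarith [hentry.1, hentry.2, hzero.1, hzero.2]

/-- Two characteristics reaching the exit `η = 1` at time `τ` entered either from the same initial
position, or at time `τ - 1` through `η = 0`, where the boundary condition prescribes `Q - S`. -/
lemma abs_exit_sub_le (hK : LipschitzWith L K) {τ M c : ℝ} (hτ : 0 ≤ τ)
    (hy₁ : IsIntegralCurveOn y₁ (shiftedField K S₁) (Icc (max (τ - 1) 0) τ))
    (hy₂ : IsIntegralCurveOn y₂ (shiftedField K S₂) (Icc (max (τ - 1) 0) τ))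
    (hentry₁ : y₁ (max (τ - 1) 0) = c - (S₁ (max (τ - 1) 0) - S₁ 0))
    (hentry₂ : y₂ (max (τ - 1) 0) = c - (S₂ (max (τ - 1) 0) - S₂ 0))
    (hS : ∀ t ∈ Icc 0 τ, |S₁ t - S₂ t| ≤ M * exp (contractionRate L * t)) :
    |y₁ τ - y₂ τ| ≤ 1 / 2 * M * exp (contractionRate L * τ) := by
  set lam := contractionRate L
  have hL : (L : ℝ) < lam := lt_contractionRate L
  have hM : 0 ≤ M := by simpa using (abs_nonneg _).trans (hS 0 ⟨le_rfl, hτ⟩)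
  have hentry := abs_entry_sub_le (c := c) hτ (L.coe_nonneg.trans hL.le) hS
  rw [← hentry₁, ← hentry₂] at hentry
  calc |y₁ τ - y₂ τ|
      ≤ exp (L * (τ - max (τ - 1) 0)) * (2 * M * exp (lam * (τ - 1))) +
          L * M / (lam - L) * exp (lam * τ) :=
        abs_sub_le_of_isIntegralCurveOn_shiftedField hK hL hM (max_le (by linarith) hτ) hy₁ hy₂
          (fun t ht => hS t ⟨(le_max_right _ _).trans ht.1, ht.2⟩) hentry
    _ ≤ exp (L * 1) * (2 * M * exp (lam * (τ - 1))) + L * M / (lam - L) * exp (lam * τ) := by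
        gcongr
        linarith [le_max_left (τ - 1) 0]
    _ = (2 * exp (L - lam) + L / (lam - L)) * (M * exp (lam * τ)) := by
        have : exp (L * 1) * exp (lam * (τ - 1)) = exp (L - lam) * exp (lam * τ) := by
          rw [← exp_add, ← exp_add]
          ring_nf
        linear_combination 2 * M * this
    _ ≤ 1 / 2 * (M * exp (lam * τ)) := by
        gcongr
        exact exp_entry_add_source_le L
    _ = 1 / 2 * M * exp (lam * τ) := by ring

end Stability

section Gluing

variable {F : Type*} [NormedAddCommGroup F] [NormedSpace ℝ F] {f : ℝ → F} {s t : Set ℝ}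

lemma contDiffOn_one_union_of_isClosed (hs : IsClosed s) (ht : IsClosed t)
    (hs' : UniqueDiffOn ℝ s) (ht' : UniqueDiffOn ℝ t) (hfs : ContDiffOn ℝ 1 f s)
    (hft : ContDiffOn ℝ 1 f t)
    (heq : ∀ x ∈ s ∩ t, derivWithin f s x = derivWithin f t x) : ContDiffOn ℝ 1 f (s ∪ t) := by
  classical
  rw [contDiffOn_one_iff_derivWithin hs'] at hfs
  rw [contDiffOn_one_iff_derivWithin ht'] at hft
  set g : ℝ → F := s.piecewise (derivWithin f s) (derivWithin f t)
  have hgs : EqOn g (derivWithin f s) s := piecewise_eqOn s _ _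
  have hgt : EqOn g (derivWithin f t) t := fun x hxt => by
    by_cases hxs : x ∈ s
    · rw [hgs hxs, heq x ⟨hxs, hxt⟩]
    · exact piecewise_eq_of_notMem s _ _ hxs
  have hfg_s : ∀ x, HasDerivWithinAt f (g x) s x := fun x => by
    by_cases hx : x ∈ s
    · exact hgs hx ▸ (hfs.1 x hx).hasDerivWithinAt
    · exact HasFDerivWithinAt.of_notMem_closure (hs.closure_eq.symm ▸ hx)
  have hfg_t : ∀ x, HasDerivWithinAt f (g x) t x := fun x => by
    by_cases hx : x ∈ t
    · exact hgt hx ▸ (hft.1 x hx).hasDerivWithinAt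
    · exact HasFDerivWithinAt.of_notMem_closure (ht.closure_eq.symm ▸ hx)
  have hfg : ∀ x, HasDerivWithinAt f (g x) (s ∪ t) x := fun x => (hfg_s x).union (hfg_t x)
  have hunique : UniqueDiffOn ℝ (s ∪ t) := fun x hx => hx.elim
    (fun hx => (hs' x hx).mono subset_union_left) (fun hx => (ht' x hx).mono subset_union_right)
  have hg : ContinuousOn g (s ∪ t) :=
    (hfs.2.congr hgs).union_of_isClosed (hft.2.congr hgt) hs ht
  exact (contDiffOn_one_iff_derivWithin hunique).2
    ⟨fun x _ => (hfg x).differentiableWithinAt,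
      hg.congr fun x hx => (hfg x).derivWithin (hunique x hx)⟩

end Gluing

section Characteristics

/-- The hypotheses on `(K, Φ_F, Q_init)` under which the relaxed problem (no sign condition on
`1 / N`) is globally solvable: (A2) without monotonicity and without the sign condition on the
outflow. -/
structure IsCompatibleData (K : ℝ → ℝ) (ΦF : ℝ) (Qinit : ℝ → ℝ) (L : NNReal) : Prop where
  smooth : ContDiff ℝ 1 K
  lipschitz : LipschitzWith L K
  initReg : ContDiffOn ℝ 1 Qinit (Icc 0 1)
  init0 : Qinit 0 = 0
  init1 : Qinit 1 = ΦF
  compat : derivWithin Qinit (Icc 0 1) 1 - derivWithin Qinit (Icc 0 1) 0 = K ΦF - K 0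

/-- The time at which the characteristic `η = τ + a` enters the domain `τ ≥ 0`, `η ≥ 0`. -/
def entryTime (a : ℝ) : ℝ := max (-a) 0

/-- The label of the characteristic `η = τ + a`: the value of `Q - S` there, continued to time `0`
by the flow from its entry value, which is `Q_init a` or, for `a < 0`, `-S` at the entry time.
The normalisation by `S 0` makes the label at `a = 0` independent of `S`. -/
def charLabel (K Qinit S : ℝ → ℝ) (a : ℝ) : ℝ :=
  odeFlow (shiftedField K S) (entryTime a) 0 (Qinit (max a 0) - (S (entryTime a) - S 0))

/-- The value of `Q` built from a primitive `S` of `1 / N` by transport along characteristics. -/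
def charSol (K Qinit S : ℝ → ℝ) (τ η : ℝ) : ℝ :=
  S τ + odeFlow (shiftedField K S) 0 τ (charLabel K Qinit S (η - τ))

/-- The map whose fixed points are the `S` for which `charSol` satisfies `Q(τ, 1) = Φ_F`;
frozen for negative times. -/
def exitMap (K : ℝ → ℝ) (ΦF : ℝ) (Qinit S : ℝ → ℝ) (τ : ℝ) : ℝ :=
  ΦF - odeFlow (shiftedField K S) 0 (max τ 0) (charLabel K Qinit S (1 - max τ 0))

variable {K Qinit S : ℝ → ℝ} {ΦF : ℝ} {L : NNReal}

lemma isRegularField_shiftedField (hK : ContDiff ℝ 1 K) (hL : LipschitzWith L K)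
    (hS : Continuous S) : IsRegularField (shiftedField K S) L where
  continuous := hK.continuous.comp (by fun_prop : Continuous fun p : ℝ × ℝ => S p.1 + p.2)
  lipschitz t := by
    have hadd : LipschitzWith 1 fun y => S t + y := (isometry_add_left (S t)).lipschitz
    simpa [Function.comp_def, shiftedField] using! hL.comp hadd
  differentiable t := (hK.differentiable one_ne_zero).comp (differentiable_id.const_add (S t))
  continuous_deriv := by
    have hderiv : ∀ p : ℝ × ℝ, deriv (shiftedField K S p.1) p.2 = deriv K (S p.1 + p.2) :=
      fun p => deriv_comp_const_add K (S p.1) p.2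
    simp only [hderiv]
    exact (hK.continuous_deriv le_rfl).comp (by fun_prop)

lemma entryTime_of_nonpos {a : ℝ} (ha : a ≤ 0) : entryTime a = -a :=
  max_eq_left (neg_nonneg.2 ha)

lemma entryTime_of_nonneg {a : ℝ} (ha : 0 ≤ a) : entryTime a = 0 :=
  max_eq_right (neg_nonpos.2 ha)

namespace IsCompatibleData

variable (hD : IsCompatibleData K ΦF Qinit L)
include hD

lemma isRegularField (hS : Continuous S) : IsRegularField (shiftedField K S) L :=
  isRegularField_shiftedField hD.smooth hD.lipschitz hS

lemma odeFlow_entryTime_charLabel (hS : Continuous S) (a : ℝ) :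
    odeFlow (shiftedField K S) 0 (entryTime a) (charLabel K Qinit S a) =
      Qinit (max a 0) - (S (entryTime a) - S 0) :=
  (hD.isRegularField hS).odeFlow_odeFlow_self _ _ _

lemma charLabel_of_nonneg (hS : Continuous S) {a : ℝ} (ha : 0 ≤ a) :
    charLabel K Qinit S a = Qinit a := by
  simp [charLabel, entryTime_of_nonneg ha, max_eq_left ha, (hD.isRegularField hS).odeFlow_self]

lemma continuousOn_charLabel (hS : Continuous S) :
    ContinuousOn (charLabel K Qinit S) (Iic 1) := by
  have hentry : Continuous entryTime := by unfold entryTime; fun_prop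
  have hinit : ContinuousOn (fun a => Qinit (max a 0)) (Iic 1) :=
    hD.initReg.continuousOn.comp (by fun_prop) fun a ha =>
      ⟨le_max_right _ _, max_le ha zero_le_one⟩
  exact ((hD.isRegularField hS).continuous_odeFlow_symm 0).comp_continuousOn
    (hentry.continuousOn.prodMk (hinit.sub (by fun_prop)))

lemma continuous_exitMap (hS : Continuous S) : Continuous (exitMap K ΦF Qinit S) := by
  have hlabel : Continuous fun τ : ℝ => charLabel K Qinit S (1 - max τ 0) :=
    (hD.continuousOn_charLabel hS).comp_continuous (by fun_prop) fun τ =>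
      mem_Iic.2 (sub_le_self (1 : ℝ) (le_max_right τ 0))
  exact continuous_const.sub (((hD.isRegularField hS).continuous_odeFlow 0).comp
    ((by fun_prop : Continuous fun τ : ℝ => max τ 0).prodMk hlabel))

lemma isCausalContraction_exitMap :
    IsCausalContraction (fun t => exp (contractionRate L * |t|)) (1 / 2)
      (exitMap K ΦF Qinit) := by
  intro S₁ S₂ hS₁ hS₂ M t hM
  beta_reduce at hM ⊢
  set τ := max t 0
  have hτ : 0 ≤ τ := le_max_right _ _
  have hτt : τ ≤ |t| := max_le (le_abs_self t) (abs_nonneg t)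
  have hM0 : 0 ≤ M := by simpa using dist_nonneg.trans (hM 0 (by simp))
  have hrate : 0 ≤ contractionRate L := L.coe_nonneg.trans (lt_contractionRate L).le
  have hcurve : ∀ {S}, Continuous S → IsIntegralCurveOn
      (fun t => odeFlow (shiftedField K S) 0 t (charLabel K Qinit S (1 - τ)))
      (shiftedField K S) (Icc (max (τ - 1) 0) τ) := fun hS =>
    ((hD.isRegularField hS).isIntegralCurve_odeFlow _ _).isIntegralCurveOn _
  have hentry : entryTime (1 - τ) = max (τ - 1) 0 := by rw [entryTime, neg_sub]
  have hexit := abs_exit_sub_le hD.lipschitz hτ (hcurve hS₁) (hcurve hS₂)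
    (hentry ▸ hD.odeFlow_entryTime_charLabel hS₁ _) (hentry ▸ hD.odeFlow_entryTime_charLabel hS₂ _)
    (fun s hs => by
      have := hM s ((abs_of_nonneg hs.1).trans_le (hs.2.trans hτt))
      rwa [abs_of_nonneg hs.1] at this)
  calc dist (exitMap K ΦF Qinit S₁ t) (exitMap K ΦF Qinit S₂ t)
      ≤ 1 / 2 * M * exp (contractionRate L * τ) := by
        rwa [exitMap, exitMap, dist_sub_left]
    _ ≤ 1 / 2 * M * exp (contractionRate L * |t|) := by gcongr

end IsCompatibleData

/-- `S` is a fixed point of `exitMap`: transport along characteristics with source `S` makes `Q`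
equal to `Φ_F` at the outflow boundary `η = 1`. -/
structure IsExitFixedPoint (K : ℝ → ℝ) (ΦF : ℝ) (Qinit S : ℝ → ℝ) : Prop where
  continuous : Continuous S
  charSol_one : ∀ τ, 0 ≤ τ → charSol K Qinit S τ 1 = ΦF

theorem IsCompatibleData.exists_isExitFixedPoint (hD : IsCompatibleData K ΦF Qinit L) :
    ∃ S, IsExitFixedPoint K ΦF Qinit S := by
  obtain ⟨S, hS, hfix⟩ := hD.isCausalContraction_exitMap.exists_fixedPoint
    (fun S hS => hD.continuous_exitMap hS) (by fun_prop) (fun t => exp_pos _) (by norm_num)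
    (by norm_num)
  refine ⟨S, hS, fun τ hτ => ?_⟩
  have := congrFun hfix τ
  rw [exitMap, max_eq_left hτ] at this
  rw [charSol]
  linarith

end Characteristics

section Regularity

variable {K Qinit S : ℝ → ℝ} {ΦF : ℝ} {L : NNReal}

/-- The value of `∂_η Q` at `(τ, η)` for `Q = charSol`. -/
def charSlope (K Qinit S : ℝ → ℝ) (τ η : ℝ) : ℝ :=
  odeFlowDeriv (shiftedField K S) 0 τ (charLabel K Qinit S (η - τ)) *
    derivWithin (charLabel K Qinit S) (Iic 1) (η - τ)

namespace IsExitFixedPoint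

lemma eq_sub_odeFlow (hS : IsExitFixedPoint K ΦF Qinit S) {τ : ℝ} (hτ : 0 ≤ τ) :
    S τ = ΦF - odeFlow (shiftedField K S) 0 τ (charLabel K Qinit S (1 - τ)) := by
  rw [← hS.charSol_one τ hτ, charSol, add_sub_cancel_right]

variable (hS : IsExitFixedPoint K ΦF Qinit S) (hD : IsCompatibleData K ΦF Qinit L)
include hS hD

lemma isRegularField : IsRegularField (shiftedField K S) L := hD.isRegularField hS.continuous

lemma charLabel_of_nonneg {a : ℝ} (ha : 0 ≤ a) : charLabel K Qinit S a = Qinit a :=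
  hD.charLabel_of_nonneg hS.continuous ha

lemma apply_zero : S 0 = 0 := by
  have := hS.eq_sub_odeFlow le_rfl
  rwa [(hS.isRegularField hD).odeFlow_self, sub_zero, hS.charLabel_of_nonneg hD zero_le_one,
    hD.init1, sub_self] at this

lemma charLabel_neg {τ : ℝ} (hτ : 0 ≤ τ) :
    charLabel K Qinit S (-τ) = odeFlow (shiftedField K S) τ 0 (-S τ) := by
  simp [charLabel, entryTime_of_nonpos, hτ, hS.apply_zero hD, hD.init0]

lemma odeFlow_charLabel_neg {τ : ℝ} (hτ : 0 ≤ τ) :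
    odeFlow (shiftedField K S) 0 τ (charLabel K Qinit S (-τ)) = -S τ := by
  rw [hS.charLabel_neg hD hτ, (hS.isRegularField hD).odeFlow_odeFlow_self]

lemma contDiffOn_of_charLabel {s t : Set ℝ} (hlabel : ContDiffOn ℝ 1 (charLabel K Qinit S) t)
    (hs : s ⊆ Ici 0) (hst : MapsTo (fun τ => 1 - τ) s t) : ContDiffOn ℝ 1 S s := by
  have hflow : ContDiffOn ℝ 1
      (fun τ => odeFlow (shiftedField K S) 0 τ (charLabel K Qinit S (1 - τ))) s :=
    ((hS.isRegularField hD).contDiff_odeFlow 0).comp_contDiffOn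
      (contDiffOn_id.prodMk (hlabel.comp (by fun_prop) hst))
  exact (contDiffOn_const.sub hflow).congr fun τ hτ => hS.eq_sub_odeFlow (hs hτ)

lemma contDiffOn_charLabel_Icc_neg {c : ℝ} (hSc : ContDiffOn ℝ 1 S (Icc 0 c)) :
    ContDiffOn ℝ 1 (charLabel K Qinit S) (Icc (-c) 0) := by
  have hneg : MapsTo (fun a : ℝ => -a) (Icc (-c) 0) (Icc 0 c) := fun a ha =>
    ⟨neg_nonneg.2 ha.2, neg_le.1 ha.1⟩
  have hflow : ContDiffOn ℝ 1 (fun a => odeFlow (shiftedField K S) (-a) 0 (-S (-a)))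
      (Icc (-c) 0) :=
    ((hS.isRegularField hD).contDiff_odeFlow_symm 0).comp_contDiffOn
      (contDiffOn_id.neg.prodMk (hSc.comp contDiff_neg.contDiffOn hneg).neg)
  exact hflow.congr fun a ha => by
    simpa using hS.charLabel_neg hD (hneg ha).1

lemma contDiffOn_charLabel_Icc_zero_one : ContDiffOn ℝ 1 (charLabel K Qinit S) (Icc 0 1) :=
  hD.initReg.congr fun _ ha => hS.charLabel_of_nonneg hD ha.1

lemma derivWithin_charLabel_Icc_zero_one {a : ℝ} (ha : a ∈ Icc (0 : ℝ) 1) :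
    derivWithin (charLabel K Qinit S) (Icc 0 1) a = derivWithin Qinit (Icc 0 1) a :=
  derivWithin_congr (fun _ hx => hS.charLabel_of_nonneg hD hx.1) (hS.charLabel_of_nonneg hD ha.1)

lemma hasDerivWithinAt_zero :
    HasDerivWithinAt S (derivWithin Qinit (Icc 0 1) 1 - K ΦF) (Ici 0) 0 := by
  have hflip : MapsTo (fun τ : ℝ => 1 - τ) (Icc 0 1) (Icc 0 1) := fun τ hτ =>
    ⟨sub_nonneg.2 hτ.2, sub_le_self _ hτ.1⟩
  have hinit : HasDerivWithinAt Qinit (derivWithin Qinit (Icc 0 1) 1) (Icc 0 1) (1 - 0) := by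
    rw [sub_zero]
    exact (hD.initReg.differentiableOn one_ne_zero 1 (by simp)).hasDerivWithinAt
  have hinit' := hinit.scomp 0 ((hasDerivAt_id 0).const_sub 1).hasDerivWithinAt hflip
  have hflow := ((hS.isRegularField hD).hasDerivWithinAt_odeFlow_comp 0
    (hasDerivWithinAt_id 0 (Icc 0 1)) hinit').const_sub ΦF
  have hderiv := hflow.congr_of_mem (f₁ := S) (fun τ hτ => by
    rw [hS.eq_sub_odeFlow hτ.1, hS.charLabel_of_nonneg hD (hflip hτ).1]; rfl) (by simp)
  refine (hderiv.mono_of_mem_nhdsWithin (Icc_mem_nhdsGE one_pos)).congr_deriv ?_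
  simp [shiftedField, (hS.isRegularField hD).odeFlow_self, hS.apply_zero hD, hD.init1,
    odeFlowDeriv_self, sub_eq_add_neg]

/-- The compatibility condition matches the slope of the labels coming from the boundary `η = 0`
with the slope of those coming from the initial datum. -/
lemma derivWithin_charLabel_Icc_neg_zero {c : ℝ} (hc : 0 < c) (hSc : ContDiffOn ℝ 1 S (Icc 0 c)) :
    derivWithin (charLabel K Qinit S) (Icc (-c) 0) 0 = derivWithin Qinit (Icc 0 1) 0 := by
  set d := derivWithin (charLabel K Qinit S) (Icc (-c) 0) 0
  have hneg : MapsTo (fun τ : ℝ => -τ) (Icc 0 c) (Icc (-c) 0) := fun τ hτ =>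
    ⟨neg_le_neg hτ.2, neg_nonpos.2 hτ.1⟩
  have h0 : (0 : ℝ) ∈ Icc 0 c := ⟨le_rfl, hc.le⟩
  have hlabel : HasDerivWithinAt (charLabel K Qinit S) d (Icc (-c) 0) (-0) := by
    rw [neg_zero]
    exact ((hS.contDiffOn_charLabel_Icc_neg hD hSc).differentiableOn one_ne_zero 0
      ⟨neg_nonpos.2 hc.le, le_rfl⟩).hasDerivWithinAt
  have hlabel' := hlabel.scomp 0 (hasDerivAt_neg 0).hasDerivWithinAt hneg
  have hflow := (hS.isRegularField hD).hasDerivWithinAt_odeFlow_comp 0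
    (hasDerivWithinAt_id 0 (Icc 0 c)) hlabel'
  have hS' := ((hS.hasDerivWithinAt_zero hD).mono Icc_subset_Ici_self).neg.congr_of_mem
    (fun τ hτ => hS.odeFlow_charLabel_neg hD hτ.1) h0
  have heq := (uniqueDiffOn_Icc hc 0 h0).eq_deriv _ hflow hS'
  simp only [shiftedField, id_eq, hS.apply_zero hD, Function.comp_apply, neg_zero, le_refl,
    hS.charLabel_of_nonneg hD, hD.init0, (hS.isRegularField hD).odeFlow_self, add_zero, mul_one,
    odeFlowDeriv_self, smul_eq_mul, neg_mul, one_mul] at heq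
  linarith [hD.compat]

/-- Method of steps: each unit of regularity of `S` in time extends the labels by one more unit
of characteristics entering through `η = 0`, which reach the exit one unit of time later. -/
lemma contDiffOn_charLabel_Icc (k : ℕ) :
    ContDiffOn ℝ 1 (charLabel K Qinit S) (Icc (-k : ℝ) 1) := by
  induction k with
  | zero => simpa using hS.contDiffOn_charLabel_Icc_zero_one hD
  | succ k ih =>
    have hk : (0 : ℝ) < k + 1 := by positivity
    have hSk : ContDiffOn ℝ 1 S (Icc 0 (k + 1)) :=
      hS.contDiffOn_of_charLabel hD ih Icc_subset_Ici_self fun τ hτ =>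
        ⟨by linarith [hτ.2], by linarith [hτ.1]⟩
    push_cast
    rw [← Icc_union_Icc_eq_Icc (neg_nonpos.2 hk.le) zero_le_one]
    refine contDiffOn_one_union_of_isClosed isClosed_Icc isClosed_Icc
      (uniqueDiffOn_Icc (neg_lt_zero.2 hk)) (uniqueDiffOn_Icc one_pos)
      (hS.contDiffOn_charLabel_Icc_neg hD hSk) (hS.contDiffOn_charLabel_Icc_zero_one hD) ?_
    rintro a ⟨hneg, hpos⟩
    obtain rfl : a = 0 := le_antisymm hneg.2 hpos.1
    rw [hS.derivWithin_charLabel_Icc_neg_zero hD hk hSk,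
      hS.derivWithin_charLabel_Icc_zero_one hD hpos]

lemma contDiffOn_charLabel : ContDiffOn ℝ 1 (charLabel K Qinit S) (Iic 1) := by
  intro a ha
  obtain ⟨k, hk⟩ := exists_nat_gt (-a)
  refine (hS.contDiffOn_charLabel_Icc hD k a ⟨by linarith, ha⟩).mono_of_mem_nhdsWithin ?_
  rw [← Ici_inter_Iic]
  exact inter_mem (mem_nhdsWithin_of_mem_nhds (Ici_mem_nhds (neg_lt.1 hk))) self_mem_nhdsWithin

lemma contDiffOn : ContDiffOn ℝ 1 S (Ici 0) :=
  hS.contDiffOn_of_charLabel hD (hS.contDiffOn_charLabel hD) subset_rfl fun _ hτ =>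
    mem_Iic.2 (sub_le_self (1 : ℝ) hτ)

lemma continuousOn_derivWithin : ContinuousOn (derivWithin S (Ici 0)) (Ici 0) :=
  (hS.contDiffOn hD).continuousOn_derivWithin (uniqueDiffOn_Ici 0) le_rfl

lemma derivWithin_zero :
    derivWithin S (Ici 0) 0 = derivWithin Qinit (Icc 0 1) 1 - K ΦF :=
  (hS.hasDerivWithinAt_zero hD).derivWithin (uniqueDiffOn_Ici 0 0 self_mem_Ici)

lemma hasDerivWithinAt_charLabel {a : ℝ} (ha : a ≤ 1) :
    HasDerivWithinAt (charLabel K Qinit S) (derivWithin (charLabel K Qinit S) (Iic 1) a)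
      (Iic 1) a :=
  ((hS.contDiffOn_charLabel hD).differentiableOn one_ne_zero a ha).hasDerivWithinAt

lemma hasDerivWithinAt {τ : ℝ} (hτ : 0 ≤ τ) :
    HasDerivWithinAt S (derivWithin S (Ici 0) τ) (Ici 0) τ :=
  ((hS.contDiffOn hD).differentiableOn one_ne_zero τ hτ).hasDerivWithinAt

lemma contDiffOn_uncurry_charSol :
    ContDiffOn ℝ 1 (Function.uncurry (charSol K Qinit S)) (Ici 0 ×ˢ Icc 0 1) := by
  have hsource : ContDiffOn ℝ 1 (fun p : ℝ × ℝ => S p.1) (Ici 0 ×ˢ Icc 0 1) :=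
    (hS.contDiffOn hD).comp contDiffOn_fst fun _ hp => hp.1
  have hlabel : ContDiffOn ℝ 1 (fun p : ℝ × ℝ => charLabel K Qinit S (p.2 - p.1))
      (Ici 0 ×ˢ Icc 0 1) :=
    (hS.contDiffOn_charLabel hD).comp (contDiffOn_snd.sub contDiffOn_fst) fun _ hp =>
      mem_Iic.2 ((sub_le_self _ hp.1).trans hp.2.2)
  exact hsource.add (((hS.isRegularField hD).contDiff_odeFlow 0).comp_contDiffOn
    (contDiffOn_fst.prodMk hlabel))

lemma hasDerivWithinAt_charSol_eta {τ η : ℝ} (hτ : 0 ≤ τ) (hη : η ≤ 1) :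
    HasDerivWithinAt (charSol K Qinit S τ) (charSlope K Qinit S τ η) (Icc 0 1) η := by
  have hshift : MapsTo (fun x => x - τ) (Icc 0 1) (Iic 1) := fun x hx =>
    (sub_le_self x hτ).trans hx.2
  have hlabel := (hS.hasDerivWithinAt_charLabel hD ((sub_le_self η hτ).trans hη)).scomp η
    ((hasDerivAt_id η).sub_const τ).hasDerivWithinAt hshift
  have hflow := (hS.isRegularField hD).hasDerivWithinAt_odeFlow_comp 0
    (hasDerivWithinAt_const η (Icc 0 1) τ) hlabel
  exact (hflow.const_add (S τ)).congr_deriv (by simp [charSlope])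

lemma hasDerivWithinAt_charSol_tau {τ η : ℝ} (hτ : 0 ≤ τ) (hη : η ≤ 1) :
    HasDerivWithinAt (fun t => charSol K Qinit S t η)
      (derivWithin S (Ici 0) τ + K (charSol K Qinit S τ η) - charSlope K Qinit S τ η)
      (Ici 0) τ := by
  have hshift : MapsTo (fun t => η - t) (Ici 0) (Iic 1) := fun t ht =>
    (sub_le_self η ht).trans hη
  have hlabel := (hS.hasDerivWithinAt_charLabel hD (hshift hτ)).scomp τ
    ((hasDerivAt_id τ).const_sub η).hasDerivWithinAt hshift
  have hflow := (hS.isRegularField hD).hasDerivWithinAt_odeFlow_comp 0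
    (hasDerivWithinAt_id τ (Ici 0)) hlabel
  refine ((hS.hasDerivWithinAt hD hτ).add hflow).congr_deriv ?_
  simp only [charSol, charSlope, shiftedField, Function.comp_apply, id_eq, smul_eq_mul]
  ring

lemma charSol_zero_right {τ : ℝ} (hτ : 0 ≤ τ) : charSol K Qinit S τ 0 = 0 := by
  rw [charSol, zero_sub, hS.odeFlow_charLabel_neg hD hτ, add_neg_cancel]

lemma charSol_zero_left {η : ℝ} (hη : 0 ≤ η) : charSol K Qinit S 0 η = Qinit η := by
  rw [charSol, hS.apply_zero hD, (hS.isRegularField hD).odeFlow_self, sub_zero,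
    hS.charLabel_of_nonneg hD hη, zero_add]

/-- Along a vertical line on which `Q` is constant the time derivative drops out of the
transport equation. -/
lemma charSlope_eq_of_charSol_eq {c η τ : ℝ} (hη : η ≤ 1) (hτ : 0 ≤ τ)
    (hconst : ∀ t, 0 ≤ t → charSol K Qinit S t η = c) :
    charSlope K Qinit S τ η = derivWithin S (Ici 0) τ + K c := by
  have hconst' := (hasDerivWithinAt_const τ (Ici 0) c).congr_of_mem hconst hτ
  have := (uniqueDiffOn_Ici 0 τ hτ).eq_deriv _ (hS.hasDerivWithinAt_charSol_tau hD hτ hη) hconst'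
  rw [hconst τ hτ] at this
  linarith

lemma pdEta_charSol {τ η : ℝ} (hτ : 0 ≤ τ) (hη : η ∈ Icc (0 : ℝ) 1) :
    pdEta (charSol K Qinit S) τ η = charSlope K Qinit S τ η :=
  (hS.hasDerivWithinAt_charSol_eta hD hτ hη.2).derivWithin (uniqueDiffOn_Icc one_pos η hη)

theorem isRelaxedSol :
    IsRelaxedSol K ΦF ⊤ Qinit (charSol K Qinit S) (derivWithin S (Ici 0)) where
  initReg := hD.initReg
  init0 := hD.init0
  init1 := hD.init1
  reg := (hS.contDiffOn_uncurry_charSol hD).mono (prod_mono (fun _ hτ => hτ.1) subset_rfl)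
  Ncont := (hS.continuousOn_derivWithin hD).mono fun _ hτ => hτ.1
  pde τ hτ η hη := by
    rw [hS.pdEta_charSol hD hτ.1 (Ioo_subset_Icc_self hη), pdTau,
      (hS.hasDerivWithinAt_charSol_tau hD hτ.1 hη.2.le).derivWithin (uniqueDiffOn_Ici 0 τ hτ.1),
      sub_add_cancel]
  bc τ hτ := hS.charSol_zero_right hD hτ.1
  Ndef τ hτ := by
    rw [hS.pdEta_charSol hD hτ.1 (right_mem_Icc.2 zero_le_one),
      hS.charSlope_eq_of_charSol_eq hD le_rfl hτ.1 hS.charSol_one, add_sub_cancel_right]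
  init η hη := hS.charSol_zero_left hD hη.1

lemma monotoneOn_charLabel_neg (hK0 : 0 ≤ K 0) {τ : ℝ}
    (hpos : ∀ t ∈ Icc 0 τ, 0 ≤ derivWithin S (Ici 0) t) :
    MonotoneOn (charLabel K Qinit S) (Icc (-τ) 0) := by
  have hderiv : ∀ a ∈ Iic (0 : ℝ), HasDerivAt (charLabel K Qinit S)
      (derivWithin (charLabel K Qinit S) (Iic 1) a) a := fun a ha =>
    (hS.hasDerivWithinAt_charLabel hD (ha.trans zero_le_one)).hasDerivAt
      (Iic_mem_nhds (ha.trans_lt one_pos))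
  refine monotoneOn_of_hasDerivWithinAt_nonneg (convex_Icc _ _)
    (fun a ha => (hderiv a ha.2).continuousAt.continuousWithinAt)
    (fun a ha => (hderiv a (interior_subset ha).2).hasDerivWithinAt) fun a ha => ?_
  obtain ⟨hτa, ha0⟩ := interior_subset ha
  have hinflow := hS.charSlope_eq_of_charSol_eq hD zero_le_one (neg_nonneg.2 ha0)
    fun t ht => hS.charSol_zero_right hD ht
  rw [charSlope, zero_sub, neg_neg] at hinflow
  refine nonneg_of_mul_nonneg_right ?_ (odeFlowDeriv_pos (shiftedField K S) 0 (-a)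
    (charLabel K Qinit S a))
  rw [hinflow]
  exact add_nonneg (hpos (-a) ⟨neg_nonneg.2 ha0, neg_le.1 hτa⟩) hK0

lemma monotoneOn_charSol (hK0 : 0 ≤ K 0) (hinit : MonotoneOn Qinit (Icc 0 1)) {τ : ℝ}
    (hτ : 0 ≤ τ) (hpos : ∀ t ∈ Icc 0 τ, 0 ≤ derivWithin S (Ici 0) t) :
    MonotoneOn (charSol K Qinit S τ) (Icc 0 1) := by
  have hpos_label : MonotoneOn (charLabel K Qinit S) (Icc 0 1) :=
    hinit.congr fun a ha => (hS.charLabel_of_nonneg hD ha.1).symm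
  have hlabel : MonotoneOn (charLabel K Qinit S) (Icc (-τ) 1) := by
    rw [← Icc_union_Icc_eq_Icc (neg_nonpos.2 hτ) zero_le_one]
    exact (hS.monotoneOn_charLabel_neg hD hK0 hpos).union_right hpos_label
      (isGreatest_Icc (neg_nonpos.2 hτ)) (isLeast_Icc zero_le_one)
  have hshift : ∀ η ∈ Icc (0 : ℝ) 1, η - τ ∈ Icc (-τ) 1 := fun η hη =>
    ⟨by linarith [hη.1], by linarith [hη.2]⟩
  intro η₁ h₁ η₂ h₂ h
  exact add_le_add_right (((hS.isRegularField hD).strictMono_odeFlow 0 τ).monotone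
    (hlabel (hshift _ h₁) (hshift _ h₂) (sub_le_sub_right h τ))) _

end IsExitFixedPoint

end Regularity

section Uniqueness

lemma Icc_subset_Ico0 {T : ℝ≥0∞} {τ : ℝ} (hτ : τ ∈ Ico0 T) : Icc 0 τ ⊆ Ico0 T := fun _ ht =>
  ⟨ht.1, (ENNReal.ofReal_le_ofReal ht.2).trans_lt hτ.2⟩

lemma isOpen_setOf_ofReal_lt (T : ℝ≥0∞) : IsOpen {τ : ℝ | ENNReal.ofReal τ < T} :=
  isOpen_Iio.preimage ENNReal.continuous_ofReal

lemma Ico0_mem_nhdsWithin {T : ℝ≥0∞} {τ : ℝ} (hτ : τ ∈ Ico0 T) : Ico0 T ∈ 𝓝[Ici 0] τ :=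
  inter_mem self_mem_nhdsWithin
    (mem_nhdsWithin_of_mem_nhds ((isOpen_setOf_ofReal_lt T).mem_nhds hτ.2))

lemma uniqueDiffOn_Ico0_prod_Icc (T : ℝ≥0∞) :
    UniqueDiffOn ℝ (Ico0 T ×ˢ Icc (0 : ℝ) 1) :=
  ((uniqueDiffOn_Ici 0).inter (isOpen_setOf_ofReal_lt T)).prod (uniqueDiffOn_Icc one_pos)

/-- `S` is the primitive on `[0, b]` of `n` that vanishes at `0`. -/
structure IsPrimitiveOn (S n : ℝ → ℝ) (b : ℝ) : Prop where
  apply_zero : S 0 = 0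
  hasDerivWithinAt : ∀ t ∈ Icc 0 b, HasDerivWithinAt S (n t) (Icc 0 b) t

lemma IsPrimitiveOn.mono {S n : ℝ → ℝ} {a b : ℝ} (hS : IsPrimitiveOn S n b) (hab : a ≤ b) :
    IsPrimitiveOn S n a where
  apply_zero := hS.apply_zero
  hasDerivWithinAt t ht := (hS.hasDerivWithinAt t ⟨ht.1, ht.2.trans hab⟩).mono
    (Icc_subset_Icc_right hab)

lemma IsPrimitiveOn.continuousOn {S n : ℝ → ℝ} {b : ℝ} (hS : IsPrimitiveOn S n b) :
    ContinuousOn S (Icc 0 b) :=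
  fun t ht => (hS.hasDerivWithinAt t ht).continuousWithinAt

lemma exists_isPrimitiveOn {n : ℝ → ℝ} {b : ℝ} (hb : 0 ≤ b) (hn : ContinuousOn n (Icc 0 b)) :
    ∃ S, IsPrimitiveOn S n b := by
  have hext : Continuous (IccExtend hb ((Icc 0 b).domRestrict n)) := hn.domRestrict.Icc_extend'
  refine ⟨fun t => ∫ r in (0 : ℝ)..t, IccExtend hb ((Icc 0 b).domRestrict n) r,
    intervalIntegral.integral_same, fun t ht => ?_⟩
  refine (hext.integral_hasStrictDerivAt 0 t).hasDerivAt.hasDerivWithinAt.congr_deriv ?_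
  rw [IccExtend_of_mem hb _ ht, domRestrict_apply]

lemma entryTime_add_self (a : ℝ) : entryTime a + a = max a 0 := by
  rw [entryTime, max_add, neg_add_cancel, zero_add, max_comm]

lemma entryTime_sub_le {τ η : ℝ} (hτ : 0 ≤ τ) (hη : 0 ≤ η) : entryTime (η - τ) ≤ τ :=
  max_le (by linarith) hτ

lemma mapsTo_characteristic {T : ℝ≥0∞} {τ η : ℝ} (hτ : τ ∈ Ico0 T) (hη : η ≤ 1) :
    MapsTo (fun s => (s, s + (η - τ))) (Icc (entryTime (η - τ)) τ)
      (Ico0 T ×ˢ Icc (0 : ℝ) 1) := fun s hs =>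
  ⟨Icc_subset_Ico0 hτ ⟨(le_max_right _ _).trans hs.1, hs.2⟩,
    by linarith [(le_max_left (-(η - τ)) 0).trans hs.1], by linarith [hs.2]⟩

variable {K Qinit n S : ℝ → ℝ} {ΦF : ℝ} {T : ℝ≥0∞} {Q : ℝ → ℝ → ℝ} {L : NNReal}

lemma hasDerivWithinAt_pdTau (hQ : ContDiffOn ℝ 1 (Function.uncurry Q) (Ico0 T ×ˢ Icc (0 : ℝ) 1))
    {τ η : ℝ} (hτ : τ ∈ Ico0 T) (hη : η ∈ Icc (0 : ℝ) 1) :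
    HasDerivWithinAt (fun s => Q s η) (pdTau Q τ η) (Ici 0) τ := by
  have hslice : ContDiffOn ℝ 1 (fun s => Q s η) (Ico0 T) :=
    hQ.comp (f := fun s => (s, η)) (contDiffOn_id.prodMk contDiffOn_const) fun s hs => ⟨hs, hη⟩
  exact ((hslice.differentiableOn one_ne_zero τ hτ).mono_of_mem_nhdsWithin
    (Ico0_mem_nhdsWithin hτ)).hasDerivWithinAt

lemma fderivWithin_uncurry_apply
    (hQ : ContDiffOn ℝ 1 (Function.uncurry Q) (Ico0 T ×ˢ Icc (0 : ℝ) 1)) {τ η : ℝ}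
    (hτ : τ ∈ Ico0 T) (hη : η ∈ Icc (0 : ℝ) 1) :
    fderivWithin ℝ (Function.uncurry Q) (Ico0 T ×ˢ Icc (0 : ℝ) 1) (τ, η) (1, 1) =
      pdTau Q τ η + pdEta Q τ η := by
  have hfd := (hQ.differentiableOn one_ne_zero (τ, η) ⟨hτ, hη⟩).hasFDerivWithinAt
  have htau := hfd.comp_hasDerivWithinAt (f := fun t => (t, η)) τ
    ((hasDerivWithinAt_id τ (Ico0 T)).prodMk (hasDerivWithinAt_const τ _ η))
    fun t ht => ⟨ht, hη⟩
  have heta := hfd.comp_hasDerivWithinAt (f := fun x => (τ, x)) η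
    ((hasDerivWithinAt_const η _ τ).prodMk (hasDerivWithinAt_id η (Icc 0 1)))
    fun x hx => ⟨hτ, hx⟩
  have htau' : pdTau Q τ η = _ :=
    (htau.mono_of_mem_nhdsWithin (Ico0_mem_nhdsWithin hτ)).derivWithin (uniqueDiffOn_Ici 0 τ hτ.1)
  have heta' : pdEta Q τ η = _ := heta.derivWithin (uniqueDiffOn_Icc one_pos η hη)
  rw [htau', heta', ← map_add, Prod.mk_add_mk, add_zero, zero_add]

namespace IsRelaxedSol

lemma apply_entryTime (h : IsRelaxedSol K ΦF T Qinit Q n) {τ η : ℝ} (hτ : τ ∈ Ico0 T)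
    (hη : η ∈ Icc (0 : ℝ) 1) :
    Q (entryTime (η - τ)) (entryTime (η - τ) + (η - τ)) = Qinit (max (η - τ) 0) := by
  have hentry : entryTime (η - τ) ∈ Ico0 T :=
    Icc_subset_Ico0 hτ ⟨le_max_right _ _, entryTime_sub_le hτ.1 hη.1⟩
  rw [entryTime_add_self]
  rcases le_total 0 (η - τ) with ha | ha
  · rw [entryTime_of_nonneg ha, max_eq_left ha, h.init _ ⟨ha, (sub_le_self η hτ.1).trans hη.2⟩]
  · rw [max_eq_right ha, h.bc _ hentry, h.init0]

variable (h : IsRelaxedSol K ΦF T Qinit Q n) (hK : LipschitzWith L K)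
include h hK

lemma fderivWithin_one_one {τ η : ℝ} (hτ : τ ∈ Ico0 T) (hη : η ∈ Icc (0 : ℝ) 1) :
    fderivWithin ℝ (Function.uncurry Q) (Ico0 T ×ˢ Icc (0 : ℝ) 1) (τ, η) (1, 1) =
      n τ + K (Q τ η) := by
  have hline : ContinuousOn (fun η : ℝ => (τ, η)) (Icc (0 : ℝ) 1) := by fun_prop
  have hmaps : MapsTo (fun η : ℝ => (τ, η)) (Icc (0 : ℝ) 1) (Ico0 T ×ˢ Icc (0 : ℝ) 1) :=
    fun _ hx => ⟨hτ, hx⟩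
  have hinterior : EqOn (fun η => fderivWithin ℝ (Function.uncurry Q) (Ico0 T ×ˢ Icc (0 : ℝ) 1)
      (τ, η) (1, 1)) (fun η => n τ + K (Q τ η)) (Ioo 0 1) := fun η hη =>
    (fderivWithin_uncurry_apply h.reg hτ (Ioo_subset_Icc_self hη)).trans (h.pde τ hτ η hη)
  exact hinterior.of_subset_closure
    (((h.reg.continuousOn_fderivWithin (uniqueDiffOn_Ico0_prod_Icc T) le_rfl).comp hline
      hmaps).clm_apply continuousOn_const)
    (continuousOn_const.add (hK.continuous.comp_continuousOn (h.reg.continuousOn.comp hline hmaps)))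
    Ioo_subset_Icc_self (closure_Ioo zero_ne_one).ge hη

lemma pdTau_one {τ : ℝ} (hτ : τ ∈ Ico0 T) : pdTau Q τ 1 = K (Q τ 1) - K ΦF := by
  have h1 : (1 : ℝ) ∈ Icc (0 : ℝ) 1 := right_mem_Icc.2 zero_le_one
  have := (fderivWithin_uncurry_apply h.reg hτ h1).symm.trans (h.fderivWithin_one_one hK hτ h1)
  linarith [h.Ndef τ hτ]

/-- At the exit the definition of `N` turns the equation into `∂_τ Q = K(Q) - K(Φ_F)`, of which
`Φ_F` is an equilibrium. -/
lemma apply_one {τ : ℝ} (hτ : τ ∈ Ico0 T) : Q τ 1 = ΦF := by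
  have hderiv : ∀ t ∈ Icc 0 τ, HasDerivWithinAt (fun s => Q s 1 - ΦF) (K (Q t 1) - K ΦF)
      (Ici 0) t := fun t ht => by
    have ht' := Icc_subset_Ico0 hτ ht
    rw [← h.pdTau_one hK ht']
    exact (hasDerivWithinAt_pdTau h.reg ht' (right_mem_Icc.2 zero_le_one)).sub_const ΦF
  have hgrowth := norm_le_exp_of_norm_deriv_right_le (lt_contractionRate L) le_rfl hτ.1
    (fun t ht => (hderiv t ht).continuousWithinAt.mono Icc_subset_Ici_self)
    (fun t ht => (hderiv t (Ico_subset_Icc_self ht)).mono (Ici_subset_Ici.2 ht.1))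
    (fun t _ => by simpa [Real.dist_eq] using hK.dist_le_mul (Q t 1) ΦF) (δ := 0)
    (by simp [h.init, h.init1])
  rw [zero_div, zero_mul, mul_zero, add_zero] at hgrowth
  exact sub_eq_zero.1 (norm_le_zero_iff.1 hgrowth)

lemma isIntegralCurveOn_sub_primitive {τ η : ℝ} (hτ : τ ∈ Ico0 T) (hη : η ≤ 1)
    (hS : IsPrimitiveOn S n τ) :
    IsIntegralCurveOn (fun s => Q s (s + (η - τ)) - S s) (shiftedField K S)
      (Icc (entryTime (η - τ)) τ) := fun s hs => by
  have hmaps := mapsTo_characteristic hτ hη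
  have hsub : Icc (entryTime (η - τ)) τ ⊆ Icc 0 τ := Icc_subset_Icc_left (le_max_right _ _)
  have hQ := (h.reg.differentiableOn one_ne_zero _ (hmaps hs)).hasFDerivWithinAt
    |>.comp_hasDerivWithinAt s
      ((hasDerivWithinAt_id s _).prodMk ((hasDerivWithinAt_id s _).add_const _)) hmaps
  refine (hQ.sub ((hS.hasDerivWithinAt s (hsub hs)).mono hsub)).congr_deriv ?_
  rw [h.fderivWithin_one_one hK (hmaps hs).1 (hmaps hs).2, shiftedField, add_sub_cancel_left,
    add_sub_cancel]

end IsRelaxedSol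

namespace IsRelaxedSol

variable {n₁ n₂ S₁ S₂ : ℝ → ℝ} {Q₁ Q₂ : ℝ → ℝ → ℝ} {T₁ T₂ : ℝ≥0∞} {τ : ℝ}
  (h₁ : IsRelaxedSol K ΦF T₁ Qinit Q₁ n₁) (h₂ : IsRelaxedSol K ΦF T₂ Qinit Q₂ n₂)
  (hK : LipschitzWith L K) (hτ₁ : τ ∈ Ico0 T₁) (hτ₂ : τ ∈ Ico0 T₂)
include h₁ h₂ hK hτ₁ hτ₂

lemma eqOn_of_isPrimitiveOn (hS₁ : IsPrimitiveOn S₁ n₁ τ) (hS₂ : IsPrimitiveOn S₂ n₂ τ) :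
    EqOn S₁ S₂ (Icc 0 τ) := by
  refine eqOn_Icc_of_causal_contraction (w := fun t => exp (contractionRate L * t)) (r := 1 / 2)
    hS₁.continuousOn hS₂.continuousOn (by fun_prop) (fun t => exp_pos _) (by norm_num)
    fun M t ht hM => ?_
  have hentry : entryTime (1 - t) = max (t - 1) 0 := by rw [entryTime, neg_sub]
  have h1 : (1 : ℝ) ∈ Icc (0 : ℝ) 1 := right_mem_Icc.2 zero_le_one
  have ht₁ := Icc_subset_Ico0 hτ₁ ht
  have ht₂ := Icc_subset_Ico0 hτ₂ ht
  have hexit := abs_exit_sub_le hK ht.1 (c := Qinit (max (1 - t) 0))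
    (hentry ▸ h₁.isIntegralCurveOn_sub_primitive hK ht₁ le_rfl (hS₁.mono ht.2))
    (hentry ▸ h₂.isIntegralCurveOn_sub_primitive hK ht₂ le_rfl (hS₂.mono ht.2))
    (by rw [← hentry, h₁.apply_entryTime ht₁ h1, hS₁.apply_zero, sub_zero])
    (by rw [← hentry, h₂.apply_entryTime ht₂ h1, hS₂.apply_zero, sub_zero]) hM
  rwa [add_sub_cancel, h₁.apply_one hK ht₁, h₂.apply_one hK ht₂, sub_sub_sub_cancel_left,
    abs_sub_comm] at hexit

theorem eqOn : EqOn (Q₁ τ) (Q₂ τ) (Icc 0 1) := by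
  obtain ⟨S₁, hS₁⟩ := exists_isPrimitiveOn hτ₁.1 (h₁.Ncont.mono (Icc_subset_Ico0 hτ₁))
  obtain ⟨S₂, hS₂⟩ := exists_isPrimitiveOn hτ₂.1 (h₂.Ncont.mono (Icc_subset_Ico0 hτ₂))
  have hS := h₁.eqOn_of_isPrimitiveOn h₂ hK hτ₁ hτ₂ hS₁ hS₂
  intro η hη
  have hentry : entryTime (η - τ) ∈ Icc 0 τ :=
    ⟨le_max_right _ _, entryTime_sub_le hτ₁.1 hη.1⟩
  have hstable := abs_sub_le_of_isIntegralCurveOn_shiftedField hK (lt_contractionRate L) le_rfl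
    hentry.2 (h₁.isIntegralCurveOn_sub_primitive hK hτ₁ hη.2 hS₁)
    (h₂.isIntegralCurveOn_sub_primitive hK hτ₂ hη.2 hS₂) (δ := 0)
    (fun t ht => by simp [hS ⟨hentry.1.trans ht.1, ht.2⟩])
    (by rw [h₁.apply_entryTime hτ₁ hη, h₂.apply_entryTime hτ₂ hη,
          hS hentry, sub_self, abs_zero])
  rw [add_sub_cancel, hS ⟨hτ₁.1, le_rfl⟩, sub_sub_sub_cancel_right, mul_zero, mul_zero, zero_div,
    zero_mul, add_zero] at hstable
  exact sub_eq_zero.1 (abs_nonpos_iff.1 hstable)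

theorem ntil_eq : n₁ τ = n₂ τ := by
  have hQ := h₁.eqOn h₂ hK hτ₁ hτ₂
  rw [h₁.Ndef τ hτ₁, h₂.Ndef τ hτ₂, pdEta, pdEta,
    derivWithin_congr hQ (hQ (right_mem_Icc.2 zero_le_one))]

end IsRelaxedSol

end Uniqueness

section MaximalTime

/-- The supremum of the `T ∈ [0, ∞]` such that `n > 0` on `[0, T)`: the first time at which `n`
stops being positive. -/
def positivityTime (n : ℝ → ℝ) : ℝ≥0∞ := sSup {T | ∀ τ ∈ Ico0 T, 0 < n τ}

variable {n : ℝ → ℝ}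

lemma pos_of_mem_Ico0_positivityTime {τ : ℝ} (hτ : τ ∈ Ico0 (positivityTime n)) : 0 < n τ := by
  obtain ⟨T, hT, hlt⟩ := lt_sSup_iff.1 hτ.2
  exact hT τ ⟨hτ.1, hlt⟩

lemma le_positivityTime {T : ℝ≥0∞} (hT : ∀ τ ∈ Ico0 T, 0 < n τ) : T ≤ positivityTime n :=
  le_sSup hT

lemma mem_Ico0_ofReal {τ b : ℝ} : τ ∈ Ico0 (ENNReal.ofReal b) ↔ τ ∈ Ico 0 b :=
  and_congr_right fun h => ENNReal.ofReal_lt_ofReal_iff_of_nonneg h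

lemma ofReal_lt_positivityTime (hn : ContinuousOn n (Ici 0)) {b : ℝ} (hb : 0 ≤ b)
    (hpos : ∀ τ ∈ Icc 0 b, 0 < n τ) : ENNReal.ofReal b < positivityTime n := by
  have hright : ∀ᶠ τ in 𝓝[≥] b, 0 < n τ :=
    ((hn b hb).mono (Ici_subset_Ici.2 hb)).eventually_const_lt (hpos b ⟨hb, le_rfl⟩)
  obtain ⟨c, hbc, hc⟩ := mem_nhdsGE_iff_exists_Ico_subset.1 hright
  refine ((ENNReal.ofReal_lt_ofReal_iff_of_nonneg hb).2 hbc).trans_le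
    (le_positivityTime fun τ hτ => ?_)
  rw [mem_Ico0_ofReal] at hτ
  rcases le_total τ b with h | h
  · exact hpos τ ⟨hτ.1, h⟩
  · exact hc ⟨h, hτ.2⟩

lemma positivityTime_pos (hn : ContinuousOn n (Ici 0)) (h0 : 0 < n 0) : 0 < positivityTime n := by
  simpa using ofReal_lt_positivityTime hn le_rfl (by simpa using h0)

lemma tendsto_one_div_positivityTime (hn : ContinuousOn n (Ici 0)) (h0 : 0 < n 0)
    (hfin : positivityTime n < ⊤) :
    Tendsto (fun τ => 1 / n τ) (𝓝[<] (positivityTime n).toReal) atTop := by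
  set b := (positivityTime n).toReal
  have hofReal : ENNReal.ofReal b = positivityTime n := ENNReal.ofReal_toReal hfin.ne
  have hb : 0 < b := ENNReal.toReal_pos (positivityTime_pos hn h0).ne' hfin.ne
  have hpos : ∀ τ ∈ Ico 0 b, 0 < n τ := fun τ hτ =>
    pos_of_mem_Ico0_positivityTime (hofReal ▸ mem_Ico0_ofReal.2 hτ)
  have hpos_left : ∀ᶠ τ in 𝓝[<] b, n τ ∈ Ioi 0 :=
    mem_of_superset (Ico_mem_nhdsLT hb) hpos
  have hlim : Tendsto n (𝓝[<] b) (𝓝 (n b)) :=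
    ((hn b hb.le).continuousAt (Ici_mem_nhds hb)).tendsto.mono_left nhdsWithin_le_nhds
  have hzero : n b = 0 := by
    refine le_antisymm (not_lt.1 fun hnb => ?_)
      (ge_of_tendsto hlim (hpos_left.mono fun _ h => h.le))
    refine (ofReal_lt_positivityTime hn hb.le fun τ hτ => ?_).ne hofReal
    rcases hτ.2.eq_or_lt with rfl | hlt
    · exact hnb
    · exact hpos τ ⟨hτ.1, hlt⟩
  simp only [one_div]
  exact tendsto_inv_nhdsGT_zero.comp (tendsto_nhdsWithin_iff.2 ⟨hzero ▸ hlim, hpos_left⟩)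

end MaximalTime

section WellPosedness

variable {K Qinit n N : ℝ → ℝ} {ΦF : ℝ} {T : ℝ≥0∞} {Q : ℝ → ℝ → ℝ}

lemma IsQSol.isRelaxedSol (h : IsQSol K ΦF T Qinit Q N) :
    IsRelaxedSol K ΦF T Qinit Q (fun τ => 1 / N τ) where
  initReg := h.initReg
  init0 := h.init0
  init1 := h.init1
  reg := h.reg
  Ncont := continuousOn_const.div h.Ncont fun τ hτ => (h.Npos τ hτ).ne'
  pde := h.pde
  bc := h.bc
  Ndef := h.Ndef
  init := h.init

lemma IsRelaxedSol.isQSol (h : IsRelaxedSol K ΦF ⊤ Qinit Q n) (hA2 : A2 K ΦF Qinit)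
    (hpos : ∀ τ ∈ Ico0 T, 0 < n τ) (hmono : ∀ τ ∈ Ico0 T, MonotoneOn (Q τ) (Icc 0 1)) :
    IsQSol K ΦF T Qinit Q (fun τ => 1 / n τ) := by
  have hsub : Ico0 T ⊆ Ico0 ⊤ := fun τ hτ => ⟨hτ.1, ENNReal.ofReal_lt_top⟩
  exact {
    initReg := h.initReg
    initMono := hA2.mono
    init0 := h.init0
    init1 := h.init1
    initDeriv := hA2.deriv1
    reg := h.reg.mono (prod_mono_left hsub)
    mono := hmono
    Ncont := continuousOn_const.div (h.Ncont.mono hsub) fun τ hτ => (hpos τ hτ).ne'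
    Npos := fun τ hτ => one_div_pos.2 (hpos τ hτ)
    pde := fun τ hτ η hη => by rw [one_div_one_div, h.pde τ (hsub hτ) η hη]
    bc := fun τ hτ => h.bc τ (hsub hτ)
    Ndef := fun τ hτ => by rw [one_div_one_div, h.Ndef τ (hsub hτ)]
    init := h.init
    constraint := fun τ hτ => sub_pos.1 (h.Ndef τ (hsub hτ) ▸ hpos τ hτ) }

lemma A2.isCompatibleData (hA2 : A2 K ΦF Qinit) (hK : ContDiff ℝ 1 K) {C : NNReal}
    (hC : ∀ x, ‖deriv K x‖₊ ≤ C) : IsCompatibleData K ΦF Qinit C where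
  smooth := hK
  lipschitz := lipschitzWith_of_nnnorm_deriv_le (hK.differentiable one_ne_zero) hC
  initReg := hA2.reg
  init0 := hA2.init0
  init1 := hA2.init1
  compat := hA2.compat

theorem stmt2_general {ΦF : ℝ} {K : ℝ → ℝ} (hK : ContDiff ℝ 1 K)
    (hK' : ∃ C : ℝ, ∀ x : ℝ, |deriv K x| ≤ C) (hK0 : 0 ≤ K 0) {Qinit : ℝ → ℝ}
    (hA2 : A2 K ΦF Qinit) :
    ∃ (τstar : ℝ≥0∞) (Q : ℝ → ℝ → ℝ) (N : ℝ → ℝ),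
      0 < τstar ∧
      IsQSol K ΦF τstar Qinit Q N ∧
      (∀ (T : ℝ≥0∞) (Q' : ℝ → ℝ → ℝ) (N' : ℝ → ℝ),
        IsQSol K ΦF T Qinit Q' N' →
          T ≤ τstar ∧
          (∀ τ ∈ Ico0 T, ∀ η ∈ Icc (0 : ℝ) 1, Q' τ η = Q τ η) ∧
          (∀ τ ∈ Ico0 T, N' τ = N τ)) ∧
      (τstar < ⊤ → Tendsto N (𝓝[<] τstar.toReal) atTop) := by
  obtain ⟨C, hC⟩ := hK'
  have hD := hA2.isCompatibleData hK (C := C.toNNReal) fun x =>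
    NNReal.le_toNNReal_of_coe_le (hC x)
  obtain ⟨S, hS⟩ := hD.exists_isExitFixedPoint
  set n := derivWithin S (Ici 0)
  have hsol : IsRelaxedSol K ΦF ⊤ Qinit (charSol K Qinit S) n := hS.isRelaxedSol hD
  have hn : ContinuousOn n (Ici 0) := hS.continuousOn_derivWithin hD
  have hn0 : 0 < n 0 := (sub_pos.2 hA2.deriv1).trans_eq (hS.derivWithin_zero hD).symm
  have hpos : ∀ τ ∈ Ico0 (positivityTime n), 0 < n τ := fun _ => pos_of_mem_Ico0_positivityTime
  have hmono : ∀ τ ∈ Ico0 (positivityTime n), MonotoneOn (charSol K Qinit S τ) (Icc 0 1) :=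
    fun τ hτ => hS.monotoneOn_charSol hD hK0 hA2.mono hτ.1 fun t ht =>
      (hpos t (Icc_subset_Ico0 hτ ht)).le
  refine ⟨positivityTime n, charSol K Qinit S, fun τ => 1 / n τ, positivityTime_pos hn hn0,
    hsol.isQSol hA2 hpos hmono, fun T Q' N' h => ?_, tendsto_one_div_positivityTime hn hn0⟩
  have htop : ∀ τ ∈ Ico0 T, τ ∈ Ico0 ⊤ := fun τ hτ => ⟨hτ.1, ENNReal.ofReal_lt_top⟩
  have hN : ∀ τ ∈ Ico0 T, 1 / N' τ = n τ := fun τ hτ =>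
    h.isRelaxedSol.ntil_eq hsol hD.lipschitz hτ (htop τ hτ)
  exact ⟨le_positivityTime fun τ hτ => hN τ hτ ▸ one_div_pos.2 (h.Npos τ hτ),
    fun τ hτ => h.isRelaxedSol.eqOn hsol hD.lipschitz hτ (htop τ hτ),
    fun τ hτ => by simp only [← hN τ hτ, one_div_one_div]⟩

end WellPosedness

/-- Theorem 3.1: well-posedness of the Q-system up to a maximal time, with blow-up of the
firing rate at the maximal time when it is finite. -/
theorem stmt2 (ΦF : ℝ) (hΦF : 0 < ΦF) (K : ℝ → ℝ) (hK : KAssump K ΦF)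
    (Qinit : ℝ → ℝ) (hA2 : A2 K ΦF Qinit) :
    ∃ (τstar : ℝ≥0∞) (Q : ℝ → ℝ → ℝ) (N : ℝ → ℝ),
      0 < τstar ∧
      IsQSol K ΦF τstar Qinit Q N ∧
      (∀ (T : ℝ≥0∞) (Q' : ℝ → ℝ → ℝ) (N' : ℝ → ℝ),
        IsQSol K ΦF T Qinit Q' N' →
          T ≤ τstar ∧
          (∀ τ ∈ Ico0 T, ∀ η ∈ Icc (0 : ℝ) 1, Q' τ η = Q τ η) ∧
          (∀ τ ∈ Ico0 T, N' τ = N τ)) ∧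
      (τstar < ⊤ → Tendsto N (𝓝[<] τstar.toReal) atTop) := by
  exact stmt2_general (hK.smooth.of_le one_le_two) hK.bdd1 (hK.pos 0 ⟨le_rfl, hΦF.le⟩).le hA2
end
end

section
/- Let (Q_init,ε)_{ε≥0} be a family of initial data, each satisfying Assumption (A2), such that Q_init,ε → Q_init,0 in C¹([0,1]) as ε → 0⁺. Let (Q_ε, N_ε) denote the classical solution of the Q-system with initial datum Q_init,ε, with maximal existence time τ*_ε. Then liminf_{ε→0⁺} τ*_ε ≥ τ*_0, and for every 0 < T < τ*_0: N_ε → N_0 in C([0,T]) as ε → 0⁺, and Q_ε(T,·) → Q_0(T,·) in C¹([0,1]) as ε → 0⁺. -/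
open Real Set MeasureTheory Filter Topology
open scoped ENNReal

noncomputable section

/-!
Write `n = 1 / N`. Along a characteristic `τ - η = σ` the equation is the ODE `y' = n + K(y)`, so
`Q` and `∂_η Q` are explicit functionals of `n` and of the initial slope `Q_init'`. The boundary
condition then becomes a fixed-point equation `n(τ) = ∂_η Q(τ, 1) - K(Φ_F)` whose right-hand side
depends on `n` only through the delayed value `n(τ - 1)` and an integral of `n` over the past. In an
exponentially weighted norm it is a contraction, hence solvable on every `[0, T]` by some `n` of
possibly varying sign, and `n` is Lipschitz in the initial slope.

A classical solution is the same thing as such an `n` that stays positive. For `T < τ*₀` the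
limiting `n` is bounded below on `[0, T]` by a positive constant, so nearby data have positive `n`
on `[0, T]` as well: their solutions live at least until `T` and are close to the limiting one.
-/

open scoped NNReal BoundedContinuousFunction

namespace QSystem

section FixedPoint

variable {α E : Type*} [TopologicalSpace α] [NormedAddCommGroup E] [NormedSpace ℝ E]

lemma exists_boundedContinuousFunction_eq_smul {w : α → ℝ} {h : α → E} {S : ℝ}
    (hw : Continuous w) (hw0 : ∀ t, 0 < w t) (hh : Continuous h)
    (hS : ∀ t, ‖h t‖ ≤ S * w t) : ∃ u : α →ᵇ E, ∀ t, h t = w t • u t := by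
  refine ⟨.ofNormedAddCommGroup (fun t ↦ (w t)⁻¹ • h t) ((hw.inv₀ fun t ↦ (hw0 t).ne').smul hh) S
    fun t ↦ ?_, fun t ↦ (smul_inv_smul₀ (hw0 t).ne' _).symm⟩
  rw [norm_smul, norm_inv, Real.norm_of_nonneg (hw0 t).le, inv_mul_le_iff₀ (hw0 t), mul_comm]
  exact hS t

/-- The Banach fixed point theorem for the distance `sup ‖f t - g t‖ / w t`, on the functions at
finite distance from `f₀`. -/
lemma exists_fixedPoint_of_weighted_contraction [CompleteSpace E] {w : α → ℝ}
    (hw : Continuous w) (hw0 : ∀ t, 0 < w t) {s : Set (α → E)} (hs : IsClosed s)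
    {F : C(α, E) → C(α, E)} (hF : ∀ f : C(α, E), ⇑f ∈ s → ⇑(F f) ∈ s)
    (hcontr : ∀ f g : C(α, E), ⇑f ∈ s → ⇑g ∈ s → ∀ S : ℝ,
      (∀ t, ‖f t - g t‖ ≤ S * w t) → ∀ t, ‖F f t - F g t‖ ≤ S / 2 * w t)
    {f₀ : C(α, E)} (hf₀ : ⇑f₀ ∈ s) {S₀ : ℝ} (hS₀ : ∀ t, ‖F f₀ t - f₀ t‖ ≤ S₀ * w t) :
    ∃ f : C(α, E), ⇑f ∈ s ∧ F f = f := by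
  let f (u : α →ᵇ E) : C(α, E) := ⟨fun t ↦ f₀ t + w t • u t, by fun_prop⟩
  let X : Set (α →ᵇ E) := {u | ⇑(f u) ∈ s}
  have hX : IsClosed X := hs.preimage <| continuous_pi fun t ↦
    continuous_const.add ((continuous_eval_const t).const_smul (w t))
  have norm_f_sub (u v : α →ᵇ E) (t : α) : ‖f u t - f v t‖ = w t * ‖u t - v t‖ := by
    simp [f, ← smul_sub, norm_smul, abs_of_pos (hw0 t)]
  have hf_zero : f 0 = f₀ := by ext t; simp [f]
  have exists_profile (u : X) : ∃ v : α →ᵇ E, f v = F (f u) := by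
    have hbound (t : α) : ‖F (f u) t - f₀ t‖ ≤ (‖(u : α →ᵇ E)‖ / 2 + S₀) * w t := by
      refine (norm_sub_le_norm_sub_add_norm_sub _ (F f₀ t) _).trans ?_
      rw [add_mul]
      refine add_le_add (hcontr _ _ u.2 hf₀ _ (fun t ↦ ?_) t) (hS₀ t)
      rw [← hf_zero, norm_f_sub, mul_comm]
      gcongr
      · exact (hw0 t).le
      · simpa using (u : α →ᵇ E).norm_coe_le_norm t
    obtain ⟨v, hv⟩ := exists_boundedContinuousFunction_eq_smul hw hw0 (by fun_prop) hbound
    exact ⟨v, by ext t; simp [f, ← hv]⟩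
  choose Φ hΦ using exists_profile
  have hmem (u : X) : Φ u ∈ X := by simpa [X, hΦ] using hF _ u.2
  let Ψ (u : X) : X := ⟨Φ u, hmem u⟩
  have hΨ : ContractingWith (1 / 2) Ψ := by
    refine ⟨by norm_num [← NNReal.coe_lt_coe], LipschitzWith.of_dist_le_mul fun u v ↦ ?_⟩
    refine (BoundedContinuousFunction.dist_le (by positivity)).2 fun t ↦ ?_
    have := hcontr _ _ u.2 v.2 (dist u v) (fun t ↦ ?_) t
    · rw [← hΦ, ← hΦ, norm_f_sub, mul_comm] at this
      rw [dist_eq_norm]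
      simpa [div_eq_inv_mul] using le_of_mul_le_mul_right this (hw0 t)
    · rw [norm_f_sub, mul_comm, ← dist_eq_norm]
      exact mul_le_mul_of_nonneg_right (BoundedContinuousFunction.dist_coe_le_dist t) (hw0 t).le
  have : CompleteSpace X := hX.completeSpace_coe
  have : Nonempty X := ⟨0, by simpa [X, hf_zero] using hf₀⟩
  obtain ⟨u, hu⟩ : ∃ u : X, Ψ u = u := ⟨_, hΨ.fixedPoint_isFixedPt⟩
  exact ⟨f u, u.2, by rw [← hΦ]; exact congrArg (fun u : X ↦ f u) hu⟩

end FixedPoint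

section GlobalFlow

variable {E : Type*} [NormedAddCommGroup E] [NormedSpace ℝ E]

/-- The integral of `ρ cosh R` is `sinh R`, which is where the weight `cosh R` of the Picard
iteration comes from. -/
lemma norm_integral_le_mul_cosh {g : ℝ → E} {ρ : ℝ → ℝ} (hρ : Continuous ρ) {a S : ℝ}
    (hS : 0 ≤ S) (hg : ∀ s, ‖g s‖ ≤ S * (ρ s * cosh (∫ r in a..s, ρ r))) (t : ℝ) :
    ‖∫ s in a..t, g s‖ ≤ S * cosh (∫ r in a..t, ρ r) := by
  have : Continuous fun t ↦ ∫ r in a..t, ρ r :=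
    intervalIntegral.continuous_primitive (fun _ _ ↦ hρ.intervalIntegrable _ _) a
  have hρcosh : Continuous fun s ↦ ρ s * cosh (∫ r in a..s, ρ r) := by fun_prop
  have hsinh : ∫ s in a..t, ρ s * cosh (∫ r in a..s, ρ r) = sinh (∫ r in a..t, ρ r) := by
    rw [intervalIntegral.integral_eq_sub_of_hasDerivAt (f := fun t ↦ sinh (∫ r in a..t, ρ r))
      (fun s _ ↦ by simpa [mul_comm] using (hρ.integral_hasStrictDerivAt a s).hasDerivAt.sinh)
      (hρcosh.intervalIntegrable _ _)]
    simp
  calc ‖∫ s in a..t, g s‖ ≤ |∫ s in a..t, S * (ρ s * cosh (∫ r in a..s, ρ r))| :=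
        intervalIntegral.norm_integral_le_abs_of_norm_le (Eventually.of_forall hg)
          ((hρcosh.const_mul S).intervalIntegrable _ _)
    _ = S * |sinh (∫ r in a..t, ρ r)| := by
        rw [intervalIntegral.integral_const_mul, hsinh, abs_mul, abs_of_nonneg hS]
    _ ≤ S * cosh (∫ r in a..t, ρ r) := by
        rw [abs_sinh, ← cosh_abs]
        gcongr
        exact (sinh_lt_cosh _).le

lemma exists_hasDerivAt_of_lipschitzWith [CompleteSpace E] {v : ℝ → E → E} {L : ℝ≥0}
    (hv : Continuous (Function.uncurry v)) (hL : ∀ t, LipschitzWith L (v t)) (a : ℝ) (x₀ : E) :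
    ∃ y : ℝ → E, y a = x₀ ∧ ∀ t, HasDerivAt y (v t (y t)) t := by
  have hvf (f : C(ℝ, E)) : Continuous fun s ↦ v s (f s) :=
    hv.comp (continuous_id.prodMk f.continuous)
  let F (f : C(ℝ, E)) : C(ℝ, E) := ⟨fun t ↦ x₀ + ∫ s in a..t, v s (f s),
    continuous_const.add (intervalIntegral.continuous_primitive
      (fun _ _ ↦ (hvf f).intervalIntegrable _ _) a)⟩
  let ρ (s : ℝ) : ℝ := 2 * L + ‖v s x₀‖
  have hρ : Continuous ρ := continuous_const.add (hvf (.const ℝ x₀)).norm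
  have hw : Continuous fun t ↦ cosh (∫ r in a..t, ρ r) :=
    continuous_cosh.comp (intervalIntegral.continuous_primitive
      (fun _ _ ↦ hρ.intervalIntegrable _ _) a)
  have hcontr (f g : C(ℝ, E)) (S : ℝ) (hS : ∀ t, ‖f t - g t‖ ≤ S * cosh (∫ r in a..t, ρ r))
      (t : ℝ) : ‖F f t - F g t‖ ≤ S / 2 * cosh (∫ r in a..t, ρ r) := by
    have hS0 : 0 ≤ S := by simpa using (norm_nonneg _).trans (hS a)
    have hF_sub : F f t - F g t = ∫ s in a..t, v s (f s) - v s (g s) := by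
      simp [F, intervalIntegral.integral_sub ((hvf f).intervalIntegrable _ _)
        ((hvf g).intervalIntegrable _ _)]
    rw [hF_sub]
    refine norm_integral_le_mul_cosh hρ (by positivity) (fun s ↦ ?_) t
    have h2L : 2 * (L : ℝ) ≤ ρ s := le_add_of_nonneg_right (norm_nonneg _)
    calc ‖v s (f s) - v s (g s)‖ ≤ L * ‖f s - g s‖ := (hL s).norm_sub_le _ _
      _ ≤ L * (S * cosh (∫ r in a..s, ρ r)) := by gcongr; exact hS s
      _ = S / 2 * (2 * L * cosh (∫ r in a..s, ρ r)) := by ring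
      _ ≤ S / 2 * (ρ s * cosh (∫ r in a..s, ρ r)) := by gcongr
  have hstart (t : ℝ) :
      ‖F (.const ℝ x₀) t - ContinuousMap.const ℝ x₀ t‖ ≤ 1 * cosh (∫ r in a..t, ρ r) := by
    rw [show F (.const ℝ x₀) t - ContinuousMap.const ℝ x₀ t = ∫ s in a..t, v s x₀ by simp [F]]
    refine norm_integral_le_mul_cosh hρ zero_le_one (fun s ↦ ?_) t
    rw [one_mul]
    exact (le_add_of_nonneg_left (by positivity)).trans
      (le_mul_of_one_le_right (by positivity) (one_le_cosh _))
  obtain ⟨f, -, hfix⟩ := exists_fixedPoint_of_weighted_contraction hw (fun t ↦ cosh_pos _)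
    isClosed_univ (fun _ _ ↦ mem_univ _) (fun f g _ _ ↦ hcontr f g) (mem_univ _) hstart
  have hf (t : ℝ) : f t = x₀ + ∫ s in a..t, v s (f s) := (DFunLike.congr_fun hfix t).symm
  exact ⟨f, by simp [hf a], fun t ↦ (((hvf f).integral_hasStrictDerivAt a t).hasDerivAt.const_add
    x₀).congr_of_eventuallyEq (.of_forall hf)⟩

end GlobalFlow

section Trajectories

lemma abs_integral_le_mul_abs_sub {m : ℝ → ℝ} {C : ℝ} (hm : ∀ t, |m t| ≤ C) (a b : ℝ) :
    |∫ s in a..b, m s| ≤ C * |b - a| :=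
  intervalIntegral.norm_integral_le_of_norm_le_const (f := m) fun t _ ↦ hm t

lemma eq_exp_integral_mul_add_integral {m g f : ℝ → ℝ} {a b : ℝ} (hm : Continuous m)
    (hg : Continuous g) (hf : Continuous f)
    (hf' : ∀ t ∈ Ioo (min a b) (max a b), HasDerivAt f (m t * f t + g t) t) :
    f b = exp (∫ s in a..b, m s) * f a + ∫ s in a..b, exp (∫ r in s..b, m r) * g s := by
  have hprim (t : ℝ) : HasDerivAt (fun t ↦ ∫ s in t..b, m s) (-m t) t := by
    simpa only [intervalIntegral.integral_symm b] using
      (hm.integral_hasStrictDerivAt b t).hasDerivAt.fun_neg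
  have hprim_cont : Continuous fun t ↦ ∫ s in t..b, m s :=
    continuous_iff_continuousAt.2 fun t ↦ (hprim t).continuousAt
  have hderiv (t : ℝ) (ht : t ∈ Ioo (min a b) (max a b)) :
      HasDerivAt (fun t ↦ exp (∫ s in t..b, m s) * f t) (exp (∫ s in t..b, m s) * g t) t :=
    ((hprim t).exp.mul (hf' t ht)).congr_deriv (by ring)
  have := intervalIntegral.integral_eq_sub_of_hasDeriv_right
    (f := fun t ↦ exp (∫ s in t..b, m s) * f t) (by fun_prop)
    (fun t ht ↦ (hderiv t ht).hasDerivWithinAt)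
    (Continuous.intervalIntegrable (by fun_prop) a b)
  simp [this]

lemma hasDerivAt_of_sub_eq_mul {f h g : ℝ → ℝ} {a h' : ℝ} (hf : ∀ x, f x - f a = h x * g x)
    (hh : HasDerivAt h h' a) (ha : h a = 0) (hg : ContinuousAt g a) :
    HasDerivAt f (h' * g a) a := by
  have hslope : slope f a = fun x ↦ slope h a x * g x := by
    ext x
    simp [slope_def_field, hf, ha, div_mul_eq_mul_div]
  rw [hasDerivAt_iff_tendsto_slope] at hh ⊢
  exact hslope ▸ hh.mul (hg.tendsto.mono_left nhdsWithin_le_nhds)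

/-- The mean value of `K'` on the segment from `x` to `y`. It turns the difference of two
solutions of a scalar equation into the solution of a linear one. -/
def meanSlope (K : ℝ → ℝ) (x y : ℝ) : ℝ := ∫ θ in (0 : ℝ)..1, deriv K (x + θ * (y - x))

lemma meanSlope_self (K : ℝ → ℝ) (x : ℝ) : meanSlope K x x = deriv K x := by simp [meanSlope]

lemma continuous_meanSlope {K : ℝ → ℝ} (hK : ContDiff ℝ 1 K) :
    Continuous fun p : ℝ × ℝ ↦ meanSlope K p.1 p.2 := by
  have := hK.continuous_deriv_one
  exact intervalIntegral.continuous_parametric_intervalIntegral_of_continuous' (by fun_prop) 0 1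

lemma meanSlope_mul_sub {K : ℝ → ℝ} (hK : ContDiff ℝ 1 K) (x y : ℝ) :
    meanSlope K x y * (y - x) = K y - K x := by
  have hderiv (θ : ℝ) :
      HasDerivAt (fun θ ↦ K (x + θ * (y - x))) (deriv K (x + θ * (y - x)) * (y - x)) θ :=
    (hK.differentiable one_ne_zero _).hasDerivAt.comp θ
      (by simpa using ((hasDerivAt_id θ).mul_const (y - x)).const_add x)
  have := hK.continuous_deriv_one
  rw [meanSlope, ← intervalIntegral.integral_mul_const,
    intervalIntegral.integral_eq_sub_of_hasDerivAt (fun θ _ ↦ hderiv θ)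
      (Continuous.intervalIntegrable (by fun_prop) _ _)]
  simp

variable {K : ℝ → ℝ} {L : ℝ≥0}

lemma abs_deriv_le (hL : LipschitzWith L K) (x : ℝ) : |deriv K x| ≤ L :=
  norm_deriv_le_of_lipschitz hL

lemma abs_meanSlope_le (hL : LipschitzWith L K) (x y : ℝ) : |meanSlope K x y| ≤ L := by
  simpa [meanSlope] using
    abs_integral_le_mul_abs_sub (fun θ ↦ abs_deriv_le hL (x + θ * (y - x))) 0 1

/-- `y` is a continuous function satisfying the characteristic equation `y' = n + K(y)` at the
points of `s`. -/
structure IsTrajectoryOn (K n y : ℝ → ℝ) (s : Set ℝ) : Prop where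
  continuous : Continuous y
  hasDerivAt : ∀ t ∈ s, HasDerivAt y (n t + K (y t)) t

lemma IsTrajectoryOn.mono {n y : ℝ → ℝ} {s t : Set ℝ} (hy : IsTrajectoryOn K n y t) (hst : s ⊆ t) :
    IsTrajectoryOn K n y s :=
  ⟨hy.continuous, fun x hx ↦ hy.hasDerivAt x (hst hx)⟩

variable {n n₁ n₂ : C(ℝ, ℝ)} {y₁ y₂ : ℝ → ℝ} {a b : ℝ}

lemma IsTrajectoryOn.sub_eq (hK : ContDiff ℝ 1 K)
    (h₁ : IsTrajectoryOn K n₁ y₁ (Ioo (min a b) (max a b)))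
    (h₂ : IsTrajectoryOn K n₂ y₂ (Ioo (min a b) (max a b))) :
    y₂ b - y₁ b = exp (∫ s in a..b, meanSlope K (y₁ s) (y₂ s)) * (y₂ a - y₁ a) +
      ∫ s in a..b, exp (∫ r in s..b, meanSlope K (y₁ r) (y₂ r)) * (n₂ s - n₁ s) :=
  eq_exp_integral_mul_add_integral (f := fun t ↦ y₂ t - y₁ t) (g := fun t ↦ n₂ t - n₁ t)
    ((continuous_meanSlope hK).comp (h₁.continuous.prodMk h₂.continuous)) (by fun_prop)
    (h₂.continuous.sub h₁.continuous) fun t ht ↦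
      ((h₂.hasDerivAt t ht).sub (h₁.hasDerivAt t ht)).congr_deriv <| by
        rw [meanSlope_mul_sub hK]; ring

lemma IsTrajectoryOn.sub_eq_exp_mul (hK : ContDiff ℝ 1 K)
    (h₁ : IsTrajectoryOn K n y₁ (Ioo (min a b) (max a b)))
    (h₂ : IsTrajectoryOn K n y₂ (Ioo (min a b) (max a b))) :
    y₂ b - y₁ b = exp (∫ s in a..b, meanSlope K (y₁ s) (y₂ s)) * (y₂ a - y₁ a) := by
  simpa using h₁.sub_eq hK h₂

lemma IsTrajectoryOn.eq_of_eq (hK : ContDiff ℝ 1 K)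
    (h₁ : IsTrajectoryOn K n y₁ (Ioo (min a b) (max a b)))
    (h₂ : IsTrajectoryOn K n y₂ (Ioo (min a b) (max a b))) (ha : y₁ a = y₂ a) : y₁ b = y₂ b := by
  have := h₁.sub_eq_exp_mul hK h₂
  rw [ha, sub_self, mul_zero, sub_eq_zero] at this
  exact this.symm

lemma IsTrajectoryOn.abs_sub_le_exp_mul (hK : ContDiff ℝ 1 K) (hL : LipschitzWith L K)
    (h₁ : IsTrajectoryOn K n y₁ (Ioo (min a b) (max a b)))
    (h₂ : IsTrajectoryOn K n y₂ (Ioo (min a b) (max a b))) :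
    |y₂ b - y₁ b| ≤ exp (L * |b - a|) * |y₂ a - y₁ a| := by
  rw [h₁.sub_eq_exp_mul hK h₂, abs_mul, abs_exp]
  gcongr
  exact (le_abs_self _).trans (abs_integral_le_mul_abs_sub (fun t ↦ abs_meanSlope_le hL _ _) a b)

lemma IsTrajectoryOn.abs_sub_le (hK : ContDiff ℝ 1 K) (hL : LipschitzWith L K) (hab : a ≤ b)
    (h₁ : IsTrajectoryOn K n₁ y₁ (Ioo a b)) (h₂ : IsTrajectoryOn K n₂ y₂ (Ioo a b)) :
    |y₁ b - y₂ b| ≤ exp (L * (b - a)) * (|y₁ a - y₂ a| + ∫ s in a..b, |n₁ s - n₂ s|) := by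
  replace h₁ : IsTrajectoryOn K n₁ y₁ (Ioo (min a b) (max a b)) := by simpa [hab] using h₁
  replace h₂ : IsTrajectoryOn K n₂ y₂ (Ioo (min a b) (max a b)) := by simpa [hab] using h₂
  have hexp (s : ℝ) (hs : s ∈ Icc a b) :
      exp (∫ r in s..b, meanSlope K (y₂ r) (y₁ r)) ≤ exp (L * (b - a)) := by
    gcongr
    calc ∫ r in s..b, meanSlope K (y₂ r) (y₁ r) ≤ L * |b - s| :=
          (le_abs_self _).trans
            (abs_integral_le_mul_abs_sub (fun t ↦ abs_meanSlope_le hL _ _) s b)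
      _ ≤ L * (b - a) := by
          rw [abs_of_nonneg (sub_nonneg.2 hs.2)]
          gcongr
          exact hs.1
  rw [h₂.sub_eq hK h₁, mul_add, ← intervalIntegral.integral_const_mul]
  refine (abs_add_le _ _).trans (add_le_add ?_ ?_)
  · rw [abs_mul, abs_exp]
    gcongr
    exact exp_le_exp.1 (hexp a (left_mem_Icc.2 hab))
  · have hdom : IntervalIntegrable (fun s ↦ exp (L * (b - a)) * |n₁ s - n₂ s|) volume a b :=
      Continuous.intervalIntegrable (by fun_prop) _ _
    rw [← Real.norm_eq_abs]
    refine intervalIntegral.norm_integral_le_of_norm_le hab (.of_forall fun s hs ↦ ?_) hdom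
    rw [norm_mul, Real.norm_eq_abs, abs_exp, Real.norm_eq_abs]
    gcongr
    exact exp_le_exp.1 (hexp s (Ioc_subset_Icc_self hs))

end Trajectories

section Flow

variable {K : ℝ → ℝ} {L : ℝ≥0} {n : C(ℝ, ℝ)}

/-- The trajectory of `y' = n + K(y)` taking the value `z` at time `a`, chosen by Hilbert's epsilon
(so an arbitrary function when there is none). -/
def flow (K n : ℝ → ℝ) (a z : ℝ) : ℝ → ℝ :=
  Classical.epsilon fun y ↦ IsTrajectoryOn K n y univ ∧ y a = z

lemma flow_spec (hL : LipschitzWith L K) (n : C(ℝ, ℝ)) (a z : ℝ) :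
    IsTrajectoryOn K n (flow K n a z) univ ∧ flow K n a z a = z := by
  have hv : Continuous (Function.uncurry fun t x ↦ n t + K x) := by
    have := hL.continuous
    fun_prop
  obtain ⟨y, hya, hy⟩ := exists_hasDerivAt_of_lipschitzWith hv
    (fun t ↦ .of_dist_le_mul fun x y ↦ by simpa using hL.dist_le_mul x y) a z
  have hcont : Continuous y := continuous_iff_continuousAt.2 fun t ↦ (hy t).continuousAt
  exact Classical.epsilon_spec (p := fun y ↦ IsTrajectoryOn K n y univ ∧ y a = z)
    ⟨y, ⟨hcont, fun t _ ↦ hy t⟩, hya⟩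

lemma isTrajectoryOn_flow (hL : LipschitzWith L K) (a z : ℝ) (s : Set ℝ) :
    IsTrajectoryOn K n (flow K n a z) s :=
  (flow_spec hL n a z).1.mono (subset_univ s)

lemma flow_self (hL : LipschitzWith L K) (a z : ℝ) : flow K n a z a = z :=
  (flow_spec hL n a z).2

lemma hasDerivAt_flow (hL : LipschitzWith L K) (a z t : ℝ) :
    HasDerivAt (flow K n a z) (n t + K (flow K n a z t)) t :=
  (flow_spec hL n a z).1.hasDerivAt t (mem_univ t)

variable (hK : ContDiff ℝ 1 K) (hL : LipschitzWith L K)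
include hK hL

lemma IsTrajectoryOn.eq_flow {y : ℝ → ℝ} {a b : ℝ}
    (hy : IsTrajectoryOn K n y (Ioo (min a b) (max a b))) : y b = flow K n a (y a) b :=
  hy.eq_of_eq hK (isTrajectoryOn_flow hL a (y a) _) (flow_self hL a (y a)).symm

lemma flow_flow (a b z t : ℝ) : flow K n b (flow K n a z b) t = flow K n a z t :=
  ((isTrajectoryOn_flow hL a z _).eq_flow hK hL).symm

lemma continuous_flow (a : ℝ) : Continuous fun p : ℝ × ℝ ↦ flow K n a p.1 p.2 := by
  refine continuous_iff_continuousAt.2 fun ⟨z₀, t₀⟩ ↦ ?_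
  have hz₀ : Continuous (flow K n a z₀) := (isTrajectoryOn_flow hL a z₀ univ).continuous
  have hbound (p : ℝ × ℝ) : |flow K n a p.1 p.2 - flow K n a z₀ p.2| ≤
      exp (L * |p.2 - a|) * |p.1 - z₀| := by
    simpa [flow_self hL] using (isTrajectoryOn_flow hL a z₀ _).abs_sub_le_exp_mul hK hL
      (a := a) (b := p.2) (isTrajectoryOn_flow hL a p.1 _)
  have hlim : Tendsto (fun p : ℝ × ℝ ↦ exp (L * |p.2 - a|) * |p.1 - z₀|) (𝓝 (z₀, t₀)) (𝓝 0) :=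
    Continuous.tendsto' (by fun_prop) _ _ (by simp)
  have hsub : Tendsto (fun p : ℝ × ℝ ↦ flow K n a p.1 p.2 - flow K n a z₀ p.2) (𝓝 (z₀, t₀)) (𝓝 0) :=
    squeeze_zero_norm hbound hlim
  have hbase : Tendsto (fun p : ℝ × ℝ ↦ flow K n a z₀ p.2) (𝓝 (z₀, t₀)) (𝓝 (flow K n a z₀ t₀)) :=
    (hz₀.comp continuous_snd).tendsto (z₀, t₀)
  simpa [ContinuousAt] using hsub.add hbase

lemma hasDerivAt_flow_initial (a z t : ℝ) :
    HasDerivAt (fun z ↦ flow K n a z t) (exp (∫ s in a..t, deriv K (flow K n a z s))) z := by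
  have hsub (x : ℝ) : flow K n a x t - flow K n a z t =
      (x - z) * exp (∫ s in a..t, meanSlope K (flow K n a z s) (flow K n a x s)) := by
    rw [(isTrajectoryOn_flow hL a z _).sub_eq_exp_mul hK (a := a) (isTrajectoryOn_flow hL a x _),
      flow_self hL, flow_self hL, mul_comm]
  have hcont : Continuous fun x ↦
      exp (∫ s in a..t, meanSlope K (flow K n a z s) (flow K n a x s)) := by
    have hflow := continuous_flow hK hL (n := n) a
    refine continuous_exp.comp
      (intervalIntegral.continuous_parametric_intervalIntegral_of_continuous' ?_ a t)
    exact (continuous_meanSlope hK).comp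
      ((hflow.comp (by fun_prop : Continuous fun p : ℝ × ℝ ↦ (z, p.2))).prodMk hflow)
  simpa [meanSlope_self] using hasDerivAt_of_sub_eq_mul hsub ((hasDerivAt_id z).sub_const z)
    (sub_self z) hcont.continuousAt

lemma flow_zero_sub_flow_zero (σ σ₀ : ℝ) : flow K n σ 0 0 - flow K n σ₀ 0 0 =
    flow K n σ₀ 0 σ *
      -exp (-∫ s in (0 : ℝ)..σ, meanSlope K (flow K n σ₀ 0 s) (flow K n σ 0 s)) := by
  rw [(isTrajectoryOn_flow hL σ₀ 0 _).sub_eq_exp_mul hK (a := σ) (isTrajectoryOn_flow hL σ 0 _),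
    flow_self hL, intervalIntegral.integral_symm]
  ring

lemma continuous_flow_zero : Continuous fun σ ↦ flow K n σ 0 0 := by
  refine continuous_iff_continuousAt.2 fun σ₀ ↦ tendsto_iff_norm_sub_tendsto_zero.2 ?_
  have hσ₀ : Continuous (flow K n σ₀ 0) := (isTrajectoryOn_flow hL σ₀ 0 univ).continuous
  refine squeeze_zero (fun σ ↦ norm_nonneg _) (g := fun σ ↦ exp (L * |0 - σ|) * |flow K n σ₀ 0 σ|)
    (fun σ ↦ ?_) (Continuous.tendsto' (by fun_prop) _ _ (by simp [flow_self hL]))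
  simpa [flow_self hL] using (isTrajectoryOn_flow hL σ₀ 0 _).abs_sub_le_exp_mul hK hL
    (a := σ) (b := 0) (isTrajectoryOn_flow hL σ 0 _)

lemma continuous_flow_zero_uncurry : Continuous fun p : ℝ × ℝ ↦ flow K n p.1 0 p.2 := by
  have := (continuous_flow hK hL (n := n) 0).comp
    (((continuous_flow_zero hK hL (n := n)).comp continuous_fst).prodMk continuous_snd)
  simpa [Function.comp_def, flow_flow hK hL] using this

lemma hasDerivAt_flow_zero (σ : ℝ) : HasDerivAt (fun σ ↦ flow K n σ 0 0)
    (-((n σ + K 0) * exp (-∫ s in (0 : ℝ)..σ, deriv K (flow K n σ 0 s)))) σ := by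
  have hcont : Continuous fun σ' ↦
      -exp (-∫ s in (0 : ℝ)..σ', meanSlope K (flow K n σ 0 s) (flow K n σ' 0 s)) := by
    have hflow := continuous_flow_zero_uncurry hK hL (n := n)
    refine (continuous_exp.comp
      (intervalIntegral.continuous_parametric_intervalIntegral_of_continuous ?_
        continuous_id).neg).neg
    exact (continuous_meanSlope hK).comp
      ((hflow.comp (by fun_prop : Continuous fun p : ℝ × ℝ ↦ (σ, p.2))).prodMk hflow)
  have hderiv : HasDerivAt (flow K n σ 0) (n σ + K 0) σ := by
    simpa [flow_self hL] using hasDerivAt_flow hL (n := n) σ 0 σ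
  simpa [meanSlope_self] using hasDerivAt_of_sub_eq_mul
    (fun σ' ↦ flow_zero_sub_flow_zero hK hL σ' σ) hderiv (flow_self hL σ 0) hcont.continuousAt

end Flow

section Characteristics

/-- A real function of two real variables with continuous partial derivatives `f₁` and `f₂`. -/
structure HasContinuousPartials (f f₁ f₂ : ℝ → ℝ → ℝ) : Prop where
  hasDerivAt_left : ∀ x y, HasDerivAt (fun x ↦ f x y) (f₁ x y) x
  hasDerivAt_right : ∀ x y, HasDerivAt (f x) (f₂ x y) y
  continuous_left : Continuous (Function.uncurry f₁)
  continuous_right : Continuous (Function.uncurry f₂)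

namespace HasContinuousPartials

variable {f f₁ f₂ : ℝ → ℝ → ℝ} (h : HasContinuousPartials f f₁ f₂)
include h

lemma hasFDerivAt (p : ℝ × ℝ) : HasFDerivAt (Function.uncurry f)
    ((ContinuousLinearMap.toSpanSingleton ℝ (f₁ p.1 p.2)).coprod
      (ContinuousLinearMap.toSpanSingleton ℝ (f₂ p.1 p.2))) p :=
  (hasStrictFDerivAt_uncurry_coprod
    (f₁ := fun x y ↦ ContinuousLinearMap.toSpanSingleton ℝ (f₁ x y))
    (f₂ := fun x y ↦ ContinuousLinearMap.toSpanSingleton ℝ (f₂ x y))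
    (.of_forall fun v ↦ (h.hasDerivAt_left v.1 v.2).hasFDerivAt)
    (.of_forall fun v ↦ (h.hasDerivAt_right v.1 v.2).hasFDerivAt)
    ((ContinuousLinearMap.toSpanSingletonCLE.continuous.comp h.continuous_left).continuousAt)
    ((ContinuousLinearMap.toSpanSingletonCLE.continuous.comp
      h.continuous_right).continuousAt)).hasFDerivAt

lemma contDiff : ContDiff ℝ 1 (Function.uncurry f) := by
  refine contDiff_one_iff_hasFDerivAt.2 ⟨_, ?_, h.hasFDerivAt⟩
  exact (ContinuousLinearMap.toSpanSingletonCLE.continuous.comp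
    h.continuous_left).continuousLinearMapCoprod
      (ContinuousLinearMap.toSpanSingletonCLE.continuous.comp h.continuous_right)

lemma hasDerivAt_comp {x y : ℝ → ℝ} {x' y' t : ℝ} (hx : HasDerivAt x x' t)
    (hy : HasDerivAt y y' t) :
    HasDerivAt (fun t ↦ f (x t) (y t)) (x' * f₁ (x t) (y t) + y' * f₂ (x t) (y t)) t := by
  have := (h.hasFDerivAt (x t, y t)).comp_hasDerivAt t (hx.prodMk hy)
  exact this.congr_deriv (by simp)

end HasContinuousPartials

variable {K : ℝ → ℝ} {L : ℝ≥0} {n q : C(ℝ, ℝ)}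

/-- The slope `∂_η Q` where the characteristic `τ - η = σ` enters the domain: the initial slope
`q (-σ)` if `σ ≤ 0`, and the inflow slope `n σ + K 0` if `σ ≥ 0`, provided these agree at `σ = 0`.
Writing both through `max σ 0` and `max (-σ) 0` makes continuity visible. -/
def entrySlope (K n q : ℝ → ℝ) (σ : ℝ) : ℝ := n (max σ 0) + K 0 + (q (max (-σ) 0) - q 0)

/-- Minus the derivative of `foot`: the entry slope, transported back to time `0`. -/
def footSlope (K n q : ℝ → ℝ) (σ : ℝ) : ℝ :=
  entrySlope K n q σ * exp (-∫ s in (0 : ℝ)..max σ 0, deriv K (flow K n (max σ 0) 0 s))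

/-- The value at time `0` of the solution along the characteristic `τ - η = σ`, for the input `n`
and the initial slope `q`. -/
def foot (K n q : ℝ → ℝ) (σ : ℝ) : ℝ := -∫ s in (0 : ℝ)..σ, footSlope K n q s

/-- The solution along the characteristic `τ - η = σ`, as a function of `τ`. -/
def charPath (K n q : ℝ → ℝ) (σ : ℝ) : ℝ → ℝ := flow K n 0 (foot K n q σ)

/-- The solution of `∂_τ Q + ∂_η Q = n + K(Q)` with `Q(τ, 0) = 0` and `∂_η Q(0, η) = q η`. -/
def charQ (K n q : ℝ → ℝ) (τ η : ℝ) : ℝ := charPath K n q (τ - η) τ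

/-- The spatial derivative `∂_η charQ`. -/
def charP (K n q : ℝ → ℝ) (τ η : ℝ) : ℝ :=
  footSlope K n q (τ - η) * exp (∫ s in (0 : ℝ)..τ, deriv K (charPath K n q (τ - η) s))

lemma entrySlope_of_nonneg {σ : ℝ} (hσ : 0 ≤ σ) : entrySlope K n q σ = n σ + K 0 := by
  simp [entrySlope, hσ]

lemma entrySlope_of_nonpos (hc : n 0 + K 0 = q 0) {σ : ℝ} (hσ : σ ≤ 0) :
    entrySlope K n q σ = q (-σ) := by
  simp [entrySlope, hσ, hc]

lemma continuous_entrySlope : Continuous (entrySlope K n q) := by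
  unfold entrySlope
  fun_prop

lemma foot_of_nonpos (hc : n 0 + K 0 = q 0) {σ : ℝ} (hσ : σ ≤ 0) :
    foot K n q σ = ∫ s in (0 : ℝ)..-σ, q s := by
  have hcongr : ∫ s in (0 : ℝ)..σ, footSlope K n q s = ∫ s in (0 : ℝ)..σ, q (-s) :=
    intervalIntegral.integral_congr fun s hs ↦ by
      have hs0 : s ≤ 0 := (uIcc_of_ge hσ ▸ hs).2
      simp [footSlope, entrySlope_of_nonpos hc hs0, hs0]
  rw [foot, hcongr, intervalIntegral.integral_comp_neg (fun s ↦ q s), neg_zero,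
    ← intervalIntegral.integral_symm]

section

variable (hK : ContDiff ℝ 1 K) (hL : LipschitzWith L K)
include hK hL

lemma continuous_footSlope : Continuous (footSlope K n q) := by
  have hflow := continuous_flow_zero_uncurry hK hL (n := n)
  have hexp : Continuous fun σ ↦ ∫ s in (0 : ℝ)..max σ 0, deriv K (flow K n (max σ 0) 0 s) := by
    refine intervalIntegral.continuous_parametric_intervalIntegral_of_continuous ?_ (by fun_prop)
    exact hK.continuous_deriv_one.comp (hflow.comp (by fun_prop :
      Continuous fun p : ℝ × ℝ ↦ (max p.1 0, p.2)))
  exact continuous_entrySlope.mul (continuous_exp.comp hexp.neg)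

lemma hasDerivAt_foot (σ : ℝ) : HasDerivAt (foot K n q) (-footSlope K n q σ) σ :=
  ((continuous_footSlope hK hL).integral_hasStrictDerivAt 0 σ).hasDerivAt.fun_neg

lemma contDiff_foot : ContDiff ℝ 1 (foot K n q) := by
  refine contDiff_one_iff_deriv.2 ⟨fun σ ↦ (hasDerivAt_foot hK hL σ).differentiableAt, ?_⟩
  rw [funext fun σ ↦ (hasDerivAt_foot hK hL (n := n) (q := q) σ).deriv]
  exact (continuous_footSlope hK hL).neg

lemma foot_of_nonneg {σ : ℝ} (hσ : 0 ≤ σ) : foot K n q σ = flow K n σ 0 0 := by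
  have hderiv (s : ℝ) (hs : s ∈ uIcc 0 σ) :
      HasDerivAt (fun σ ↦ -flow K n σ 0 0) (footSlope K n q s) s := by
    have hs0 : 0 ≤ s := (uIcc_of_le hσ ▸ hs).1
    simpa [footSlope, entrySlope_of_nonneg hs0, hs0] using
      (hasDerivAt_flow_zero hK hL (n := n) s).fun_neg
  rw [foot, intervalIntegral.integral_eq_sub_of_hasDerivAt hderiv
    ((continuous_footSlope hK hL).intervalIntegrable _ _), flow_self hL]
  ring

lemma charPath_of_nonneg {σ : ℝ} (hσ : 0 ≤ σ) (t : ℝ) : charPath K n q σ t = flow K n σ 0 t := by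
  rw [charPath, foot_of_nonneg hK hL hσ, flow_flow hK hL]

lemma charPath_self {σ : ℝ} (hσ : 0 ≤ σ) : charPath K n q σ σ = 0 := by
  rw [charPath_of_nonneg hK hL hσ, flow_self hL]

end

lemma charPath_zero (hL : LipschitzWith L K) (hc : n 0 + K 0 = q 0) {σ : ℝ} (hσ : σ ≤ 0) :
    charPath K n q σ 0 = ∫ s in (0 : ℝ)..-σ, q s := by
  rw [charPath, flow_self hL, foot_of_nonpos hc hσ]

section

variable (hK : ContDiff ℝ 1 K) (hL : LipschitzWith L K)
include hK hL

lemma continuous_charPath : Continuous fun p : ℝ × ℝ ↦ charPath K n q p.1 p.2 :=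
  (continuous_flow hK hL 0).comp
    (((contDiff_foot hK hL).continuous.comp continuous_fst).prodMk continuous_snd)

lemma continuous_deriv_charPath (σ : ℝ) : Continuous fun t ↦ deriv K (charPath K n q σ t) :=
  hK.continuous_deriv_one.comp ((continuous_charPath hK hL).comp (by fun_prop :
    Continuous fun t : ℝ ↦ (σ, t)))

lemma charP_eq (τ η : ℝ) : charP K n q τ η = entrySlope K n q (τ - η) *
    exp (∫ s in max (τ - η) 0..τ, deriv K (charPath K n q (τ - η) s)) := by
  have hcont := continuous_deriv_charPath hK hL (n := n) (q := q) (τ - η)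
  have hback : ∫ s in (0 : ℝ)..max (τ - η) 0, deriv K (flow K n (max (τ - η) 0) 0 s) =
      ∫ s in (0 : ℝ)..max (τ - η) 0, deriv K (charPath K n q (τ - η) s) := by
    rcases le_total (τ - η) 0 with hσ | hσ
    · simp [hσ]
    · simp [hσ, charPath_of_nonneg hK hL hσ]
  rw [charP, footSlope, hback, mul_assoc, ← exp_add, neg_add_eq_sub,
    intervalIntegral.integral_interval_sub_left (hcont.intervalIntegrable _ _)
      (hcont.intervalIntegrable _ _)]

lemma hasContinuousPartials_flow : HasContinuousPartials (flow K n 0)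
    (fun z t ↦ exp (∫ s in (0 : ℝ)..t, deriv K (flow K n 0 z s)))
    (fun z t ↦ n t + K (flow K n 0 z t)) where
  hasDerivAt_left z t := hasDerivAt_flow_initial hK hL 0 z t
  hasDerivAt_right z t := hasDerivAt_flow hL 0 z t
  continuous_left := by
    refine continuous_exp.comp
      (intervalIntegral.continuous_parametric_intervalIntegral_of_continuous ?_ continuous_snd)
    exact hK.continuous_deriv_one.comp ((continuous_flow hK hL 0).comp (by fun_prop :
      Continuous fun p : (ℝ × ℝ) × ℝ ↦ (p.1.1, p.2)))
  continuous_right :=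
    (n.continuous.comp continuous_snd).add (hK.continuous.comp (continuous_flow hK hL 0))

lemma contDiff_charQ : ContDiff ℝ 1 (Function.uncurry (charQ K n q)) :=
  (hasContinuousPartials_flow hK hL).contDiff.comp
    (((contDiff_foot hK hL).comp (contDiff_fst.sub contDiff_snd)).prodMk contDiff_fst)

lemma hasDerivAt_charQ_right (τ η : ℝ) :
    HasDerivAt (charQ K n q τ) (charP K n q τ η) η := by
  have hfoot := (hasDerivAt_foot hK hL (n := n) (q := q) (τ - η)).comp η
    ((hasDerivAt_id η).const_sub τ)
  exact ((hasContinuousPartials_flow hK hL).hasDerivAt_comp hfoot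
    (hasDerivAt_const η τ)).congr_deriv (by simp [charP, charPath])

lemma hasDerivAt_charQ_left (τ η : ℝ) : HasDerivAt (fun τ ↦ charQ K n q τ η)
    (n τ + K (charQ K n q τ η) - charP K n q τ η) τ := by
  have hfoot := (hasDerivAt_foot hK hL (n := n) (q := q) (τ - η)).comp τ
    ((hasDerivAt_id τ).sub_const η)
  exact ((hasContinuousPartials_flow hK hL).hasDerivAt_comp hfoot
    (hasDerivAt_id τ)).congr_deriv (by simp [charP, charPath, charQ]; ring)

lemma continuous_charP : Continuous (Function.uncurry (charP K n q)) := by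
  have hexp : Continuous fun p : ℝ × ℝ ↦
      ∫ s in (0 : ℝ)..p.1, deriv K (charPath K n q (p.1 - p.2) s) := by
    refine intervalIntegral.continuous_parametric_intervalIntegral_of_continuous ?_ continuous_fst
    exact hK.continuous_deriv_one.comp ((continuous_charPath hK hL).comp (by fun_prop :
      Continuous fun p : (ℝ × ℝ) × ℝ ↦ (p.1.1 - p.1.2, p.2)))
  exact ((continuous_footSlope hK hL).comp (continuous_fst.sub continuous_snd)).mul
    (continuous_exp.comp hexp)

end

end Characteristics

section Stability

variable {K : ℝ → ℝ} {L L' : ℝ≥0} {n₁ n₂ q₁ q₂ : C(ℝ, ℝ)} {δ T M : ℝ}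

lemma abs_mul_exp_sub_mul_exp_le {c₁ c₂ x₁ x₂ B : ℝ} (h₁ : x₁ ≤ B) (h₂ : x₂ ≤ B) :
    |c₁ * exp x₁ - c₂ * exp x₂| ≤ exp B * (|c₁ - c₂| + |c₁| * |x₁ - x₂|) := by
  have hexp : |exp x₁ - exp x₂| ≤ exp B * |x₁ - x₂| := by
    have key {x y : ℝ} (hx : x ≤ B) (hyx : y ≤ x) : exp x - exp y ≤ exp B * (x - y) := by
      have hy : exp y = exp x * exp (y - x) := by rw [← exp_add]; ring_nf
      calc exp x - exp y ≤ exp x * (x - y) := by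
            rw [hy]; nlinarith [add_one_le_exp (y - x), exp_pos x]
        _ ≤ exp B * (x - y) := by gcongr
    rcases le_total x₁ x₂ with h | h
    · rw [abs_sub_comm, abs_sub_comm x₁, abs_of_nonneg (sub_nonneg.2 (exp_le_exp.2 h)),
        abs_of_nonneg (sub_nonneg.2 h)]
      exact key h₂ h
    · rw [abs_of_nonneg (sub_nonneg.2 (exp_le_exp.2 h)), abs_of_nonneg (sub_nonneg.2 h)]
      exact key h₁ h
  calc |c₁ * exp x₁ - c₂ * exp x₂| = |(c₁ - c₂) * exp x₂ + c₁ * (exp x₁ - exp x₂)| := by ring_nf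
    _ ≤ |c₁ - c₂| * exp B + |c₁| * (exp B * |x₁ - x₂|) := by
        refine (abs_add_le _ _).trans ?_
        rw [abs_mul, abs_mul, abs_exp]
        gcongr
    _ = exp B * (|c₁ - c₂| + |c₁| * |x₁ - x₂|) := by ring

/-- The constant in the Lipschitz estimate of `charP` on `[0, T]`, when the entry slopes are bounded
by `M`, `K` is `L`-Lipschitz and `K'` is `L'`-Lipschitz. -/
def stabConst (L L' : ℝ≥0) (T M : ℝ) : ℝ := exp (L * T) * (1 + M * (L' * exp (L * T) * T))

lemma abs_entrySlope_sub_le (hδ : ∀ x ∈ Icc (0 : ℝ) 1, |q₁ x - q₂ x| ≤ δ) {σ : ℝ} (hσ : -1 ≤ σ) :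
    |entrySlope K n₁ q₁ σ - entrySlope K n₂ q₂ σ| ≤ |n₁ (max σ 0) - n₂ (max σ 0)| + 2 * δ := by
  have hq0 := hδ 0 (by simp)
  have hqσ := hδ (max (-σ) 0) ⟨le_max_right _ _, max_le (by linarith) zero_le_one⟩
  rw [show entrySlope K n₁ q₁ σ - entrySlope K n₂ q₂ σ = (n₁ (max σ 0) - n₂ (max σ 0)) +
    ((q₁ (max (-σ) 0) - q₂ (max (-σ) 0)) - (q₁ 0 - q₂ 0)) by simp only [entrySlope]; ring]
  refine (abs_add_le _ _).trans (add_le_add_right ((abs_sub _ _).trans ?_) _)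
  linarith

variable (hK : ContDiff ℝ 1 K) (hL : LipschitzWith L K) (hL' : LipschitzWith L' (deriv K))
  (hc₁ : n₁ 0 + K 0 = q₁ 0) (hc₂ : n₂ 0 + K 0 = q₂ 0)
  (hδ : ∀ x ∈ Icc (0 : ℝ) 1, |q₁ x - q₂ x| ≤ δ)

include hK hL hc₁ hc₂ hδ in
lemma abs_charPath_sub_le {σ t : ℝ} (hσ : -1 ≤ σ) (ht : max σ 0 ≤ t) :
    |charPath K n₁ q₁ σ t - charPath K n₂ q₂ σ t| ≤
      exp (L * t) * (δ + ∫ s in (0 : ℝ)..t, |n₁ s - n₂ s|) := by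
  have hδ0 : 0 ≤ δ := (abs_nonneg _).trans (hδ 0 (by simp))
  have htraj (n q : C(ℝ, ℝ)) (s : Set ℝ) : IsTrajectoryOn K n (charPath K n q σ) s :=
    isTrajectoryOn_flow hL _ _ s
  rcases le_total σ 0 with hσ0 | hσ0
  · have hinit : |charPath K n₁ q₁ σ 0 - charPath K n₂ q₂ σ 0| ≤ δ := by
      rw [charPath_zero hL hc₁ hσ0, charPath_zero hL hc₂ hσ0, ← intervalIntegral.integral_sub
        (q₁.continuous.intervalIntegrable _ _) (q₂.continuous.intervalIntegrable _ _)]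
      refine (intervalIntegral.norm_integral_le_of_norm_le_const (f := fun s ↦ q₁ s - q₂ s)
        fun s hs ↦ ?_).trans (mul_le_of_le_one_right hδ0 ?_)
      · rw [uIoc_of_le (by linarith)] at hs
        exact hδ s ⟨hs.1.le, by linarith [hs.2]⟩
      · rw [abs_of_nonneg] <;> linarith
    have := (htraj n₁ q₁ _).abs_sub_le hK hL ((le_max_right _ _).trans ht) (htraj n₂ q₂ _)
    rw [sub_zero] at this
    exact this.trans (by gcongr)
  · have hσt : σ ≤ t := (le_max_left _ _).trans ht
    have := (htraj n₁ q₁ _).abs_sub_le hK hL hσt (htraj n₂ q₂ _)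
    rw [charPath_self hK hL hσ0, charPath_self hK hL hσ0, sub_self, abs_zero] at this
    have hcont : Continuous fun s ↦ |n₁ s - n₂ s| := by fun_prop
    have hmono := intervalIntegral.integral_mono_interval (μ := volume) hσ0 hσt le_rfl
      (.of_forall fun s ↦ abs_nonneg (n₁ s - n₂ s)) (hcont.intervalIntegrable 0 t)
    have hnonneg := intervalIntegral.integral_nonneg (μ := volume) hσt
      fun s _ ↦ abs_nonneg (n₁ s - n₂ s)
    exact this.trans (mul_le_mul (exp_le_exp.2 (by gcongr; linarith)) (add_le_add hδ0 hmono)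
      (by linarith) (exp_nonneg _))

include hK hL hL' hc₁ hc₂ hδ in
lemma abs_integral_deriv_charPath_sub_le {σ τ : ℝ} (hσ : -1 ≤ σ) (hτ : max σ 0 ≤ τ) :
    |(∫ s in max σ 0..τ, deriv K (charPath K n₁ q₁ σ s)) -
        ∫ s in max σ 0..τ, deriv K (charPath K n₂ q₂ σ s)| ≤
      L' * exp (L * τ) * τ * (δ + ∫ s in (0 : ℝ)..τ, |n₁ s - n₂ s|) := by
  have hcont : Continuous fun s ↦ |n₁ s - n₂ s| := by fun_prop
  have hσ0 : 0 ≤ max σ 0 := le_max_right _ _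
  have hδI : 0 ≤ δ + ∫ s in (0 : ℝ)..τ, |n₁ s - n₂ s| :=
    add_nonneg ((abs_nonneg _).trans (hδ 0 (by simp)))
      (intervalIntegral.integral_nonneg (hσ0.trans hτ) fun _ _ ↦ abs_nonneg _)
  have hpoint (s : ℝ) (hs : s ∈ uIoc (max σ 0) τ) :
      ‖deriv K (charPath K n₁ q₁ σ s) - deriv K (charPath K n₂ q₂ σ s)‖ ≤
        L' * (exp (L * τ) * (δ + ∫ s in (0 : ℝ)..τ, |n₁ s - n₂ s|)) := by
    rw [uIoc_of_le hτ] at hs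
    refine (hL'.norm_sub_le _ _).trans ?_
    gcongr
    refine (abs_charPath_sub_le hK hL hc₁ hc₂ hδ hσ hs.1.le).trans ?_
    have hmono := intervalIntegral.integral_mono_interval (μ := volume) le_rfl
      (hσ0.trans hs.1.le) hs.2 (.of_forall fun s ↦ abs_nonneg (n₁ s - n₂ s))
      (hcont.intervalIntegrable 0 τ)
    calc exp (L * s) * (δ + ∫ s in (0 : ℝ)..s, |n₁ s - n₂ s|)
        ≤ exp (L * s) * (δ + ∫ s in (0 : ℝ)..τ, |n₁ s - n₂ s|) := by gcongr
      _ ≤ exp (L * τ) * (δ + ∫ s in (0 : ℝ)..τ, |n₁ s - n₂ s|) := by gcongr; exact hs.2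
  rw [← intervalIntegral.integral_sub
    ((continuous_deriv_charPath hK hL σ).intervalIntegrable _ _)
    ((continuous_deriv_charPath hK hL σ).intervalIntegrable _ _)]
  calc _ ≤ L' * (exp (L * τ) * (δ + ∫ s in (0 : ℝ)..τ, |n₁ s - n₂ s|)) * |τ - max σ 0| :=
        intervalIntegral.norm_integral_le_of_norm_le_const hpoint
    _ ≤ L' * (exp (L * τ) * (δ + ∫ s in (0 : ℝ)..τ, |n₁ s - n₂ s|)) * τ := by
        rw [abs_of_nonneg (sub_nonneg.2 hτ)]
        gcongr
        linarith
    _ = _ := by ring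

include hK hL hL' hc₁ hc₂ hδ in
lemma abs_charP_sub_le (hM : ∀ σ ∈ Icc (-1) T, |entrySlope K n₁ q₁ σ| ≤ M) {τ η : ℝ}
    (hτ : τ ∈ Icc 0 T) (hη : η ∈ Icc (0 : ℝ) 1) :
    |charP K n₁ q₁ τ η - charP K n₂ q₂ τ η| ≤ stabConst L L' T M *
      (3 * δ + |n₁ (max (τ - η) 0) - n₂ (max (τ - η) 0)| + ∫ s in (0 : ℝ)..τ, |n₁ s - n₂ s|) := by
  have hδ0 : 0 ≤ δ := (abs_nonneg _).trans (hδ 0 (by simp))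
  have hT : 0 ≤ T := hτ.1.trans hτ.2
  set σ := τ - η
  have hσ : -1 ≤ σ := by linarith [hτ.1, hη.2]
  have hστ : max σ 0 ≤ τ := max_le (by linarith [hη.1]) hτ.1
  have hMσ := hM σ ⟨hσ, by linarith [hη.1, hτ.2]⟩
  have hM0 : 0 ≤ M := (abs_nonneg _).trans hMσ
  have hexponent (n q : C(ℝ, ℝ)) :
      ∫ s in max σ 0..τ, deriv K (charPath K n q σ s) ≤ L * T := by
    refine (le_abs_self _).trans
      ((abs_integral_le_mul_abs_sub (fun s ↦ abs_deriv_le hL _) _ _).trans ?_)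
    rw [abs_of_nonneg (sub_nonneg.2 hστ)]
    gcongr
    linarith [hτ.2, le_max_right σ 0]
  set D := |n₁ (max σ 0) - n₂ (max σ 0)|
  set I := ∫ s in (0 : ℝ)..τ, |n₁ s - n₂ s|
  have hI : 0 ≤ I := intervalIntegral.integral_nonneg hτ.1 fun _ _ ↦ abs_nonneg _
  rw [charP_eq hK hL, charP_eq hK hL]
  calc _ ≤ exp (L * T) * (|entrySlope K n₁ q₁ σ - entrySlope K n₂ q₂ σ| +
        |entrySlope K n₁ q₁ σ| * |(∫ s in max σ 0..τ, deriv K (charPath K n₁ q₁ σ s)) -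
          ∫ s in max σ 0..τ, deriv K (charPath K n₂ q₂ σ s)|) :=
        abs_mul_exp_sub_mul_exp_le (hexponent n₁ q₁) (hexponent n₂ q₂)
    _ ≤ exp (L * T) * (D + 2 * δ + M * (L' * exp (L * τ) * τ * (δ + I))) := by
        gcongr
        · exact abs_entrySlope_sub_le hδ hσ
        · exact abs_integral_deriv_charPath_sub_le hK hL hL' hc₁ hc₂ hδ hσ hστ
    _ ≤ exp (L * T) * (D + 2 * δ + M * (L' * exp (L * T) * T * (δ + I))) := by
        gcongr
        exacts [hτ.1, hτ.2, hτ.2]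
    _ ≤ stabConst L L' T M * (3 * δ + D + I) := by
        rw [stabConst, mul_assoc (exp _)]
        gcongr
        have : 0 ≤ M * (L' * exp (L * T) * T) := by positivity
        nlinarith [mul_nonneg this hδ0, mul_nonneg this (abs_nonneg _ : 0 ≤ D)]

lemma integral_exp_mul_le {c : ℝ} (hc : 0 < c) (τ : ℝ) :
    ∫ s in (0 : ℝ)..τ, exp (c * s) ≤ exp (c * τ) / c := by
  rw [intervalIntegral.integral_comp_mul_left (fun s ↦ exp s) hc.ne', integral_exp, mul_zero,
    exp_zero, smul_eq_mul, inv_mul_eq_div]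
  gcongr
  linarith

lemma stabConst_pos (hT : 0 ≤ T) (hM : 0 ≤ M) : 0 < stabConst L L' T M := by
  unfold stabConst
  positivity

include hK hL hL' hc₁ hc₂ hδ in
/-- The weight `exp (4 * C * t)` makes both the delay term `n (τ - 1)` and the memory term
`∫ n` of `abs_charP_sub_le` small. -/
lemma abs_charP_one_sub_le_weighted (hM : ∀ σ ∈ Icc (-1) T, |entrySlope K n₁ q₁ σ| ≤ M) {S : ℝ}
    (hS : ∀ t ∈ Icc 0 T, |n₁ t - n₂ t| ≤ S * exp (4 * stabConst L L' T M * t))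
    {τ : ℝ} (hτ : τ ∈ Icc 0 T) :
    |charP K n₁ q₁ τ 1 - charP K n₂ q₂ τ 1| ≤
      4 * stabConst L L' T M * δ + S / 2 * exp (4 * stabConst L L' T M * τ) := by
  have hT : 0 ≤ T := hτ.1.trans hτ.2
  have hM0 : 0 ≤ M := (abs_nonneg _).trans (hM 0 ⟨by norm_num, hT⟩)
  have hS0 : 0 ≤ S := by simpa using (abs_nonneg _).trans (hS 0 ⟨le_rfl, hT⟩)
  have hδ0 : 0 ≤ δ := (abs_nonneg _).trans (hδ 0 (by simp))
  have hC := stabConst_pos (L := L) (L' := L') hT hM0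
  have hP := abs_charP_sub_le hK hL hL' hc₁ hc₂ hδ hM hτ ⟨zero_le_one, le_rfl⟩
  set C := stabConst L L' T M
  have hdelay : |n₁ (max (τ - 1) 0) - n₂ (max (τ - 1) 0)| ≤
      δ + S * (exp (4 * C * τ) / (4 * C)) := by
    rcases le_total (τ - 1) 0 with h | h
    · rw [max_eq_right h, show n₁ 0 - n₂ 0 = q₁ 0 - q₂ 0 by linarith]
      exact (hδ 0 (by simp)).trans (le_add_of_nonneg_right (by positivity))
    · rw [max_eq_left h]
      refine (hS _ ⟨h, by linarith [hτ.2]⟩).trans ((mul_le_mul_of_nonneg_left ?_ hS0).trans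
        (le_add_of_nonneg_left hδ0))
      rw [mul_sub, mul_one, exp_sub]
      gcongr
      linarith [add_one_le_exp (4 * C)]
  have hmemory : ∫ s in (0 : ℝ)..τ, |n₁ s - n₂ s| ≤ S * (exp (4 * C * τ) / (4 * C)) :=
    calc ∫ s in (0 : ℝ)..τ, |n₁ s - n₂ s| ≤ ∫ s in (0 : ℝ)..τ, S * exp (4 * C * s) :=
          intervalIntegral.integral_mono_on hτ.1
            (Continuous.intervalIntegrable (by fun_prop) _ _)
            (Continuous.intervalIntegrable (by fun_prop) _ _)
            fun s hs ↦ hS s ⟨hs.1, hs.2.trans hτ.2⟩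
      _ ≤ S * (exp (4 * C * τ) / (4 * C)) := by
          rw [intervalIntegral.integral_const_mul]
          gcongr
          exact integral_exp_mul_le (by positivity) τ
  calc _ ≤ C * (3 * δ + (δ + S * (exp (4 * C * τ) / (4 * C))) +
        S * (exp (4 * C * τ) / (4 * C))) := hP.trans (by gcongr)
    _ = 4 * C * δ + S / 2 * exp (4 * C * τ) := by field_simp; ring

/-- `n` plays the role of `1 / N` in the Q-system on `[0, T]`: it solves the fixed-point form of the
boundary condition `1 / N(τ) = ∂_η Q(τ, 1) - κ`, in which `∂_η Q` is computed from `n` itself and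
the initial slope `q`. Then `compat` is the continuity of `∂_η Q` at the corner `(0, 0)`. -/
structure IsRate (K : ℝ → ℝ) (κ : ℝ) (q n : ℝ → ℝ) (T : ℝ) : Prop where
  compat : n 0 + K 0 = q 0
  eq : ∀ τ ∈ Icc 0 T, n τ = charP K n q τ 1 - κ

variable {κ : ℝ}

include hK hL hL' hδ in
lemma IsRate.abs_sub_le (h₁ : IsRate K κ q₁ n₁ T) (h₂ : IsRate K κ q₂ n₂ T)
    (hM : ∀ σ ∈ Icc (-1) T, |entrySlope K n₁ q₁ σ| ≤ M) {τ : ℝ} (hτ : τ ∈ Icc 0 T) :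
    |n₁ τ - n₂ τ| ≤ 8 * stabConst L L' T M * exp (4 * stabConst L L' T M * T) * δ := by
  have hT : 0 ≤ T := hτ.1.trans hτ.2
  have hδ0 : 0 ≤ δ := (abs_nonneg _).trans (hδ 0 (by simp))
  have hC := stabConst_pos (L := L) (L' := L') hT ((abs_nonneg _).trans (hM 0 ⟨by norm_num, hT⟩))
  set C := stabConst L L' T M
  obtain ⟨t, ht, hmax⟩ := isCompact_Icc.exists_isMaxOn (nonempty_Icc.2 hT)
    (by fun_prop : Continuous fun t ↦ |n₁ t - n₂ t| * exp (-(4 * C * t))).continuousOn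
  set S := |n₁ t - n₂ t| * exp (-(4 * C * t))
  have hS (s : ℝ) (hs : s ∈ Icc 0 T) : |n₁ s - n₂ s| ≤ S * exp (4 * C * s) := by
    rw [← div_le_iff₀ (exp_pos _), div_eq_mul_inv, ← exp_neg]
    exact hmax hs
  have habsorb : S * exp (4 * C * t) ≤ 4 * C * δ + S / 2 * exp (4 * C * t) := by
    rw [show S * exp (4 * C * t) = |n₁ t - n₂ t| by rw [mul_assoc, ← exp_add]; simp,
      h₁.eq t ht, h₂.eq t ht, sub_sub_sub_cancel_right]
    exact abs_charP_one_sub_le_weighted hK hL hL' h₁.compat h₂.compat hδ hM hS ht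
  have hSle : S ≤ 8 * C * δ := by
    have hS0 : 0 ≤ S := by positivity
    have : 1 ≤ exp (4 * C * t) := one_le_exp (mul_nonneg (by positivity) ht.1)
    nlinarith
  calc |n₁ τ - n₂ τ| ≤ S * exp (4 * C * τ) := hS τ hτ
    _ ≤ 8 * C * δ * exp (4 * C * T) := by gcongr; exact hτ.2
    _ = 8 * C * exp (4 * C * T) * δ := by ring

lemma integral_abs_sub_le {B τ : ℝ} (hB : ∀ t ∈ Icc 0 T, |n₁ t - n₂ t| ≤ B) (hτ : τ ∈ Icc 0 T) :
    ∫ s in (0 : ℝ)..τ, |n₁ s - n₂ s| ≤ T * B := by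
  have hB0 : 0 ≤ B := (abs_nonneg _).trans (hB τ hτ)
  calc ∫ s in (0 : ℝ)..τ, |n₁ s - n₂ s| ≤ ∫ _ in (0 : ℝ)..τ, B :=
        intervalIntegral.integral_mono_on hτ.1 (Continuous.intervalIntegrable (by fun_prop) _ _)
          intervalIntegrable_const fun s hs ↦ hB s ⟨hs.1, hs.2.trans hτ.2⟩
    _ = τ * B := by simp
    _ ≤ T * B := by gcongr; exact hτ.2

include hK hL hc₁ hc₂ hδ in
lemma abs_charQ_sub_le_of_abs_sub_le {B τ η : ℝ} (hB : ∀ t ∈ Icc 0 T, |n₁ t - n₂ t| ≤ B)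
    (hτ : τ ∈ Icc 0 T) (hη : η ∈ Icc (0 : ℝ) 1) :
    |charQ K n₁ q₁ τ η - charQ K n₂ q₂ τ η| ≤ exp (L * T) * (δ + T * B) := by
  have hδ0 : 0 ≤ δ := (abs_nonneg _).trans (hδ 0 (by simp))
  have hI0 : 0 ≤ ∫ s in (0 : ℝ)..τ, |n₁ s - n₂ s| :=
    intervalIntegral.integral_nonneg hτ.1 fun _ _ ↦ abs_nonneg _
  calc |charQ K n₁ q₁ τ η - charQ K n₂ q₂ τ η|
      ≤ exp (L * τ) * (δ + ∫ s in (0 : ℝ)..τ, |n₁ s - n₂ s|) :=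
        abs_charPath_sub_le hK hL hc₁ hc₂ hδ (by linarith [hη.2, hτ.1])
          (max_le (by linarith [hη.1]) hτ.1)
    _ ≤ exp (L * T) * (δ + T * B) := by
        gcongr
        exacts [hτ.2, integral_abs_sub_le hB hτ]

include hK hL hL' hc₁ hc₂ hδ in
lemma abs_charP_sub_le_of_abs_sub_le (hM : ∀ σ ∈ Icc (-1) T, |entrySlope K n₁ q₁ σ| ≤ M)
    {B τ η : ℝ} (hB : ∀ t ∈ Icc 0 T, |n₁ t - n₂ t| ≤ B) (hτ : τ ∈ Icc 0 T)
    (hη : η ∈ Icc (0 : ℝ) 1) :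
    |charP K n₁ q₁ τ η - charP K n₂ q₂ τ η| ≤ stabConst L L' T M * (3 * δ + B + T * B) := by
  have hT : 0 ≤ T := hτ.1.trans hτ.2
  have hC := stabConst_pos (L := L) (L' := L') hT ((abs_nonneg _).trans (hM 0 ⟨by norm_num, hT⟩))
  refine (abs_charP_sub_le hK hL hL' hc₁ hc₂ hδ hM hτ hη).trans ?_
  gcongr
  · exact hB _ ⟨le_max_right _ _, max_le (by linarith [hη.1, hτ.2]) hT⟩
  · exact integral_abs_sub_le hB hτ

include hK hL hL' in
lemma IsRate.exists_lipschitz_bound (hT : 0 ≤ T) (h₁ : IsRate K κ q₁ n₁ T) :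
    ∃ C, ∀ (n₂ q₂ : C(ℝ, ℝ)) (δ : ℝ), IsRate K κ q₂ n₂ T →
      (∀ x ∈ Icc (0 : ℝ) 1, |q₁ x - q₂ x| ≤ δ) → ∀ τ ∈ Icc 0 T, |n₁ τ - n₂ τ| ≤ C * δ ∧
        ∀ η ∈ Icc (0 : ℝ) 1, |charQ K n₁ q₁ τ η - charQ K n₂ q₂ τ η| ≤ C * δ ∧
          |charP K n₁ q₁ τ η - charP K n₂ q₂ τ η| ≤ C * δ := by
  obtain ⟨M, hM⟩ := isCompact_Icc.exists_bound_of_continuousOn (s := Icc (-1) T)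
    (continuous_entrySlope (K := K) (n := n₁) (q := q₁)).continuousOn
  have hC := stabConst_pos (L := L) (L' := L') hT ((abs_nonneg _).trans (hM 0 ⟨by norm_num, hT⟩))
  set C := stabConst L L' T M
  set A := 8 * C * exp (4 * C * T)
  refine ⟨A + exp (L * T) * (1 + T * A) + C * (3 + A + T * A), fun n₂ q₂ δ h₂ hδ τ hτ ↦ ?_⟩
  have hδ0 : 0 ≤ δ := (abs_nonneg _).trans (hδ 0 (by simp))
  have hn (t : ℝ) (ht : t ∈ Icc 0 T) : |n₁ t - n₂ t| ≤ A * δ :=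
    h₁.abs_sub_le hK hL hL' hδ h₂ hM ht
  have hQ (η : ℝ) (hη : η ∈ Icc (0 : ℝ) 1) :=
    abs_charQ_sub_le_of_abs_sub_le hK hL h₁.compat h₂.compat hδ hn hτ hη
  have hP (η : ℝ) (hη : η ∈ Icc (0 : ℝ) 1) :=
    abs_charP_sub_le_of_abs_sub_le hK hL hL' h₁.compat h₂.compat hδ hM hn hτ hη
  have hnonneg : 0 ≤ A * δ ∧ 0 ≤ exp (L * T) * (δ + T * (A * δ)) ∧
      0 ≤ C * (3 * δ + A * δ + T * (A * δ)) := ⟨by positivity, by positivity, by positivity⟩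
  exact ⟨(hn τ hτ).trans (by linarith), fun η hη ↦
    ⟨(hQ η hη).trans (by linarith), (hP η hη).trans (by linarith)⟩⟩

end Stability

section Existence

variable {K : ℝ → ℝ} {L L' : ℝ≥0} {n q : C(ℝ, ℝ)} {κ T A B : ℝ}

/-- A growth bound that is preserved by the fixed-point map `n ↦ charP K n q · 1 - κ`. -/
def HasRateBound (A : ℝ) (L : ℝ≥0) (n : ℝ → ℝ) (T : ℝ) : Prop :=
  ∀ t ∈ Icc 0 T, |n t| ≤ A * exp ((L + 1) * t)

lemma HasRateBound.abs_entrySlope_le (hA : 0 ≤ A) (hT : 0 ≤ T) (hn : HasRateBound A L n T)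
    (hq : ∀ x ∈ Icc (0 : ℝ) 1, |q x| ≤ B) {σ : ℝ} (hσ : σ ∈ Icc (-1) T) :
    |entrySlope K n q σ| ≤ A * exp ((L + 1) * T) + |K 0| + 2 * B := by
  have hnσ : |n (max σ 0)| ≤ A * exp ((L + 1) * T) :=
    (hn _ ⟨le_max_right _ _, max_le hσ.2 hT⟩).trans (by gcongr; exact max_le hσ.2 hT)
  have hqσ := hq (max (-σ) 0) ⟨le_max_right _ _, max_le (by linarith [hσ.1]) zero_le_one⟩
  have hq0 := hq 0 (by simp)
  calc |entrySlope K n q σ| ≤ |n (max σ 0)| + |K 0| + (|q (max (-σ) 0)| + |q 0|) :=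
        (abs_add_le _ _).trans (add_le_add (abs_add_le _ _) (abs_sub _ _))
    _ ≤ _ := by linarith

lemma abs_charP_one_le (hK : ContDiff ℝ 1 K) (hL : LipschitzWith L K) {τ : ℝ} (hτ : 0 ≤ τ) :
    |charP K n q τ 1| ≤ |entrySlope K n q (τ - 1)| * exp L := by
  have hlen : |τ - max (τ - 1) 0| ≤ 1 := by
    rw [abs_of_nonneg (sub_nonneg.2 (max_le (by linarith) hτ))]
    linarith [le_max_left (τ - 1) 0]
  rw [charP_eq hK hL, abs_mul, abs_exp]
  gcongr
  exact (le_abs_self _).trans ((abs_integral_le_mul_abs_sub (fun s ↦ abs_deriv_le hL _) _ _).trans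
    (mul_le_of_le_one_right L.2 hlen))

lemma HasRateBound.charP_one (hK : ContDiff ℝ 1 K) (hL : LipschitzWith L K)
    (hc : n 0 + K 0 = q 0) (hq : ∀ x ∈ Icc (0 : ℝ) 1, |q x| ≤ B)
    (hA : exp L * B + |K 0| + |κ| ≤ A) (hn : HasRateBound A L n T) :
    HasRateBound A L (fun τ ↦ charP K n q τ 1 - κ) T := by
  intro τ hτ
  have hB0 : 0 ≤ B := (abs_nonneg _).trans (hq 0 (by simp))
  have hA0 : 0 ≤ A := le_trans (by positivity) hA
  refine (abs_sub _ _).trans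
    ((add_le_add_left (abs_charP_one_le hK hL hτ.1) _).trans ?_)
  have hE : 1 ≤ exp (L : ℝ) := one_le_exp L.2
  rcases le_total (τ - 1) 0 with hσ | hσ
  · rw [entrySlope_of_nonpos hc hσ]
    have hqτ := hq (-(τ - 1)) ⟨by linarith, by linarith [hτ.1]⟩
    calc |q (-(τ - 1))| * exp L + |κ| ≤ A := by
          nlinarith [abs_nonneg (K 0), mul_le_mul_of_nonneg_right hqτ (exp_nonneg L)]
      _ ≤ A * exp ((L + 1) * τ) :=
          le_mul_of_one_le_right hA0 (one_le_exp (mul_nonneg (by positivity) hτ.1))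
  · rw [entrySlope_of_nonneg hσ]
    have hnτ := hn (τ - 1) ⟨hσ, by linarith [hτ.2]⟩
    have hX : 1 ≤ exp ((L + 1) * (τ - 1)) := one_le_exp (mul_nonneg (by positivity) hσ)
    have hsplit : exp ((L + 1) * τ) = exp ((L + 1) * (τ - 1)) * exp L * exp 1 := by
      rw [← exp_add, ← exp_add]; ring_nf
    have h2 : 2 ≤ exp 1 := by linarith [add_one_le_exp (1 : ℝ)]
    set X := exp ((L + 1) * (τ - 1))
    set E := exp (L : ℝ)
    rw [hsplit]
    calc |n (τ - 1) + K 0| * E + |κ| ≤ (A * X + |K 0|) * E + |κ| * E := by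
          gcongr
          · exact (abs_add_le _ _).trans (by gcongr)
          · exact le_mul_of_one_le_right (abs_nonneg _) hE
      _ = A * X * E + (|K 0| + |κ|) * E := by ring
      _ ≤ A * X * E + A * X * E := by
          gcongr
          exact le_trans (by nlinarith) (le_mul_of_one_le_right hA0 hX)
      _ = A * X * E * 2 := by ring
      _ ≤ A * (X * E * exp 1) := by rw [← mul_assoc, ← mul_assoc]; gcongr

/-- The functions on `[0, T]` that have the initial value and the growth required of a rate. -/
def rateCandidates (K q : ℝ → ℝ) (A : ℝ) (L : ℝ≥0) (hT : 0 ≤ T) : Set (Icc 0 T → ℝ) :=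
  {f | IccExtend hT f 0 + K 0 = q 0 ∧ HasRateBound A L (IccExtend hT f) T}

lemma isClosed_rateCandidates (hT : 0 ≤ T) : IsClosed (rateCandidates K q A L hT) := by
  have hcont (t : ℝ) : Continuous fun f : Icc 0 T → ℝ ↦ IccExtend hT f t :=
    continuous_apply (projIcc 0 T hT t)
  simp only [rateCandidates, HasRateBound, ofPred_and, ofPred_forall]
  exact (isClosed_eq ((hcont 0).add continuous_const) continuous_const).inter
    (isClosed_biInter fun t _ ↦ isClosed_le (hcont t).abs continuous_const)

/-- The map whose fixed points are the rates on `[0, T]`. -/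
def rateMap (hK : ContDiff ℝ 1 K) (hL : LipschitzWith L K) (hT : 0 ≤ T) (κ : ℝ) (q : C(ℝ, ℝ))
    (f : C(Icc 0 T, ℝ)) : C(Icc 0 T, ℝ) where
  toFun τ := charP K (f.IccExtend hT) q τ 1 - κ
  continuous_toFun := ((continuous_charP hK hL).comp (by fun_prop :
    Continuous fun τ : Icc 0 T ↦ ((τ : ℝ), (1 : ℝ)))).sub continuous_const

lemma charP_zero (hK : ContDiff ℝ 1 K) (hL : LipschitzWith L K) (hc : n 0 + K 0 = q 0) {η : ℝ}
    (hη : 0 ≤ η) : charP K n q 0 η = q η := by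
  have : -η ≤ 0 := neg_nonpos.2 hη
  simp [charP_eq hK hL, this, entrySlope_of_nonpos hc this]

lemma rateMap_mem_rateCandidates (hK : ContDiff ℝ 1 K) (hL : LipschitzWith L K) (hT : 0 ≤ T)
    (hc : q 1 - κ + K 0 = q 0) (hq : ∀ x ∈ Icc (0 : ℝ) 1, |q x| ≤ B)
    (hA : exp L * B + |K 0| + |κ| ≤ A) {f : C(Icc 0 T, ℝ)}
    (hf : ⇑f ∈ rateCandidates K q A L hT) :
    ⇑(rateMap hK hL hT κ q f) ∈ rateCandidates K q A L hT := by
  refine ⟨?_, fun t ht ↦ ?_⟩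
  · rw [IccExtend_of_mem hT _ ⟨le_rfl, hT⟩, ← hc]
    exact congrArg (· - κ + K 0) (charP_zero hK hL hf.1 zero_le_one)
  · rw [IccExtend_of_mem hT _ ht]
    exact HasRateBound.charP_one hK hL (n := f.IccExtend hT) hf.1 hq hA hf.2 t ht

lemma const_mem_rateCandidates (hT : 0 ≤ T) (hA : |q 0 - K 0| ≤ A) :
    (fun _ ↦ q 0 - K 0) ∈ rateCandidates K q A L hT := by
  refine ⟨sub_add_cancel _ _, fun t ht ↦ hA.trans ?_⟩
  exact le_mul_of_one_le_right ((abs_nonneg _).trans hA)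
    (one_le_exp (mul_nonneg (by positivity) ht.1))

lemma norm_rateMap_sub_rateMap_le (hK : ContDiff ℝ 1 K) (hL : LipschitzWith L K)
    (hL' : LipschitzWith L' (deriv K)) (hT : 0 ≤ T) {f g : C(Icc 0 T, ℝ)} {M : ℝ}
    (hf : IccExtend hT f 0 + K 0 = q 0) (hg : IccExtend hT g 0 + K 0 = q 0)
    (hM : ∀ σ ∈ Icc (-1) T, |entrySlope K (f.IccExtend hT) q σ| ≤ M) {S : ℝ}
    (hS : ∀ t : Icc 0 T, ‖f t - g t‖ ≤ S * exp (4 * stabConst L L' T M * t)) (τ : Icc 0 T) :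
    ‖rateMap hK hL hT κ q f τ - rateMap hK hL hT κ q g τ‖ ≤
      S / 2 * exp (4 * stabConst L L' T M * τ) := by
  have hext (t : ℝ) (ht : t ∈ Icc 0 T) : |f.IccExtend hT t - g.IccExtend hT t| ≤
      S * exp (4 * stabConst L L' T M * t) := by
    simpa [IccExtend_of_mem hT _ ht] using hS ⟨t, ht⟩
  simpa [rateMap] using abs_charP_one_sub_le_weighted hK hL hL' (q₁ := q) (q₂ := q) (δ := 0)
    hf hg (by simp) hM hext τ.2

theorem exists_isRate (hK : ContDiff ℝ 1 K) (hL : LipschitzWith L K)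
    (hL' : LipschitzWith L' (deriv K)) (hT : 0 ≤ T) (hc : q 1 - κ + K 0 = q 0) :
    ∃ n : C(ℝ, ℝ), IsRate K κ q n T := by
  obtain ⟨B, hq⟩ := isCompact_Icc.exists_bound_of_continuousOn (s := Icc (0 : ℝ) 1)
    q.continuous.continuousOn
  have hq0 : |q 0| ≤ B := hq 0 (by simp)
  have hB0 : 0 ≤ B := (abs_nonneg _).trans hq0
  set A := exp L * B + |K 0| + |κ| with hA
  have hA0 : 0 ≤ A := by positivity
  have hinit : |q 0 - K 0| ≤ A := by
    have : B ≤ exp L * B := le_mul_of_one_le_left hB0 (one_le_exp L.coe_nonneg)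
    linarith [abs_sub (q 0) (K 0), abs_nonneg κ]
  set M := A * exp ((L + 1) * T) + |K 0| + 2 * B
  have hC := stabConst_pos (L := L) (L' := L') hT (by positivity : 0 ≤ M)
  let f₀ : C(Icc 0 T, ℝ) := .const _ (q 0 - K 0)
  have hS₀ (t : Icc 0 T) : ‖rateMap hK hL hT κ q f₀ t - f₀ t‖ ≤
      ‖rateMap hK hL hT κ q f₀ - f₀‖ * exp (4 * stabConst L L' T M * t) :=
    ((rateMap hK hL hT κ q f₀ - f₀).norm_coe_le_norm t).trans <|
      le_mul_of_one_le_right (norm_nonneg _) (one_le_exp (mul_nonneg (by positivity) t.2.1))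
  obtain ⟨f, hfs, hf⟩ := exists_fixedPoint_of_weighted_contraction
    (by fun_prop) (fun _ ↦ exp_pos _) (isClosed_rateCandidates hT)
    (fun f hf ↦ rateMap_mem_rateCandidates hK hL hT hc hq hA.ge hf)
    (fun f g hf hg S hS ↦ norm_rateMap_sub_rateMap_le hK hL hL' hT hf.1 hg.1
      (fun σ hσ ↦ HasRateBound.abs_entrySlope_le hA0 hT hf.2 hq hσ) hS)
    (const_mem_rateCandidates hT hinit) hS₀
  exact ⟨f.IccExtend hT, hfs.1, fun τ hτ ↦
    (IccExtend_of_mem hT f hτ).trans (congrArg (· ⟨τ, hτ⟩) hf).symm⟩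

end Existence

section ClassicalSolutions

variable {K : ℝ → ℝ} {L : ℝ≥0} {ΦF : ℝ} {Qi : ℝ → ℝ} {Q : ℝ → ℝ → ℝ} {N : ℝ → ℝ} {n : C(ℝ, ℝ)}
  {T₁ : ℝ≥0∞} {T : ℝ}

lemma exists_lipschitzWith_of_abs_deriv_le {f : ℝ → ℝ} (hf : Differentiable ℝ f)
    (hbdd : ∃ C, ∀ x, |deriv f x| ≤ C) : ∃ L, LipschitzWith L f := by
  obtain ⟨C, hC⟩ := hbdd
  have hC0 : 0 ≤ C := (abs_nonneg _).trans (hC 0)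
  exact ⟨⟨C, hC0⟩, lipschitzWith_of_nnnorm_deriv_le hf hC⟩

lemma exists_lipschitzWith_of_kAssump (hK : KAssump K ΦF) : ∃ L, LipschitzWith L K :=
  exists_lipschitzWith_of_abs_deriv_le (hK.smooth.differentiable two_ne_zero) hK.bdd1

lemma exists_lipschitzWith_deriv_of_kAssump (hK : KAssump K ΦF) : ∃ L, LipschitzWith L (deriv K) :=
  exists_lipschitzWith_of_abs_deriv_le
    ((contDiff_succ_iff_deriv.1 (hK.smooth : ContDiff ℝ (1 + 1) K)).2.2.differentiable one_ne_zero)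
    hK.bdd2

/-- The slope `Q_init'` of an initial datum, extended from `[0, 1]` to `ℝ` by constants. -/
def initSlope (h : ContDiffOn ℝ 1 Qi (Icc 0 1)) : C(ℝ, ℝ) :=
  ContinuousMap.IccExtend zero_le_one
    ⟨(Icc 0 1).domRestrict (derivWithin Qi (Icc 0 1)), continuousOn_iff_continuous_domRestrict.1
      (h.continuousOn_derivWithin (uniqueDiffOn_Icc zero_lt_one) le_rfl)⟩

lemma initSlope_of_mem (h : ContDiffOn ℝ 1 Qi (Icc 0 1)) {x : ℝ} (hx : x ∈ Icc (0 : ℝ) 1) :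
    initSlope h x = derivWithin Qi (Icc 0 1) x :=
  IccExtend_of_mem zero_le_one ((Icc 0 1).domRestrict (derivWithin Qi (Icc 0 1))) hx

lemma integral_initSlope (h : ContDiffOn ℝ 1 Qi (Icc 0 1)) {x : ℝ} (hx : x ∈ Icc (0 : ℝ) 1) :
    ∫ s in (0 : ℝ)..x, initSlope h s = Qi x - Qi 0 := by
  refine intervalIntegral.integral_eq_sub_of_hasDerivAt_of_le hx.1
    (h.continuousOn.mono (Icc_subset_Icc_right hx.2)) (fun s hs ↦ ?_)
    ((initSlope h).continuous.intervalIntegrable _ _)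
  have hs' : s ∈ Ioo (0 : ℝ) 1 := ⟨hs.1, hs.2.trans_le hx.2⟩
  rw [initSlope_of_mem h (Ioo_subset_Icc_self hs')]
  exact (h.differentiableOn one_ne_zero s (Ioo_subset_Icc_self hs')).hasDerivWithinAt.hasDerivAt
    (Icc_mem_nhds hs'.1 hs'.2)

lemma pdEta_eq_of_hasDerivAt {τ η d : ℝ} (hη : η ∈ Icc (0 : ℝ) 1) (hd : HasDerivAt (Q τ) d η) :
    pdEta Q τ η = d :=
  hd.hasDerivWithinAt.derivWithin (uniqueDiffOn_Icc zero_lt_one η hη)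

lemma pdTau_eq_of_hasDerivAt {τ η d : ℝ} (hτ : 0 ≤ τ) (hd : HasDerivAt (fun s ↦ Q s η) d τ) :
    pdTau Q τ η = d :=
  hd.hasDerivWithinAt.derivWithin (uniqueDiffOn_Ici 0 τ hτ)

lemma Icc_subset_Ico0 (hT : ENNReal.ofReal T < T₁) : Icc 0 T ⊆ Ico0 T₁ :=
  fun _ ht ↦ ⟨ht.1, (ENNReal.ofReal_le_ofReal ht.2).trans_lt hT⟩

lemma Ico0_ofReal_subset_Icc : Ico0 (ENNReal.ofReal T) ⊆ Icc 0 T :=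
  fun _ ht ↦ ⟨ht.1, ((ENNReal.ofReal_lt_ofReal_iff_of_nonneg ht.1).1 ht.2).le⟩

lemma hasDerivAt_characteristic (hs : IsQSol K ΦF T₁ Qi Q N) (hT : ENNReal.ofReal T < T₁) {σ t : ℝ}
    (ht : t ∈ Ioo 0 T) (hη : t - σ ∈ Ioo (0 : ℝ) 1) :
    HasDerivAt (fun s ↦ Q s (s - σ)) (1 / N t + K (Q t (t - σ))) t := by
  have htT : t ∈ Ico0 T₁ := Icc_subset_Ico0 hT (Ioo_subset_Icc_self ht)
  have hnhds : Ico0 T₁ ×ˢ Icc (0 : ℝ) 1 ∈ 𝓝 (t, t - σ) :=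
    prod_mem_nhds (mem_of_superset (Icc_mem_nhds ht.1 ht.2) (Icc_subset_Ico0 hT))
      (Icc_mem_nhds hη.1 hη.2)
  have hF := ((hs.reg.contDiffAt hnhds).differentiableAt one_ne_zero).hasFDerivAt
  have hline {x y : ℝ → ℝ} {x' y' r : ℝ} (hx : HasDerivAt x x' r) (hy : HasDerivAt y y' r)
      (hr : (x r, y r) = (t, t - σ)) : HasDerivAt (fun r ↦ Q (x r) (y r))
        (fderiv ℝ (Function.uncurry Q) (t, t - σ) (x', y')) r :=
    HasFDerivAt.comp_hasDerivAt (l := Function.uncurry Q) (f := fun r ↦ (x r, y r)) r (hr ▸ hF)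
      (hx.prodMk hy)
  have hτ := hline (hasDerivAt_id' t) (hasDerivAt_const t (t - σ)) rfl
  have hη' := hline (hasDerivAt_const (t - σ) t) (hasDerivAt_id' (t - σ)) rfl
  rw [← hs.pde t htT _ hη, pdTau_eq_of_hasDerivAt ht.1.le hτ,
    pdEta_eq_of_hasDerivAt (Ioo_subset_Icc_self hη) hη', ← map_add]
  simpa using hline (hasDerivAt_id' t) ((hasDerivAt_id' t).sub_const σ) rfl

lemma eq_charPath_of_isQSol (hK : ContDiff ℝ 1 K) (hL : LipschitzWith L K) {q : C(ℝ, ℝ)}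
    (hs : IsQSol K ΦF T₁ Qi Q N) (hT : ENNReal.ofReal T < T₁)
    (hn : ∀ t ∈ Icc 0 T, n t = 1 / N t) {σ a b : ℝ} (ha : 0 ≤ a) (hσa : σ ≤ a) (hab : a ≤ b)
    (hbT : b ≤ T) (hbσ : b - σ ≤ 1) (hinit : Q a (a - σ) = charPath K n q σ a) :
    Q b (b - σ) = charPath K n q σ b := by
  have hcont : ContinuousOn (fun s ↦ Q s (s - σ)) (Icc a b) :=
    hs.reg.continuousOn.comp (f := fun s ↦ (s, s - σ)) (by fun_prop) fun s hs ↦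
      ⟨Icc_subset_Ico0 hT ⟨ha.trans hs.1, hs.2.trans hbT⟩, by linarith [hs.1], by linarith [hs.2]⟩
  have htraj : IsTrajectoryOn K n (IccExtend hab ((Icc a b).domRestrict fun s ↦ Q s (s - σ)))
      (Ioo (min a b) (max a b)) := by
    refine ⟨continuousOn_iff_continuous_domRestrict.1 hcont |>.Icc_extend', fun t ht ↦ ?_⟩
    rw [min_eq_left hab, max_eq_right hab] at ht
    have ht0 : t ∈ Ioo 0 T := ⟨ha.trans_lt ht.1, ht.2.trans_le hbT⟩
    rw [IccExtend_of_mem hab _ (Ioo_subset_Icc_self ht), hn t (Ioo_subset_Icc_self ht0)]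
    refine (hasDerivAt_characteristic hs hT ht0
      ⟨by linarith [ht.1], by linarith [ht.2]⟩).congr_of_eventuallyEq ?_
    filter_upwards [Icc_mem_nhds ht.1 ht.2] with s hs
    exact IccExtend_of_mem hab _ hs
  have := htraj.eq_of_eq hK (isTrajectoryOn_flow hL 0 (foot K n q σ) _)
  simp only [IccExtend_of_mem hab _ (left_mem_Icc.2 hab),
    IccExtend_of_mem hab _ (right_mem_Icc.2 hab)] at this
  exact this hinit

lemma eqOn_charQ_of_isQSol (hK : ContDiff ℝ 1 K) (hL : LipschitzWith L K)
    (hs : IsQSol K ΦF T₁ Qi Q N) (hT : ENNReal.ofReal T < T₁)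
    (hn : ∀ t ∈ Icc 0 T, n t = 1 / N t) (hc : n 0 + K 0 = initSlope hs.initReg 0) {τ : ℝ}
    (hτ : τ ∈ Icc 0 T) : EqOn (Q τ) (charQ K n (initSlope hs.initReg) τ) (Icc 0 1) := by
  intro η hη
  suffices Q τ (τ - (τ - η)) = charPath K n (initSlope hs.initReg) (τ - η) τ by
    simpa only [charQ, sub_sub_cancel] using this
  rcases le_total τ η with hle | hle
  · have hx : η - τ ∈ Icc (0 : ℝ) 1 := ⟨sub_nonneg.2 hle, by linarith [hη.2, hτ.1]⟩
    refine eq_charPath_of_isQSol hK hL hs hT hn le_rfl (sub_nonpos.2 hle) hτ.1 hτ.2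
      (by linarith [hη.2]) ?_
    rw [charPath_zero hL hc (sub_nonpos.2 hle), zero_sub, neg_sub, integral_initSlope hs.initReg hx,
      hs.init0, sub_zero, hs.init _ hx]
  · have hσ : τ - η ∈ Icc (0 : ℝ) T := ⟨sub_nonneg.2 hle, by linarith [hη.1, hτ.2]⟩
    refine eq_charPath_of_isQSol hK hL hs hT hn hσ.1 le_rfl (by linarith [hη.1]) hτ.2
      (by linarith [hη.2]) ?_
    rw [sub_self, hs.bc _ (Icc_subset_Ico0 hT hσ), charPath_self hK hL hσ.1]

/-- On `[0, T]` the pair `(Q, N)` is given by the method of characteristics from the firing rate `n`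
and the initial slope `q`. -/
structure IsRepresentedBy (K : ℝ → ℝ) (ΦF : ℝ) (q n : ℝ → ℝ) (Q : ℝ → ℝ → ℝ) (N : ℝ → ℝ)
    (T : ℝ) : Prop extends IsRate K (K ΦF) q n T where
  one_div_eq : ∀ τ ∈ Icc 0 T, 1 / N τ = n τ
  eqOn_charQ : ∀ τ ∈ Icc 0 T, EqOn (Q τ) (charQ K n q τ) (Icc 0 1)
  eqOn_charP : ∀ τ ∈ Icc 0 T, EqOn (pdEta Q τ) (charP K n q τ) (Icc 0 1)

lemma exists_isRepresentedBy (hK : ContDiff ℝ 1 K) (hL : LipschitzWith L K) (hA : A2 K ΦF Qi)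
    (hs : IsQSol K ΦF T₁ Qi Q N) (hT₀ : 0 ≤ T) (hT : ENNReal.ofReal T < T₁) :
    ∃ n : C(ℝ, ℝ), IsRepresentedBy K ΦF (initSlope hA.reg) n Q N T := by
  have hsub : Icc 0 T ⊆ Ico0 T₁ := Icc_subset_Ico0 hT
  have hcont : ContinuousOn (fun t ↦ 1 / N t) (Icc 0 T) :=
    continuousOn_const.div (hs.Ncont.mono hsub) fun t ht ↦ (hs.Npos t (hsub ht)).ne'
  obtain ⟨n, hn⟩ : ∃ n : C(ℝ, ℝ), ∀ t ∈ Icc 0 T, n t = 1 / N t :=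
    ⟨⟨_, (continuousOn_iff_continuous_domRestrict.1 hcont).Icc_extend' (h := hT₀)⟩,
      fun t ht ↦ IccExtend_of_mem hT₀ ((Icc 0 T).domRestrict fun t ↦ 1 / N t) ht⟩
  have hslope : pdEta Q 0 1 = derivWithin Qi (Icc 0 1) 1 :=
    derivWithin_congr hs.init (hs.init 1 (right_mem_Icc.2 zero_le_one))
  have hc : n 0 + K 0 = initSlope hA.reg 0 := by
    rw [hn 0 (left_mem_Icc.2 hT₀), hs.Ndef 0 (hsub (left_mem_Icc.2 hT₀)), hslope,
      initSlope_of_mem hA.reg (left_mem_Icc.2 zero_le_one)]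
    linarith [hA.compat]
  have hQ (τ : ℝ) (hτ : τ ∈ Icc 0 T) := eqOn_charQ_of_isQSol hK hL hs hT hn hc hτ
  have hP (τ : ℝ) (hτ : τ ∈ Icc 0 T) :
      EqOn (pdEta Q τ) (charP K n (initSlope hA.reg) τ) (Icc 0 1) := fun η hη ↦ by
    rw [← pdEta_eq_of_hasDerivAt hη (hasDerivAt_charQ_right hK hL τ η)]
    exact derivWithin_congr (hQ τ hτ) (hQ τ hτ hη)
  refine ⟨n, ⟨hc, fun τ hτ ↦ ?_⟩, fun τ hτ ↦ (hn τ hτ).symm, hQ, hP⟩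
  rw [hn τ hτ, hs.Ndef τ (hsub hτ), hP τ hτ (right_mem_Icc.2 zero_le_one)]

lemma charP_nonneg (hK : ContDiff ℝ 1 K) (hL : LipschitzWith L K) {q : C(ℝ, ℝ)}
    (hc : n 0 + K 0 = q 0) (hK₀ : 0 ≤ K 0) (hq : ∀ x ∈ Icc (0 : ℝ) 1, 0 ≤ q x)
    (hn : ∀ t ∈ Icc 0 T, 0 ≤ n t) {τ η : ℝ} (hτ : τ ∈ Icc 0 T) (hη : η ∈ Icc (0 : ℝ) 1) :
    0 ≤ charP K n q τ η := by
  rw [charP_eq hK hL]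
  refine mul_nonneg ?_ (exp_pos _).le
  rcases le_total τ η with hle | hle
  · rw [entrySlope_of_nonpos hc (sub_nonpos.2 hle), neg_sub]
    exact hq _ ⟨sub_nonneg.2 hle, by linarith [hη.2, hτ.1]⟩
  · rw [entrySlope_of_nonneg (sub_nonneg.2 hle)]
    exact add_nonneg (hn _ ⟨sub_nonneg.2 hle, by linarith [hη.1, hτ.2]⟩) hK₀

lemma isQSol_charQ (hK : ContDiff ℝ 1 K) (hL : LipschitzWith L K) (hK₀ : 0 ≤ K 0)
    (hA : A2 K ΦF Qi) (hr : IsRate K (K ΦF) (initSlope hA.reg) n T)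
    (hpos : ∀ t ∈ Icc 0 T, 0 < n t) :
    IsQSol K ΦF (ENNReal.ofReal T) Qi (charQ K n (initSlope hA.reg)) (fun t ↦ 1 / n t) := by
  have hsub {t : ℝ} (ht : t ∈ Ico0 (ENNReal.ofReal T)) : t ∈ Icc 0 T := Ico0_ofReal_subset_Icc ht
  have hdη := hasDerivAt_charQ_right hK hL (n := n) (q := initSlope hA.reg)
  have hq (x : ℝ) (hx : x ∈ Icc (0 : ℝ) 1) : 0 ≤ initSlope hA.reg x := by
    rw [initSlope_of_mem hA.reg hx]
    exact hA.mono.derivWithin_nonneg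
  have hN (τ : ℝ) (hτ : τ ∈ Ico0 (ENNReal.ofReal T)) :
      n τ = pdEta (charQ K n (initSlope hA.reg)) τ 1 - K ΦF := by
    rw [pdEta_eq_of_hasDerivAt (right_mem_Icc.2 zero_le_one) (hdη τ 1), hr.eq τ (hsub hτ)]
  exact {
    initReg := hA.reg
    initMono := hA.mono
    init0 := hA.init0
    init1 := hA.init1
    initDeriv := hA.deriv1
    reg := (contDiff_charQ hK hL).contDiffOn
    mono τ hτ := monotoneOn_of_hasDerivWithinAt_nonneg (convex_Icc 0 1)
      (fun η _ ↦ (hdη τ η).continuousAt.continuousWithinAt) (fun η _ ↦ (hdη τ η).hasDerivWithinAt)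
      fun η hη ↦ charP_nonneg hK hL hr.compat hK₀ hq (fun t ht ↦ (hpos t ht).le) (hsub hτ)
        (interior_subset hη)
    Ncont := continuousOn_const.div n.continuous.continuousOn fun t ht ↦ (hpos t (hsub ht)).ne'
    Npos t ht := one_div_pos.2 (hpos t (hsub ht))
    pde τ hτ η hη := by
      rw [pdEta_eq_of_hasDerivAt (Ioo_subset_Icc_self hη) (hdη τ η),
        pdTau_eq_of_hasDerivAt hτ.1 (hasDerivAt_charQ_left hK hL τ η), one_div_one_div,
        sub_add_cancel]
    bc τ hτ := by rw [charQ, sub_zero, charPath_self hK hL hτ.1]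
    Ndef τ hτ := by rw [one_div_one_div, hN τ hτ]
    init η hη := by
      rw [charQ, zero_sub, charPath_zero hL hr.compat (neg_nonpos.2 hη.1), neg_neg,
        integral_initSlope hA.reg hη, hA.init0, sub_zero]
    constraint τ hτ := by linarith [hN τ hτ, hpos τ (hsub hτ)] }

end ClassicalSolutions

section ContinuousDependence

variable {K : ℝ → ℝ} {ΦF : ℝ} {Qi₀ : ℝ → ℝ} {Q₀ : ℝ → ℝ → ℝ} {N₀ : ℝ → ℝ} {T₀ : ℝ≥0∞} {T : ℝ}
  {L L' : ℝ≥0} (hK : ContDiff ℝ 1 K) (hL : LipschitzWith L K) (hL' : LipschitzWith L' (deriv K))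

include hK hL hL' in
lemma exists_lipschitz_bound_of_isQSol (hA₀ : A2 K ΦF Qi₀)
    (hs₀ : IsQSol K ΦF T₀ Qi₀ Q₀ N₀) (hT : 0 ≤ T) (hTT₀ : ENNReal.ofReal T < T₀) :
    ∃ C, ∀ (Qi : ℝ → ℝ) (Q : ℝ → ℝ → ℝ) (N : ℝ → ℝ) (T₁ : ℝ≥0∞) (δ : ℝ), A2 K ΦF Qi →
      IsQSol K ΦF T₁ Qi Q N → ENNReal.ofReal T < T₁ →
      (∀ x ∈ Icc 0 1, |derivWithin Qi₀ (Icc 0 1) x - derivWithin Qi (Icc 0 1) x| ≤ δ) →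
      ∀ τ ∈ Icc 0 T, |1 / N₀ τ - 1 / N τ| ≤ C * δ ∧ ∀ η ∈ Icc 0 1,
        |Q₀ τ η - Q τ η| ≤ C * δ ∧ |pdEta Q₀ τ η - pdEta Q τ η| ≤ C * δ := by
  obtain ⟨n₀, h₀⟩ := exists_isRepresentedBy hK hL hA₀ hs₀ hT hTT₀
  obtain ⟨C, hC⟩ := h₀.toIsRate.exists_lipschitz_bound hK hL hL' hT
  refine ⟨C, fun Qi Q N T₁ δ hA hs hTT₁ hδ τ hτ ↦ ?_⟩
  obtain ⟨n, h⟩ := exists_isRepresentedBy hK hL hA hs hT hTT₁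
  have hδ' (x : ℝ) (hx : x ∈ Icc (0 : ℝ) 1) : |initSlope hA₀.reg x - initSlope hA.reg x| ≤ δ := by
    simpa only [initSlope_of_mem _ hx] using hδ x hx
  obtain ⟨hn, hQ⟩ := hC n (initSlope hA.reg) δ h.toIsRate hδ' τ hτ
  refine ⟨by rwa [h₀.one_div_eq τ hτ, h.one_div_eq τ hτ], fun η hη ↦ ?_⟩
  rw [h₀.eqOn_charQ τ hτ hη, h.eqOn_charQ τ hτ hη, h₀.eqOn_charP τ hτ hη, h.eqOn_charP τ hτ hη]
  exact hQ η hη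

include hK hL hL' in
lemma exists_pos_forall_exists_isQSol (hK₀ : 0 ≤ K 0) (hA₀ : A2 K ΦF Qi₀)
    (hs₀ : IsQSol K ΦF T₀ Qi₀ Q₀ N₀) (hT : 0 ≤ T) (hTT₀ : ENNReal.ofReal T < T₀) :
    ∃ δ > 0, ∀ Qi, A2 K ΦF Qi →
      (∀ x ∈ Icc 0 1, |derivWithin Qi₀ (Icc 0 1) x - derivWithin Qi (Icc 0 1) x| ≤ δ) →
      ∃ Q N, IsQSol K ΦF (ENNReal.ofReal T) Qi Q N := by
  obtain ⟨n₀, h₀⟩ := exists_isRepresentedBy hK hL hA₀ hs₀ hT hTT₀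
  obtain ⟨C, hC⟩ := h₀.toIsRate.exists_lipschitz_bound hK hL hL' hT
  obtain ⟨c, hc, hcn₀⟩ : ∃ c > 0, ∀ t ∈ Icc 0 T, c ≤ n₀ t :=
    isCompact_Icc.exists_forall_le' n₀.continuous.continuousOn fun t ht ↦ by
      rw [← h₀.one_div_eq t ht]
      exact one_div_pos.2 (hs₀.Npos t (Icc_subset_Ico0 hTT₀ ht))
  obtain ⟨δ, hδ, hCδ⟩ := exists_pos_mul_lt hc C
  refine ⟨δ, hδ, fun Qi hA hclose ↦ ?_⟩
  have hcompat : initSlope hA.reg 1 - K ΦF + K 0 = initSlope hA.reg 0 := by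
    rw [initSlope_of_mem _ (left_mem_Icc.2 zero_le_one),
      initSlope_of_mem _ (right_mem_Icc.2 zero_le_one)]
    linarith [hA.compat]
  obtain ⟨n, hr⟩ := exists_isRate hK hL hL' hT hcompat
  refine ⟨_, _, isQSol_charQ hK hL hK₀ hA hr fun t ht ↦ ?_⟩
  have hn := (hC n (initSlope hA.reg) δ hr (fun x hx ↦ by
    simpa only [initSlope_of_mem _ hx] using hclose x hx) t ht).1
  linarith [hcn₀ t ht, (abs_le.1 hn).2]

variable {ι : Type*} {l : Filter ι}

lemma tendstoUniformlyOn_of_abs_sub_le_mul {α : Type*} {F : ι → α → ℝ} {f : α → ℝ} {s : Set α}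
    {C : ℝ} (h : ∀ δ > 0, ∀ᶠ i in l, ∀ x ∈ s, |f x - F i x| ≤ C * δ) :
    TendstoUniformlyOn F f l s := by
  refine Metric.tendstoUniformlyOn_iff.2 fun ε hε ↦ ?_
  obtain ⟨δ, hδ, hCδ⟩ := exists_pos_mul_lt hε C
  exact (h δ hδ).mono fun i hi x hx ↦ (hi x hx).trans_lt hCδ

lemma tendstoUniformlyOn_of_one_div {α : Type*} [TopologicalSpace α] {F : ι → α → ℝ} {f : α → ℝ}
    {s : Set α} (hs : IsCompact s) (hf : ContinuousOn f s) (hf₀ : ∀ x ∈ s, f x ≠ 0)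
    (h : TendstoUniformlyOn (fun i x ↦ 1 / F i x) (fun x ↦ 1 / f x) l s) :
    TendstoUniformlyOn F f l s := by
  have hinv := h.tendstoLocallyUniformlyOn.inv₀ (continuousOn_const.div hf hf₀)
    fun x hx ↦ one_div_ne_zero (hf₀ x hx)
  refine (tendstoLocallyUniformlyOn_iff_tendstoUniformlyOn_of_compact hs).1 ?_
  simpa [Pi.inv_def] using hinv

lemma le_liminf_of_forall_ofReal_lt {a : ℝ≥0∞} {f : ι → ℝ≥0∞}
    (h : ∀ T : ℝ, 0 ≤ T → ENNReal.ofReal T < a → ∀ᶠ i in l, ENNReal.ofReal T ≤ f i) :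
    a ≤ liminf f l := by
  refine le_of_forall_lt_imp_le_of_dense fun c hc ↦ le_liminf_of_le (by isBoundedDefault) ?_
  simpa only [ENNReal.ofReal_toReal hc.ne_top] using
    h c.toReal ENNReal.toReal_nonneg (by rwa [ENNReal.ofReal_toReal hc.ne_top])

variable {Qi : ι → ℝ → ℝ}

lemma eventually_abs_derivWithin_sub_le
    (hconv : TendstoUniformlyOn (fun i ↦ derivWithin (Qi i) (Icc 0 1))
      (derivWithin Qi₀ (Icc 0 1)) l (Icc 0 1)) {δ : ℝ} (hδ : 0 < δ) :
    ∀ᶠ i in l, ∀ x ∈ Icc 0 1,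
      |derivWithin Qi₀ (Icc 0 1) x - derivWithin (Qi i) (Icc 0 1) x| ≤ δ :=
  (Metric.tendstoUniformlyOn_iff.1 hconv δ hδ).mono fun _ h x hx ↦ (h x hx).le

include hK hL hL' in
lemma eventually_exists_isQSol (hK₀ : 0 ≤ K 0) (hA₀ : A2 K ΦF Qi₀)
    (hs₀ : IsQSol K ΦF T₀ Qi₀ Q₀ N₀) (hT : 0 ≤ T) (hTT₀ : ENNReal.ofReal T < T₀)
    (hA : ∀ᶠ i in l, A2 K ΦF (Qi i))
    (hconv : TendstoUniformlyOn (fun i ↦ derivWithin (Qi i) (Icc 0 1))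
      (derivWithin Qi₀ (Icc 0 1)) l (Icc 0 1)) :
    ∀ᶠ i in l, ∃ Q N, IsQSol K ΦF (ENNReal.ofReal T) (Qi i) Q N := by
  obtain ⟨δ, hδ, h⟩ := exists_pos_forall_exists_isQSol hK hL hL' hK₀ hA₀ hs₀ hT hTT₀
  filter_upwards [hA, eventually_abs_derivWithin_sub_le hconv hδ] with i hAi hi
  exact h (Qi i) hAi hi

include hK hL hL' in
lemma tendstoUniformlyOn_of_isQSol {Q : ι → ℝ → ℝ → ℝ} {N : ι → ℝ → ℝ} {τmax : ι → ℝ≥0∞}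
    (hA₀ : A2 K ΦF Qi₀) (hs₀ : IsQSol K ΦF T₀ Qi₀ Q₀ N₀) (hT : 0 ≤ T)
    (hTT₀ : ENNReal.ofReal T < T₀) (hA : ∀ᶠ i in l, A2 K ΦF (Qi i))
    (hs : ∀ᶠ i in l, IsQSol K ΦF (τmax i) (Qi i) (Q i) (N i))
    (hτ : ∀ᶠ i in l, ENNReal.ofReal T < τmax i)
    (hconv : TendstoUniformlyOn (fun i ↦ derivWithin (Qi i) (Icc 0 1))
      (derivWithin Qi₀ (Icc 0 1)) l (Icc 0 1)) :
    TendstoUniformlyOn N N₀ l (Icc 0 T) ∧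
      TendstoUniformlyOn (fun i ↦ Q i T) (Q₀ T) l (Icc 0 1) ∧
      TendstoUniformlyOn (fun i ↦ pdEta (Q i) T) (pdEta Q₀ T) l (Icc 0 1) := by
  obtain ⟨C, hC⟩ := exists_lipschitz_bound_of_isQSol hK hL hL' hA₀ hs₀ hT hTT₀
  have hbound (δ : ℝ) (hδ : 0 < δ) : ∀ᶠ i in l, ∀ τ ∈ Icc 0 T, |1 / N₀ τ - 1 / N i τ| ≤ C * δ ∧
      ∀ η ∈ Icc 0 1, |Q₀ τ η - Q i τ η| ≤ C * δ ∧ |pdEta Q₀ τ η - pdEta (Q i) τ η| ≤ C * δ := by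
    filter_upwards [hA, hs, hτ, eventually_abs_derivWithin_sub_le hconv hδ] with i hAi hsi hτi hδi
    exact hC _ _ _ _ δ hAi hsi hτi hδi
  have hTT : T ∈ Icc 0 T := right_mem_Icc.2 hT
  have hsub : Icc 0 T ⊆ Ico0 T₀ := Icc_subset_Ico0 hTT₀
  refine ⟨?_, ?_, ?_⟩
  · refine tendstoUniformlyOn_of_one_div isCompact_Icc (hs₀.Ncont.mono hsub)
      (fun t ht ↦ (hs₀.Npos t (hsub ht)).ne') ?_
    exact tendstoUniformlyOn_of_abs_sub_le_mul fun δ hδ ↦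
      (hbound δ hδ).mono fun i hi τ hτ ↦ (hi τ hτ).1
  · exact tendstoUniformlyOn_of_abs_sub_le_mul fun δ hδ ↦
      (hbound δ hδ).mono fun i hi η hη ↦ ((hi T hTT).2 η hη).1
  · exact tendstoUniformlyOn_of_abs_sub_le_mul fun δ hδ ↦
      (hbound δ hδ).mono fun i hi η hη ↦ ((hi T hTT).2 η hη).2

end ContinuousDependence

end QSystem

open QSystem

theorem stmt3_general {ι : Type*} {l : Filter ι} {K : ℝ → ℝ} {L L' : ℝ≥0} (hK : ContDiff ℝ 1 K)
    (hL : LipschitzWith L K) (hL' : LipschitzWith L' (deriv K)) (hK₀ : 0 ≤ K 0) {ΦF : ℝ}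
    {Qi₀ : ℝ → ℝ} {Q₀ : ℝ → ℝ → ℝ} {N₀ : ℝ → ℝ} {T₀ : ℝ≥0∞} (hA₀ : A2 K ΦF Qi₀)
    (hs₀ : IsQSol K ΦF T₀ Qi₀ Q₀ N₀) {Qi : ι → ℝ → ℝ} {Q : ι → ℝ → ℝ → ℝ} {N : ι → ℝ → ℝ}
    {τmax : ι → ℝ≥0∞} (hA : ∀ᶠ i in l, A2 K ΦF (Qi i))
    (hs : ∀ᶠ i in l, IsQSol K ΦF (τmax i) (Qi i) (Q i) (N i))
    (hmax : ∀ᶠ i in l, ∀ T Q N, IsQSol K ΦF T (Qi i) Q N → T ≤ τmax i)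
    (hconv : TendstoUniformlyOn (fun i ↦ derivWithin (Qi i) (Icc 0 1))
      (derivWithin Qi₀ (Icc 0 1)) l (Icc 0 1)) :
    T₀ ≤ liminf τmax l ∧ ∀ T : ℝ, 0 ≤ T → ENNReal.ofReal T < T₀ →
      TendstoUniformlyOn N N₀ l (Icc 0 T) ∧
      TendstoUniformlyOn (fun i ↦ Q i T) (Q₀ T) l (Icc 0 1) ∧
      TendstoUniformlyOn (fun i ↦ pdEta (Q i) T) (pdEta Q₀ T) l (Icc 0 1) := by
  have hlife : T₀ ≤ liminf τmax l := le_liminf_of_forall_ofReal_lt fun T hT hTT₀ ↦ by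
    filter_upwards [hmax, eventually_exists_isQSol hK hL hL' hK₀ hA₀ hs₀ hT hTT₀ hA hconv]
      with i hi ⟨Q, N, hQN⟩
    exact hi _ Q N hQN
  exact ⟨hlife, fun T hT hTT₀ ↦ tendstoUniformlyOn_of_isQSol hK hL hL' hA₀ hs₀ hT hTT₀ hA hs
    (eventually_lt_of_lt_liminf (hTT₀.trans_le hlife)) hconv⟩

/-- Theorem 3.2: continuous dependence of the solution on the initial data, up to the first
blow-up time. -/
theorem stmt3 (ΦF : ℝ) (hΦF : 0 < ΦF) (K : ℝ → ℝ) (hK : KAssump K ΦF)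
    (Qinit : ℝ → ℝ → ℝ) (hA2 : ∀ ε : ℝ, 0 ≤ ε → A2 K ΦF (Qinit ε))
    (hconv : TendstoUniformlyOn (fun ε => Qinit ε) (Qinit 0) (𝓝[>] (0 : ℝ)) (Icc 0 1))
    (hconv' : TendstoUniformlyOn (fun ε η => derivWithin (Qinit ε) (Icc 0 1) η)
      (fun η => derivWithin (Qinit 0) (Icc 0 1) η) (𝓝[>] (0 : ℝ)) (Icc 0 1))
    (τfam : ℝ → ℝ≥0∞) (Qfam : ℝ → ℝ → ℝ → ℝ) (Nfam : ℝ → ℝ → ℝ)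
    (hsol : ∀ ε : ℝ, 0 ≤ ε → IsQSol K ΦF (τfam ε) (Qinit ε) (Qfam ε) (Nfam ε))
    (hmax : ∀ ε : ℝ, 0 ≤ ε → ∀ (T : ℝ≥0∞) (Q' : ℝ → ℝ → ℝ) (N' : ℝ → ℝ),
      IsQSol K ΦF T (Qinit ε) Q' N' → T ≤ τfam ε) :
    τfam 0 ≤ liminf τfam (𝓝[>] (0 : ℝ)) ∧
    ∀ T : ℝ, 0 < T → ENNReal.ofReal T < τfam 0 →
      TendstoUniformlyOn (fun ε => Nfam ε) (Nfam 0) (𝓝[>] (0 : ℝ)) (Icc 0 T) ∧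
      TendstoUniformlyOn (fun ε η => Qfam ε T η) (fun η => Qfam 0 T η)
        (𝓝[>] (0 : ℝ)) (Icc 0 1) ∧
      TendstoUniformlyOn (fun ε η => pdEta (Qfam ε) T η) (fun η => pdEta (Qfam 0) T η)
        (𝓝[>] (0 : ℝ)) (Icc 0 1) := by
  obtain ⟨L, hL⟩ := exists_lipschitzWith_of_kAssump hK
  obtain ⟨L', hL'⟩ := exists_lipschitzWith_deriv_of_kAssump hK
  have hnonneg : ∀ᶠ ε in 𝓝[>] (0 : ℝ), 0 ≤ ε :=
    eventually_mem_nhdsWithin.mono fun _ hε ↦ le_of_lt hε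
  have h := stmt3_general (hK.smooth.of_le one_le_two) hL hL' (hK.pos 0 ⟨le_rfl, hΦF.le⟩).le
    (hA2 0 le_rfl) (hsol 0 le_rfl) (hnonneg.mono hA2) (hnonneg.mono hsol) (hnonneg.mono hmax) hconv'
  exact ⟨h.1, fun T hT ↦ h.2 T hT.le⟩
end
end
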